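/- arXiv:0810.3374 — 2 statements merged into one kernel-verified Lean document; each statement's English description precedes it below -/
import Mathlib

section
/- Let m ≥ 1 be an integer, let Λ be a positive integer, and let θ₂ be the unique root of f_m in (−1/2, 0). Suppose (x,y) ∈ ℤ² with gcd(x,y) = 1 satisfies |F_m(x,y)| ≤ Λ, −y/2 < x ≤ y, and 8Λ/(2m+3) ≤ y. Then: (i) x/y is a convergent of the continued fraction expansion of θ₂, and either y = 1 or both |x/y − θ₂| < Λ/(y³(m+1)) and y ≥ m+2 hold; (ii) setting κ = (log(√(m²+3m+9)) + 0.83)/(log(m + 3/2) − 1.3), if m ≥ 30 then y^{2−κ} < 17.78 · 2.59^κ · Λ. -/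
/-- The cubic form `F_m(X,Y) = X³ − mX²Y − (m+3)XY² − Y³`. -/
def F (m x y : ℤ) : ℤ := x ^ 3 - m * x ^ 2 * y - (m + 3) * x * y ^ 2 - y ^ 3

theorem theta_bounds (m θ : ℝ) (hm : 1 ≤ m)
    (hroot : θ ^ 3 - m * θ ^ 2 - (m + 3) * θ - 1 = 0)
    (hθl : -(1 / 2) < θ) (hθr : θ < 0) :
    -1 < θ * (m + 2) ∧ θ * (m + 3) < -1 := by
  constructor
  · by_contra! h
    have h2 : 0 < m + 2 := by linarith
    obtain ⟨u, rfl⟩ : ∃ u, θ = -u := ⟨-θ, by ring⟩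
    have hu : 0 < u := by linarith
    have e1 : 0 ≤ (u * (m + 2) - 1) * (1 / 2 - u) := mul_nonneg (by linarith) (by linarith)
    have e2 : 0 ≤ u * ((u * (m + 2) - 1) * (1 / 2 - u)) := mul_nonneg hu.le e1
    -- (m+2)^2 * g(u) < 0
    have key : (m + 2) ^ 2 * (u ^ 3 + m * u ^ 2 - (m + 3) * u + 1) < 0 := by
      nlinarith [mul_nonneg h2.le e2, mul_nonneg h2.le e1, mul_nonneg (mul_nonneg h2.le h2.le) e1, mul_pos h2 h2, mul_pos hu h2]
    have : u ^ 3 + m * u ^ 2 - (m + 3) * u + 1 = 0 := by linarith [hroot]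
    rw [this] at key
    simp at key
  · nlinarith [mul_pos_of_neg_of_neg hθr hθr, mul_pos (mul_pos_of_neg_of_neg hθr hθr) (by linarith : 0 < m - θ)]

theorem qbound (m θ s : ℝ) (hm : 1 ≤ m) (b1 : -1 < θ * (m + 2)) (hθ : θ < 0)
    (d1 : |s| * (2 * (m + 2) ^ 2) < 1) :
    m + 1 < m * (θ + s + θ) + (m + 3) - (θ + s) ^ 2 - (θ + s) * θ - θ ^ 2 := by
  obtain ⟨v, hv⟩ : ∃ v, v = 1 / (m + 2) := ⟨_, rfl⟩
  have hv1 : m * v = 1 - 2 * v := by rw [hv]; field_simp; ring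
  have hv0 : 0 < v := by rw [hv]; positivity
  have hv3 : v ≤ 1 / 3 := by rw [hv]; apply one_div_le_one_div_of_le <;> linarith
  have hθv : -v < θ := by
    rw [hv, neg_lt, lt_div_iff₀ (by linarith)]; linarith
  have hs : |s| < v ^ 2 / 2 := by
    have : v ^ 2 / 2 = 1 / (2 * (m + 2) ^ 2) := by rw [hv]; field_simp
    rw [this, lt_div_iff₀ (by positivity)]; exact d1
  obtain ⟨s1, s2⟩ := abs_lt.1 hs
  have h1 : -(v / 2) ≤ m * s := by
    have : m * (v ^ 2 / 2) = (1 - 2 * v) * v / 2 := by rw [← hv1]; ring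
    nlinarith
  have h2 : -(1 - 2 * v) ≤ m * θ := by nlinarith
  have h3 : θ ^ 2 ≤ v ^ 2 := by nlinarith
  have hv2 : v ^ 2 / 2 ≤ v := by nlinarith
  have h4 : s ^ 2 ≤ v ^ 2 := sq_le_sq' (by linarith) (by linarith)
  have h5 : s * θ ≤ v ^ 2 := by nlinarith
  nlinarith

theorem part_i (m : ℤ) (hm : 1 ≤ m) (Λ : ℤ) (hΛ : 0 < Λ) (θ : ℝ)
    (hroot : θ ^ 3 - (m : ℝ) * θ ^ 2 - ((m : ℝ) + 3) * θ - 1 = 0)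
    (hθl : -(1 / 2) < θ) (hθr : θ < 0)
    (x y : ℤ) (hgcd : Int.gcd x y = 1)
    (hF : |F m x y| ≤ Λ)
    (hx1 : -(y : ℝ) / 2 < (x : ℝ)) (hx2 : x ≤ y)
    (hy : 8 * (Λ : ℝ) / (2 * (m : ℝ) + 3) ≤ (y : ℝ)) :
    ((∃ i : ℕ, (GenContFract.of θ).convs i = (x : ℝ) / (y : ℝ)) ∧
      (y = 1 ∨
        (|(x : ℝ) / (y : ℝ) - θ| < (Λ : ℝ) / ((y : ℝ) ^ 3 * ((m : ℝ) + 1)) ∧ m + 2 ≤ y))) := by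
  have hmR : (1 : ℝ) ≤ m := by exact_mod_cast hm
  have hΛR : (1 : ℝ) ≤ Λ := by exact_mod_cast hΛ
  obtain ⟨b1, b2⟩ := theta_bounds m θ hmR hroot hθl hθr
  have hy0 : (0 : ℝ) < y := lt_of_lt_of_le (by positivity) hy
  have hyZ : 0 < y := by exact_mod_cast hy0
  have hy1 : (1 : ℝ) ≤ y := by exact_mod_cast hyZ
  have hy' : 8 * (Λ : ℝ) ≤ y * (2 * m + 3) := by
    rwa [div_le_iff₀ (by linarith)] at hy
  set t : ℝ := (x : ℝ) / y with ht
  have hxt : (x : ℝ) = t * y := by rw [ht]; field_simp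
  have ht1 : -(1 / 2) < t := by
    rw [hxt] at hx1; nlinarith
  have ht2 : t ≤ 1 := by
    rw [ht, div_le_one hy0]; exact_mod_cast hx2
  have hfac : |t - θ| * |m * (t + θ) + (m + 3) - t ^ 2 - t * θ - θ ^ 2| * (y : ℝ) ^ 3 ≤ Λ := by
    have : ((|F m x y| : ℤ) : ℝ) ≤ Λ := by exact_mod_cast hF
    refine le_trans (le_of_eq ?_) this
    rw [← abs_mul, ← abs_of_pos (pow_pos hy0 3), ← abs_mul]
    push_cast
    rw [← abs_neg]
    congr 1
    simp only [F]
    push_cast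
    rw [hxt]
    linear_combination -(y : ℝ) ^ 3 * hroot
  set q := (m : ℝ) * (t + θ) + (m + 3) - t ^ 2 - t * θ - θ ^ 2 with hq
  have hq1 : (2 * (m : ℝ) + 3) / 4 < q := by
    have c1 : 0 ≤ (t + 1 / 2) * (1 - t) := mul_nonneg (by linarith) (by linarith)
    have : 0 ≤ (t + 1 / 2) * (m + 3) := mul_nonneg (by linarith) (by linarith)
    have : 0 ≤ (t + 1 / 2) * θ + (t + 1/2) * (1/2) := by nlinarith
    nlinarith
  have hq0 : 0 < q := by linarith
  rw [abs_of_pos hq0] at hfac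
  have hy3 : (0 : ℝ) < (y : ℝ) ^ 3 := pow_pos hy0 3
  have hdist : |t - θ| * (2 * (y : ℝ) ^ 2) < 1 := by
    by_contra! h
    have h0 : 0 < |t - θ| := by
      by_contra! h0
      have : |t - θ| = 0 := le_antisymm h0 (abs_nonneg _)
      rw [this] at h; norm_num at h
    have h1 : |t - θ| * ((2 * m + 3) / 4) * (y : ℝ) ^ 3 < Λ :=
      lt_of_lt_of_le (by gcongr) hfac
    have h2 : y * (2 * (m : ℝ) + 3) ≤ y * (2 * m + 3) * (|t - θ| * (2 * (y : ℝ) ^ 2)) :=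
      le_mul_of_one_le_right (by positivity) h
    nlinarith
  refine ⟨?_, ?_⟩
  · obtain ⟨q', hq'⟩ : ∃ q' : ℚ, q' = (x : ℚ) / (y : ℚ) := ⟨_, rfl⟩
    have hqR : (q' : ℝ) = t := by rw [hq']; push_cast; rfl
    have hden : ((q'.den : ℤ) : ℝ) = y := by
      rw [hq', Rat.den_div_eq_of_coprime hyZ (by rwa [Int.gcd_eq_natAbs] at hgcd)]
    have := Real.exists_convs_eq_rat (ξ := θ) (q := q') (by
      rw [hqR, abs_sub_comm, lt_div_iff₀ (by have := q'.pos; positivity)]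
      have h3 : ((q'.den : ℕ) : ℝ) = y := by exact_mod_cast hden
      rw [h3]; exact hdist)
    rwa [hqR] at this
  · by_cases hy1' : y = 1
    · exact Or.inl hy1'
    right
    have hy2 : 2 ≤ y := by omega
    have hy2R : (2 : ℝ) ≤ y := by exact_mod_cast hy2
    have hab := abs_lt.1 (show |t - θ| < 1 / (2 * (y : ℝ) ^ 2) by
      rw [lt_div_iff₀ (by positivity)]; exact hdist)
    have hxneg : x ≤ -1 := by
      by_contra! h
      have hx0 : 0 ≤ x := by omega
      have hx0' : x ≠ 0 := by
        rintro rfl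
        simp at hgcd; omega
      have hx1R : (1 : ℝ) ≤ x := by exact_mod_cast (by omega : 1 ≤ x)
      have : 1 ≤ t * y := by rw [← hxt]; exact hx1R
      have h5 := hab.2
      rw [lt_div_iff₀ (by positivity)] at h5
      nlinarith
    have hxR : (x : ℝ) ≤ -1 := by exact_mod_cast hxneg
    have hmy : m + 2 ≤ y := by
      by_contra! h
      have hR : (y : ℝ) + 1 ≤ m + 2 := by exact_mod_cast (by omega : y + 1 ≤ m + 2)
      have h5 := hab.1
      have h6 : t * y ≤ -1 := by rw [← hxt]; exact hxR
      have h7 : -1 < θ * (y + 1) := by nlinarith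
      rw [neg_lt, lt_div_iff₀ (by positivity)] at h5
      -- (θ - t) * 2y² < 1
      have h8 := mul_lt_mul_of_pos_right h5 (by linarith : (0 : ℝ) < y + 1)
      have h9 : 0 ≤ (-1 - t * y) * (2 * y * (y + 1)) := mul_nonneg (by linarith) (by positivity)
      have h10 : 0 < (θ * (y + 1) + 1) * (2 * y ^ 2) := mul_pos (by linarith) (by positivity)
      linarith
    refine ⟨?_, hmy⟩
    have hmyR : (m : ℝ) + 2 ≤ y := by exact_mod_cast hmy
    have hq2 : (m : ℝ) + 1 < q := by
      have d1 : |t - θ| * (2 * (m + 2) ^ 2) < 1 := by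
        refine lt_of_le_of_lt ?_ hdist
        gcongr
      have := qbound m θ (t - θ) hmR b1 hθr d1
      rw [show θ + (t - θ) = t by ring] at this
      rw [hq]; linarith
    rw [lt_div_iff₀ (by positivity)]
    by_cases h0 : |t - θ| = 0
    · rw [h0]; linarith
    have h0' : 0 < |t - θ| := lt_of_le_of_ne (abs_nonneg _) (Ne.symm h0)
    calc |t - θ| * ((y : ℝ) ^ 3 * (m + 1)) = |t - θ| * (m + 1) * (y : ℝ) ^ 3 := by ring
      _ < |t - θ| * q * (y : ℝ) ^ 3 := by gcongr
      _ ≤ Λ := hfac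

section

open Finset

theorem ch_succ (a : ℝ) (k : ℕ) : Ring.choose a (k + 1) * (k + 1) = Ring.choose a k * (a - k) := by
  have h := Ring.choose_smul_choose a (Nat.le_succ k)
  have h1 : (k + 1).choose k = k + 1 := by simp
  rw [Nat.succ_eq_add_one, h1] at h
  simp at h
  rw [← h]; ring

theorem ch_shift (x : ℝ) (k : ℕ) :
    Ring.choose (x + 1) (k + 1) * (k + 1) = (x + 1) * Ring.choose x k := by
  have h := Ring.choose_smul_choose (x + 1) (Nat.le_add_left 1 k)
  simp at h
  rw [← h]; ring

theorem ch_shift2 (x : ℝ) (k : ℕ) :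
    Ring.choose (x + 1) k * (x + 1 - k) = (x + 1) * Ring.choose x k := by
  rw [← ch_shift, ← ch_succ]

theorem ch_nonneg (a : ℝ) (k : ℕ) (h : (k : ℝ) ≤ a + 1) : 0 ≤ Ring.choose a k := by
  induction k with
  | zero => simp
  | succ k ih =>
    push_cast at h
    have := ch_succ a k
    have h2 : 0 ≤ Ring.choose a k * (a - k) := mul_nonneg (ih (by linarith)) (by linarith)
    rw [← this] at h2
    exact nonneg_of_mul_nonneg_left h2 (by positivity)

/-- The coefficients of the hypergeometric polynomial. -/
noncomputable def co (r k : ℕ) : ℝ :=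
  if k ≤ r then Ring.choose ((r : ℝ) + 1 / 3) k * Ring.choose ((r : ℝ) - 1 / 3) (r - k) else 0

theorem co_nonneg (r k : ℕ) : 0 ≤ co r k := by
  unfold co
  split_ifs with h
  · have hk : (k : ℝ) ≤ r := by exact_mod_cast h
    have hk2 : ((r - k : ℕ) : ℝ) ≤ r := by exact_mod_cast Nat.sub_le r k
    exact mul_nonneg (ch_nonneg _ _ (by linarith)) (ch_nonneg _ _ (by linarith))
  · exact le_rfl

theorem co_down1 (r k : ℕ) :
    co r k * (((r : ℝ) + 1) ^ 2 - 1 / 9) = (k + 1) * (k + 2 / 3) * co (r + 1) (k + 1) := by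
  unfold co
  by_cases h : k ≤ r
  · rw [if_pos h, if_pos (by omega)]
    have e1 := ch_shift ((r : ℝ) + 1 / 3) k
    have e2 := ch_shift2 ((r : ℝ) - 1 / 3) (r - k)
    rw [Nat.cast_sub h] at e2
    have h3 : r + 1 - (k + 1) = r - k := by omega
    rw [h3]
    push_cast
    rw [show (r : ℝ) + 1 + 1 / 3 = r + 1 / 3 + 1 by ring,
      show (r : ℝ) + 1 - 1 / 3 = r - 1 / 3 + 1 by ring]
    generalize Ring.choose ((r : ℝ) + 1 / 3 + 1) (k + 1) = a at *
    generalize Ring.choose ((r : ℝ) - 1 / 3 + 1) (r - k) = b at *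
    generalize Ring.choose ((r : ℝ) + 1 / 3) k = c at *
    generalize Ring.choose ((r : ℝ) - 1 / 3) (r - k) = d at *
    have e3 : b * (k + 2 / 3) = ((r : ℝ) - 1 / 3 + 1) * d := by rw [← e2]; ring
    calc c * d * (((r : ℝ) + 1) ^ 2 - 1 / 9) = ((r + 1 / 3 + 1) * c) * (((r : ℝ) - 1 / 3 + 1) * d) := by ring
      _ = _ := by rw [← e1, ← e3]; ring
  · rw [if_neg h, if_neg (by omega)]; simp

theorem co_down2 (r k : ℕ) :
    co r k * (((r : ℝ) + 1) ^ 2 - 1 / 9) = (r + 1 - k) * (r + 4 / 3 - k) * co (r + 1) k := by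
  unfold co
  by_cases h : k ≤ r
  · rw [if_pos h, if_pos (by omega)]
    have e1 := ch_shift2 ((r : ℝ) + 1 / 3) k
    have e2 := ch_shift ((r : ℝ) - 1 / 3) (r - k)
    rw [Nat.cast_sub h] at e2
    have h3 : r + 1 - k = r - k + 1 := by omega
    rw [h3]
    push_cast
    rw [show (r : ℝ) + 1 + 1 / 3 = r + 1 / 3 + 1 by ring,
      show (r : ℝ) + 1 - 1 / 3 = r - 1 / 3 + 1 by ring]
    generalize Ring.choose ((r : ℝ) + 1 / 3 + 1) k = a at *
    generalize Ring.choose ((r : ℝ) - 1 / 3 + 1) (r - k + 1) = b at *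
    generalize Ring.choose ((r : ℝ) + 1 / 3) k = c at *
    generalize Ring.choose ((r : ℝ) - 1 / 3) (r - k) = d at *
    calc c * d * (((r : ℝ) + 1) ^ 2 - 1 / 9) = ((r + 1 / 3 + 1) * c) * (((r : ℝ) - 1 / 3 + 1) * d) := by ring
      _ = _ := by rw [← e1, ← e2]; ring
  · rw [if_neg h]
    by_cases h2 : k = r + 1
    · subst h2; push_cast; ring
    · rw [if_neg (by omega)]; simp

theorem co_sum (r : ℕ) : ∑ k ∈ range (r + 1), co r k = ((2 * r).choose r : ℝ) := by
  have h := Ring.add_choose_eq (r := (r : ℝ) + 1 / 3) (s := (r : ℝ) - 1 / 3) r (Commute.all _ _)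
  rw [show (r : ℝ) + 1 / 3 + (r - 1 / 3) = ((2 * r : ℕ) : ℝ) by push_cast; ring,
    Ring.choose_natCast] at h
  rw [h, Finset.Nat.sum_antidiagonal_eq_sum_range_succ_mk]
  refine sum_congr rfl fun k hk => ?_
  rw [mem_range] at hk
  simp [co, if_pos (Nat.lt_succ_iff.1 hk)]

/-- The homogeneous hypergeometric polynomial evaluated at `(s, t)`. -/
noncomputable def AA (s t : ℂ) (r : ℕ) : ℂ := ∑ k ∈ range (r + 1), (co r k : ℂ) * s ^ k * t ^ (r - k)

open Polynomial in
/-- Dehomogenized version. -/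
noncomputable def PP (r : ℕ) : ℝ[X] := ∑ k ∈ range (r + 1), C (co r k) * X ^ k

open Polynomial in
theorem PP_coeff (r k : ℕ) : (PP r).coeff k = co r k := by
  unfold PP
  simp only [finsetSum_coeff, coeff_C_mul, coeff_X_pow, mul_ite, mul_one, mul_zero, sum_ite_eq, mem_range]
  split_ifs with h
  · rfl
  · unfold co; rw [if_neg (by omega)]

open Polynomial in
theorem AA_eq (s t : ℂ) (ht : t ≠ 0) (r : ℕ) : AA s t r = t ^ r * (PP r).aeval (s / t) := by
  unfold AA PP
  rw [map_sum, mul_sum]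
  refine sum_congr rfl fun k hk => ?_
  rw [mem_range] at hk
  simp only [map_mul, aeval_C, map_pow, aeval_X, Complex.coe_algebraMap]
  obtain ⟨d, rfl⟩ := Nat.exists_eq_add_of_le (Nat.lt_succ_iff.1 hk)
  rw [Nat.add_sub_cancel_left, div_pow, pow_add]
  field_simp

open Polynomial in
theorem PP_rec (r : ℕ) :
    C ((r : ℝ) + 2) * PP (r + 2) = C (2 * (r : ℝ) + 3) * ((X + 1) * PP (r + 1))
      - C ((((r : ℝ) + 1) ^ 2 - 1 / 9) / (r + 1)) * ((X - 1) ^ 2 * PP r) := by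
  have hr : ((r : ℝ) + 1) ≠ 0 := by positivity
  ext k
  rw [show (X + 1) * PP (r + 1) = PP (r + 1) * X + PP (r + 1) by ring,
    show (X - 1) ^ 2 * PP r = PP r * X ^ 2 - 2 * (PP r * X) + PP r by ring]
  rw [show (2 : ℝ[X]) = C 2 from rfl]
  simp only [coeff_sub, coeff_add, coeff_C_mul, PP_coeff, div_mul_eq_mul_div]
  rw [eq_sub_iff_add_eq, ← eq_sub_iff_add_eq', div_eq_iff hr]
  have hp1 : (((r : ℝ) + 2) ^ 2 - 1 / 9) ≠ 0 := by
    have : (0 : ℝ) ≤ r := by positivity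
    nlinarith
  have f1 : ∀ k, co r k * (((r : ℝ) + 1) ^ 2 - 1 / 9) = (k + 1) * (k + 2 / 3) * co (r + 1) (k + 1) :=
    co_down1 r
  have f2 : ∀ k, co r k * (((r : ℝ) + 1) ^ 2 - 1 / 9) = (r + 1 - k) * (r + 4 / 3 - k) * co (r + 1) k :=
    co_down2 r
  have g1 : ∀ k, co (r + 1) k * (((r : ℝ) + 2) ^ 2 - 1 / 9) = (k + 1) * (k + 2 / 3) * co (r + 2) (k + 1) := by
    intro k; have := co_down1 (r + 1) k; push_cast at this; rw [← this]; ring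
  have g2 : ∀ k, co (r + 1) k * (((r : ℝ) + 2) ^ 2 - 1 / 9) = (r + 2 - k) * (r + 7 / 3 - k) * co (r + 2) k := by
    intro k; have := co_down2 (r + 1) k; push_cast at this
    rw [show (r : ℝ) + 2 - k = r + 1 + 1 - k by ring, show (r : ℝ) + 7 / 3 - k = r + 1 + 4 / 3 - k by ring]
    exact Eq.trans (by ring) this
  apply mul_right_cancel₀ hp1
  match k with
  | 0 =>
    simp only [coeff_mul_X_zero, coeff_mul_X_pow', show ¬ (2 ≤ 0) by omega, if_false]
    have a1 := f2 0; have b1 := g2 0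
    push_cast at *
    linear_combination ((((r : ℝ) + 2) ^ 2 - 1 / 9)) * a1 + (((r : ℝ) + 1) * (r + 4 / 3) - (2 * r + 3) * (r + 1)) * b1
  | 1 =>
    simp only [coeff_mul_X, coeff_mul_X_pow', show ¬ (2 ≤ 1) by omega, if_false, PP_coeff]
    have a2 := f1 0; have a3 := f2 1; have b1 := g1 0; have b2 := g2 1
    rw [Nat.zero_add] at a2 b1
    push_cast at a2 a3 b1 b2
    linear_combination ((((r : ℝ) + 2) ^ 2 - 1 / 9)) * (a3 - 2 * a2) - (2 * r + 3) * (r + 1) * b1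
      + (-2 * (2 / 3) + (r : ℝ) * (r + 1 / 3) - (2 * r + 3) * (r + 1)) * b2
  | k + 2 =>
    simp only [coeff_mul_X, coeff_mul_X_pow', show (2 ≤ k + 2) by omega, if_true, PP_coeff, Nat.add_sub_cancel]
    have a1 := f1 k; have a2 := f1 (k + 1); have a3 := f2 (k + 2); have b1 := g1 (k + 1); have b2 := g2 (k + 2)
    rw [show k + 1 + 1 = k + 2 from rfl] at a2 b1
    push_cast at a1 a2 a3 b1 b2
    linear_combination ((((r : ℝ) + 2) ^ 2 - 1 / 9)) * (a1 + a3 - 2 * a2)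
      + (((k : ℝ) + 1) * (k + 2 / 3) - (2 * r + 3) * (r + 1)) * b1
      + (-2 * (k + 2) * (k + 5 / 3) + ((r : ℝ) - 1 - k) * (r - 2 / 3 - k) - (2 * r + 3) * (r + 1)) * b2

theorem AA_rec (s t : ℂ) (ht : t ≠ 0) (r : ℕ) :
    ((r : ℂ) + 2) * AA s t (r + 2) = (2 * r + 3) * (s + t) * AA s t (r + 1)
      - ((((r : ℝ) + 1) ^ 2 - 1 / 9) / (r + 1) : ℝ) * (s - t) ^ 2 * AA s t r := by
  have h := congrArg (fun p => Polynomial.aeval (s / t) p) (PP_rec r)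
  simp only [map_mul, map_sub, map_add, Polynomial.aeval_C, Polynomial.aeval_X, map_pow, map_one,
    Complex.coe_algebraMap] at h
  rw [AA_eq s t ht, AA_eq s t ht, AA_eq s t ht]
  push_cast at h ⊢
  have hst : s = s / t * t := by field_simp
  generalize s / t = w at *
  subst hst
  linear_combination t ^ (r + 2) * h

theorem AA_zero (s t : ℂ) : AA s t 0 = 1 := by simp [AA, co]

theorem AA_one (s t : ℂ) : AA s t 1 = 2 / 3 * t + 4 / 3 * s := by
  simp only [AA, sum_range_succ, co, Ring.choose_one_right, Ring.choose_zero_right, range_zero,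
    sum_empty]
  norm_num

/-- The second form of `AA`. -/
theorem AA_jform (s t : ℂ) (r : ℕ) :
    AA s t r = ∑ j ∈ range (r + 1),
      ((Ring.choose ((r : ℝ) + 1 / 3) j * ((2 * r - j).choose r : ℝ) : ℝ) : ℂ)
        * (s - t) ^ j * t ^ (r - j) := by
  unfold AA
  have h1 : ∀ k ∈ range (r + 1), (co r k : ℂ) * s ^ k * t ^ (r - k) =
      ∑ j ∈ range (r + 1), ((co r k * (k.choose j : ℝ) : ℝ) : ℂ) * (s - t) ^ j * t ^ (r - j) := by
    intro k hk
    rw [mem_range] at hk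
    have hs : s ^ k = ∑ j ∈ range (k + 1), (s - t) ^ j * t ^ (k - j) * (k.choose j : ℂ) := by
      rw [← add_pow]; simp
    have hsub : range (k + 1) ⊆ range (r + 1) := range_subset_range.2 (by omega)
    rw [hs, mul_sum, sum_mul, ← sum_subset hsub]
    · refine sum_congr rfl fun j hj => ?_
      rw [mem_range] at hj
      have : t ^ (r - j) = t ^ (k - j) * t ^ (r - k) := by
        rw [← pow_add]; congr 1; omega
      rw [this]; push_cast; ring
    · intro j _ hj
      rw [mem_range] at hj
      rw [Nat.choose_eq_zero_of_lt (by omega)]; simp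
  rw [sum_congr rfl h1, sum_comm]
  refine sum_congr rfl fun j hj => ?_
  rw [mem_range] at hj
  rw [← sum_mul, ← sum_mul]
  congr 2
  rw [← Complex.ofReal_sum]
  congr 1
  -- real identity
  have hv := Ring.add_choose_eq (r := (r : ℝ) + 1 / 3 - j) (s := (r : ℝ) - 1 / 3) (r - j) (Commute.all _ _)
  rw [show (r : ℝ) + 1 / 3 - j + (r - 1 / 3) = ((2 * r - j : ℕ) : ℝ) by
    rw [Nat.cast_sub (by omega)]; push_cast; ring, Ring.choose_natCast] at hv
  have hc : (2 * r - j).choose (r - j) = (2 * r - j).choose r := by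
    rw [← Nat.choose_symm (by omega)]; congr 1; omega
  rw [hc] at hv
  rw [hv, Finset.Nat.sum_antidiagonal_eq_sum_range_succ_mk, mul_sum]
  rw [range_eq_Ico, ← sum_Ico_consecutive _ (Nat.zero_le j) (by omega : j ≤ r + 1)]
  rw [sum_eq_zero, zero_add]
  · rw [sum_Ico_eq_sum_range, show r + 1 - j = (r - j).succ by omega]
    refine sum_congr rfl fun i hi => ?_
    rw [mem_range] at hi
    rw [co, if_pos (by omega)]
    have := Ring.choose_smul_choose ((r : ℝ) + 1 / 3) (Nat.le_add_right j i)
    rw [Nat.add_sub_cancel_left, nsmul_eq_mul] at this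
    have e : r - (j + i) = r - j - i := by omega
    dsimp only
    rw [e]
    linear_combination Ring.choose ((r : ℝ) - 1 / 3) (r - j - i) * this
  · intro k hk
    rw [mem_Ico] at hk
    rw [Nat.choose_eq_zero_of_lt hk.2]; simp

/-- The remainder function. -/
noncomputable def RR (r : ℕ) (x : ℝ) : ℝ :=
  ∑ k ∈ range (r + 1), co r k * Real.sin (((r : ℝ) + 1 / 3 - 2 * k) * x)

theorem RR_deriv (r : ℕ) (x : ℝ) :
    HasDerivAt (RR (r + 1))
      (-(2 * (((r : ℝ) + 1) ^ 2 - 1 / 9) / (r + 1)) * Real.sin x * RR r x) x := by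
  have h1 : HasDerivAt (RR (r + 1)) (∑ k ∈ range (r + 2), co (r + 1) k *
      (Real.cos ((((r + 1 : ℕ) : ℝ) + 1 / 3 - 2 * k) * x) * (((r + 1 : ℕ) : ℝ) + 1 / 3 - 2 * k))) x := by
    unfold RR
    apply HasDerivAt.fun_sum
    intro k _
    apply HasDerivAt.const_mul
    have := (hasDerivAt_id x).const_mul ((((r + 1 : ℕ) : ℝ) + 1 / 3 - 2 * k))
    simp only [mul_one, id] at this
    exact this.sin
  convert h1 using 1
  have hr : ((r : ℝ) + 1) ≠ 0 := by positivity
  set q := (((r : ℝ) + 1) ^ 2 - 1 / 9) with hq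
  have e1 : ∀ k ∈ range (r + 2), co (r + 1) k *
      (Real.cos ((((r + 1 : ℕ) : ℝ) + 1 / 3 - 2 * k) * x) * (((r + 1 : ℕ) : ℝ) + 1 / 3 - 2 * k))
      = q / (r + 1) * (co r k * Real.cos (((r : ℝ) + 4 / 3 - 2 * k) * x))
        - (k * (k - 1 / 3) / (r + 1)) * co (r + 1) k * Real.cos (((r : ℝ) + 4 / 3 - 2 * k) * x) := by
    intro k _
    have h2 := co_down2 r k
    rw [← hq] at h2
    rw [show ((((r + 1 : ℕ) : ℝ) + 1 / 3 - 2 * k)) = (r : ℝ) + 4 / 3 - 2 * k by push_cast; ring]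
    generalize Real.cos (((r : ℝ) + 4 / 3 - 2 * k) * x) = c
    field_simp
    linear_combination -3 * c * h2
  rw [sum_congr rfl e1, sum_sub_distrib, sum_range_succ, sum_range_succ' _ (r + 1)]
  have e2 : co r (r + 1) = 0 := by simp [co]
  rw [e2]
  simp only [Nat.cast_zero, zero_mul, zero_div, mul_zero, add_zero]
  rw [← sum_sub_distrib]
  unfold RR
  rw [mul_sum]
  refine sum_congr rfl fun k _ => ?_
  have h2 := co_down1 r k
  rw [← hq] at h2
  have e3 : ((k + 1 : ℕ) : ℝ) * (((k + 1 : ℕ) : ℝ) - 1 / 3) / (r + 1) * co (r + 1) (k + 1) = q / (r + 1) * co r k := by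
    push_cast
    field_simp
    linear_combination -3 * h2
  rw [e3]
  have e4 : Real.cos (((r : ℝ) + 4 / 3 - 2 * k) * x) - Real.cos (((r : ℝ) + 4 / 3 - 2 * ((k + 1 : ℕ) : ℝ)) * x)
      = - 2 * Real.sin (((r : ℝ) + 1 / 3 - 2 * k) * x) * Real.sin x := by
    rw [Real.cos_sub_cos]
    congr 2
    · congr 1; push_cast; ring
    · push_cast; ring
  linear_combination -(q / (r + 1) * co r k) * e4

/-- The constant in the remainder estimate. -/
noncomputable def CC (r : ℕ) : ℝ := 4 ^ r * (r.factorial : ℝ) ^ 2 / (2 * r + 1).factorial / 3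

theorem CC_succ (r : ℕ) : CC (r + 1) * (2 * r + 3) = 2 * (r + 1) * CC r := by
  unfold CC
  rw [show 2 * (r + 1) + 1 = (2 * r + 1 + 1) + 1 by ring, Nat.factorial_succ (2 * r + 1 + 1),
    Nat.factorial_succ (2 * r + 1), Nat.factorial_succ r]
  have := Nat.factorial_pos (2 * r + 1)
  push_cast
  field_simp
  ring

theorem RR_zero (r : ℕ) : RR r 0 = 0 := by simp [RR]

theorem RR_bound (r : ℕ) : ∀ x : ℝ, 0 ≤ x → |RR r x| ≤ CC r * x ^ (2 * r + 1) := by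
  induction r with
  | zero =>
    intro x hx
    simp only [RR, CC, co]
    simp
    have := Real.abs_sin_le_abs (x := 3⁻¹ * x)
    rw [abs_of_nonneg (by positivity : 0 ≤ 3⁻¹ * x)] at this
    linarith
  | succ r ih =>
    have hq : (0 : ℝ) ≤ 2 * (((r : ℝ) + 1) ^ 2 - 1 / 9) / (r + 1) ∧
        2 * (((r : ℝ) + 1) ^ 2 - 1 / 9) / (r + 1) ≤ 2 * (r + 1) := by
      have : (0 : ℝ) ≤ r := by positivity
      constructor
      · apply div_nonneg <;> nlinarith
      · rw [div_le_iff₀ (by positivity)]; nlinarith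
    set κ := 2 * (((r : ℝ) + 1) ^ 2 - 1 / 9) / (r + 1)
    have hB : ∀ x : ℝ, HasDerivAt (fun x => CC (r + 1) * x ^ (2 * (r + 1) + 1))
        (2 * (r + 1) * x * (CC r * x ^ (2 * r + 1))) x := by
      intro x
      have := (hasDerivAt_pow (2 * (r + 1) + 1) x).const_mul (CC (r + 1))
      refine this.congr_deriv ?_
      push_cast
      have h := CC_succ r
      rw [show 2 * (r + 1) = 2 * r + 1 + 1 by omega, pow_succ]
      linear_combination (x ^ (2 * r + 1) * x) * h
    have hd : ∀ x : ℝ, 0 ≤ x → |(-κ * Real.sin x * RR r x)| ≤ 2 * (r + 1) * x * (CC r * x ^ (2 * r + 1)) := by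
      intro x hx
      rw [abs_mul, abs_mul, abs_neg, abs_of_nonneg hq.1]
      have h1 := Real.abs_sin_le_abs (x := x)
      rw [abs_of_nonneg hx] at h1
      have := ih x hx
      gcongr
      exact hq.2
    intro x hx
    have := image_norm_le_of_norm_deriv_right_le_deriv_boundary (f := RR (r + 1)) (a := 0) (b := x)
      (f' := fun x => -κ * Real.sin x * RR r x)
      (B := fun x => CC (r + 1) * x ^ (2 * (r + 1) + 1))
      (B' := fun x => 2 * (r + 1) * x * (CC r * x ^ (2 * r + 1)))
      (fun y _ => (RR_deriv r y).continuousAt.continuousWithinAt)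
      (fun y _ => (RR_deriv r y).hasDerivWithinAt)
      (by simp [RR_zero]) hB
      (fun y hy => by simpa using hd y hy.1)
      (x := x) ⟨hx, le_rfl⟩
    simpa using this

/-- The common divisor of the coefficients. -/
noncomputable def GG (r : ℕ) : ℕ :=
  ∏ n ∈ (range (2 * r + 2)).filter (fun n => IsPrimePow n ∧ ¬ 3 ∣ n ∧ 2 * n ≤ 3 * (r % n) + 1), n.minFac

theorem GG_pos (r : ℕ) : 0 < GG r := by
  unfold GG
  exact prod_pos fun n _ => Nat.minFac_pos n

theorem GG_fact_three (r : ℕ) : (GG r).factorization 3 = 0 := by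
  apply Nat.factorization_eq_zero_of_not_dvd
  unfold GG
  rw [Prime.dvd_finsetProd_iff Nat.prime_three.prime]
  rintro ⟨n, hn, h⟩
  rw [mem_filter] at hn
  exact hn.2.2.1 (h.trans (Nat.minFac_dvd n))

theorem GG_fact (r p b : ℕ) (hp : p.Prime) (hb : 2 * r + 2 ≤ b) :
    (GG r).factorization p ≤ ∑ i ∈ Ico 1 b, if 2 * p ^ i ≤ 3 * (r % p ^ i) + 1 then 1 else 0 := by
  unfold GG
  rw [Nat.factorization_prod (fun x _ => (Nat.minFac_pos x).ne')]
  rw [← card_filter, Finset.sum_apply']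
  have h1 : ∀ n ∈ (range (2 * r + 2)).filter (fun n => IsPrimePow n ∧ ¬ 3 ∣ n ∧ 2 * n ≤ 3 * (r % n) + 1),
      (n.minFac).factorization p = if n.minFac = p then 1 else 0 := by
    intro n hn
    rw [mem_filter] at hn
    have : n.minFac.Prime := Nat.minFac_prime hn.2.1.ne_one
    rw [this.factorization, Finsupp.single_apply]
  rw [sum_congr rfl h1, ← card_filter]
  refine le_trans (card_le_card (t := ((Ico 1 b).filter (fun i => 2 * p ^ i ≤ 3 * (r % p ^ i) + 1)).image (fun i => p ^ i)) ?_) card_image_le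
  intro n hn
  rw [mem_filter, mem_filter, mem_range] at hn
  obtain ⟨⟨hn1, hn2, hn3, hn4⟩, hn5⟩ := hn
  have h2 := hn2.minFac_pow_factorization_eq
  rw [hn5] at h2
  rw [mem_image]
  refine ⟨n.factorization p, ?_, h2⟩
  rw [mem_filter, mem_Ico, h2]
  refine ⟨⟨?_, ?_⟩, hn4⟩
  · by_contra! h
    have : n.factorization p = 0 := by omega
    rw [this, pow_zero] at h2
    exact hn2.ne_one h2.symm
  · have := Nat.lt_pow_self (n := n.factorization p) hp.one_lt
    omega

/-- local inequality -/
theorem local_ineq (q r j : ℕ) (hq : 2 ≤ q) (hq3 : Nat.Coprime 3 q) (hj : j ≤ r) :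
    j / q + r / q + (r - j) / q + (if 2 * q ≤ 3 * (r % q) + 1 then 1 else 0)
      ≤ ((range j).filter (fun i => q ∣ 3 * r + 1 - 3 * i)).card + (2 * r - j) / q := by
  obtain ⟨v, hvq, hv⟩ : ∃ v, v < q ∧ 3 * v ≡ 3 * r + 1 [MOD q] := by
    obtain ⟨w, -, hw⟩ := Nat.exists_mul_mod_eq_one_of_coprime hq3 (by omega)
    refine ⟨(w * (3 * r + 1)) % q, Nat.mod_lt _ (by omega), ?_⟩
    have h1 : 3 * w ≡ 1 [MOD q] := by
      unfold Nat.ModEq; rw [hw, Nat.mod_eq_of_lt (by omega)]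
    calc 3 * ((w * (3 * r + 1)) % q) ≡ 3 * (w * (3 * r + 1)) [MOD q] :=
          (Nat.mod_modEq _ _).mul_left 3
      _ = 3 * w * (3 * r + 1) := by ring
      _ ≡ 1 * (3 * r + 1) [MOD q] := h1.mul_right _
      _ = 3 * r + 1 := by ring
  have hcard : ((range j).filter (fun i => q ∣ 3 * r + 1 - 3 * i)).card
      = j / q + if v < j % q then 1 else 0 := by
    have := Nat.count_modEq_card (b := j) (by omega : 0 < q) v
    rw [Nat.mod_eq_of_lt hvq] at this
    rw [← this, Nat.count_eq_card_filter_range]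
    congr 1
    apply filter_congr
    intro i hi
    rw [mem_range] at hi
    rw [← Nat.modEq_iff_dvd' (by omega)]
    constructor
    · intro h
      exact Nat.ModEq.cancel_left_of_coprime (by rwa [Nat.gcd_comm]) (h.trans hv.symm)
    · intro h
      exact (h.mul_left 3).trans hv
  rw [hcard]
  have hadd := @Nat.div_add_div_le_add_div r (r - j) q
  rw [show r + (r - j) = 2 * r - j by omega] at hadd
  split_ifs with h1 h2 h2
  · omega
  · -- main case
    have hr := Nat.div_add_mod r q
    have hj' := Nat.div_add_mod j q
    have hs := Nat.mod_lt r (by omega : 0 < q)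
    set s := r % q
    set u := j % q
    set R := r / q
    set J := j / q
    -- determine v
    have hv2 : 3 * v ≡ 3 * s + 1 [MOD q] := by
      refine hv.trans ?_
      exact ((Nat.mod_modEq r q).symm.mul_left 3).add_right 1
    have hv3 : 3 * v + q = 3 * s + 1 ∨ 3 * v + 2 * q = 3 * s + 1 := by
      rcases le_total (3 * v) (3 * s + 1) with hle | hle
      · obtain ⟨c, hc⟩ := (Nat.modEq_iff_dvd' hle).1 hv2
        have hc3 : c < 3 := by
          by_contra! h
          have : q * 3 ≤ q * c := Nat.mul_le_mul_left _ h
          omega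
        interval_cases c <;> omega
      · obtain ⟨c, hc⟩ := (Nat.modEq_iff_dvd' hle).1 hv2.symm
        have hc3 : c < 1 := by
          by_contra! h
          have : q * 1 ≤ q * c := Nat.mul_le_mul_left _ h
          omega
        interval_cases c
        omega
    have hJR : J ≤ R := Nat.div_le_div_right hj
    have e1 : (r - j) / q = R - J := by
      have hd : q * R = q * J + q * (R - J) := by rw [← Nat.mul_add]; congr 1; omega
      rw [show r - j = (s - u) + q * (R - J) by omega, Nat.add_mul_div_left _ _ (by omega), Nat.div_eq_of_lt (by omega)]
      omega
    have e2 : R + (R - J) + 1 ≤ (2 * r - j) / q := by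
      rw [Nat.le_div_iff_mul_le (by omega)]
      have hd : q * R = q * J + q * (R - J) := by rw [← Nat.mul_add]; congr 1; omega
      have : (R + (R - J) + 1) * q = q * R + q * (R - J) + q := by ring
      rw [this]
      omega
    rw [e1]; omega
  · omega
  · omega

theorem G_dvd (r j : ℕ) (hj : j ≤ r) :
    GG r * (j.factorial * r.factorial * (r - j).factorial) ∣
      3 ^ (j / 2) * (∏ i ∈ range j, (3 * r + 1 - 3 * i)) * (2 * r - j).factorial := by
  have hG := (GG_pos r).ne'
  have f1 := Nat.factorial_ne_zero j
  have f2 := Nat.factorial_ne_zero r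
  have f3 := Nat.factorial_ne_zero (r - j)
  have f4 := Nat.factorial_ne_zero (2 * r - j)
  have f5 : (∏ i ∈ range j, (3 * r + 1 - 3 * i)) ≠ 0 := by
    rw [prod_ne_zero_iff]
    intro i hi
    rw [mem_range] at hi; omega
  have f6 : 3 ^ (j / 2) ≠ 0 := by positivity
  rw [← Nat.factorization_prime_le_iff_dvd (by positivity) (by positivity)]
  intro p hp
  rw [Nat.factorization_mul hG (by positivity), Nat.factorization_mul (by positivity) f3,
    Nat.factorization_mul f1 f2, Nat.factorization_mul (by positivity) f4,
    Nat.factorization_mul f6 f5]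
  simp only [Finsupp.add_apply]
  by_cases hp3 : p = 3
  · subst hp3
    rw [GG_fact_three]
    have h1 : (3 ^ (j / 2)).factorization 3 = j / 2 := by
      rw [Nat.prime_three.factorization_pow]; simp
    have h2 : j.factorial.factorization 3 ≤ j / 2 := by
      have := Nat.sub_one_mul_factorization_factorial (n := j) Nat.prime_three
      omega
    have h3 : r.factorial.factorization 3 + (r - j).factorial.factorization 3
        ≤ (2 * r - j).factorial.factorization 3 := by
      have := Nat.factorial_mul_factorial_dvd_factorial_add r (r - j)
      rw [show r + (r - j) = 2 * r - j by omega,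
        ← Nat.factorization_le_iff_dvd (by positivity) f4, Nat.factorization_mul f2 f3] at this
      simpa using this 3
    omega
  · have hb : ∀ n, n < 3 * r + 2 → Nat.log p n < 3 * r + 2 := fun n hn =>
      lt_of_le_of_lt (Nat.log_le_self p n) hn
    rw [Nat.factorization_factorial hp (hb j (by omega)), Nat.factorization_factorial hp (hb r (by omega)),
      Nat.factorization_factorial hp (hb (r - j) (by omega)),
      Nat.factorization_factorial hp (hb (2 * r - j) (by omega))]
    have hprod : (∏ i ∈ range j, (3 * r + 1 - 3 * i)).factorization p
        = ∑ i ∈ Ico 1 (3 * r + 2), ((range j).filter (fun k => p ^ i ∣ 3 * r + 1 - 3 * k)).card := by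
      rw [Nat.factorization_prod (by
        intro i hi
        rw [mem_range] at hi; omega), Finset.sum_apply']
      have : ∀ k ∈ range j, (3 * r + 1 - 3 * k).factorization p =
          ∑ i ∈ Ico 1 (3 * r + 2), if p ^ i ∣ 3 * r + 1 - 3 * k then 1 else 0 := by
        intro k hk
        rw [mem_range] at hk
        rw [← card_filter]
        apply Nat.factorization_eq_card_pow_dvd_of_lt hp (by omega)
        have := Nat.lt_pow_self (n := 3 * r + 2) hp.one_lt
        omega
      rw [sum_congr rfl this, sum_comm]
      simp only [card_filter]
    rw [hprod]
    have hGf := GG_fact r p (3 * r + 2) hp (by omega)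
    have key : ∑ i ∈ Ico 1 (3 * r + 2), (j / p ^ i + r / p ^ i + (r - j) / p ^ i + (if 2 * p ^ i ≤ 3 * (r % p ^ i) + 1 then 1 else 0))
      ≤ ∑ i ∈ Ico 1 (3 * r + 2), (((range j).filter (fun k => p ^ i ∣ 3 * r + 1 - 3 * k)).card + (2 * r - j) / p ^ i) := by
      apply sum_le_sum
      intro i hi
      rw [mem_Ico] at hi
      apply local_ineq _ _ _ _ _ hj
      · calc 2 ≤ p := hp.two_le
          _ = p ^ 1 := (pow_one p).symm
          _ ≤ p ^ i := Nat.pow_le_pow_right hp.pos hi.1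
      · apply Nat.Coprime.pow_right
        exact (Nat.coprime_primes Nat.prime_three hp).2 (Ne.symm hp3)
    simp only [sum_add_distrib] at key
    omega

/-- primitive cube root of unity -/
noncomputable def om : ℂ := ⟨-1 / 2, √3 / 2⟩

/-- `α = m + 3 + 3ω` -/
noncomputable def al (m : ℤ) : ℂ := ⟨(m : ℝ) + 3 / 2, 3 * √3 / 2⟩

/-- conjugate of `α` -/
noncomputable def al' (m : ℤ) : ℂ := ⟨(m : ℝ) + 3 / 2, -(3 * √3 / 2)⟩

theorem sq3 : √3 * √3 = (3 : ℝ) := Real.mul_self_sqrt (by norm_num)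

theorem om_sq : om * om = -1 - om := by
  apply Complex.ext <;> simp [om] <;> nlinarith [sq3]

theorem al'_eq (m : ℤ) : al' m = m + (-3 : ℤ) * om := by
  apply Complex.ext <;> simp [om, al'] <;> ring

theorem al_sub (m : ℤ) : al m - al' m = 3 * (1 + 2 * om) := by
  apply Complex.ext <;> simp [om, al, al'] <;> ring

theorem delta_sq : (1 + 2 * om) ^ 2 = -3 := by
  linear_combination 4 * om_sq

/-- Eisenstein integers -/
def Ei (z : ℂ) : Prop := ∃ a b : ℤ, z = a + b * om

theorem Ei.mul {z w : ℂ} (hz : Ei z) (hw : Ei w) : Ei (z * w) := by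
  obtain ⟨a, b, rfl⟩ := hz
  obtain ⟨c, d, rfl⟩ := hw
  refine ⟨a * c - b * d, a * d + b * c - b * d, ?_⟩
  push_cast
  linear_combination (b * d : ℂ) * om_sq

theorem Ei.add {z w : ℂ} (hz : Ei z) (hw : Ei w) : Ei (z + w) := by
  obtain ⟨a, b, rfl⟩ := hz
  obtain ⟨c, d, rfl⟩ := hw
  exact ⟨a + c, b + d, by push_cast; ring⟩

theorem Ei.int (a : ℤ) : Ei a := ⟨a, 0, by simp⟩

theorem Ei.pow {z : ℂ} (hz : Ei z) (n : ℕ) : Ei (z ^ n) := by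
  induction n with
  | zero => exact ⟨1, 0, by simp⟩
  | succ n ih => rw [pow_succ]; exact ih.mul hz

theorem Ei.sum {s : Finset ℕ} {f : ℕ → ℂ} (h : ∀ i ∈ s, Ei (f i)) : Ei (∑ i ∈ s, f i) := by
  classical
  induction s using Finset.induction_on with
  | empty => exact ⟨0, 0, by simp⟩
  | insert a s ha ih =>
    rw [sum_insert ha]
    exact (h a (mem_insert_self _ _)).add (ih fun i hi => h i (mem_insert_of_mem hi))

theorem ch_prod (r j : ℕ) (hj : j ≤ r) :
    Ring.choose ((r : ℝ) + 1 / 3) j * (3 ^ j * j.factorial) = ((∏ i ∈ range j, (3 * r + 1 - 3 * i) : ℕ) : ℝ) := by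
  induction j with
  | zero => simp
  | succ j ih =>
    have h := ih (by omega)
    have h2 := ch_succ ((r : ℝ) + 1 / 3) j
    rw [prod_range_succ, Nat.cast_mul, ← h, Nat.factorial_succ, Nat.cast_sub (by omega)]
    push_cast
    linear_combination 3 ^ (j + 1) * (j.factorial : ℝ) * h2

theorem AA_int (m : ℤ) (r : ℕ) : ∃ e : ℂ, Ei e ∧ AA (al m) (al' m) r = GG r * e := by
  have h : ∀ j, ∃ e : ℂ, Ei e ∧ (j ∈ range (r + 1) →
      ((Ring.choose ((r : ℝ) + 1 / 3) j * ((2 * r - j).choose r : ℝ) : ℝ) : ℂ)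
        * (al m - al' m) ^ j * al' m ^ (r - j) = GG r * e) := by
    intro j
    by_cases hj' : j ∈ range (r + 1)
    swap
    · exact ⟨0, ⟨0, 0, by simp⟩, fun h => absurd h hj'⟩
    have hj : j ≤ r := by rw [mem_range] at hj'; omega
    obtain ⟨U, hU⟩ := G_dvd r j hj
    refine ⟨(U : ℤ) * ((-1 : ℤ) ^ (j / 2) * ((1 : ℤ) + (2 : ℤ) * om) ^ (j % 2) * ((m : ℤ) + (-3 : ℤ) * om) ^ (r - j)),
      ?_, fun _ => ?_⟩
    · refine (Ei.int U).mul (((Ei.pow (Ei.int (-1)) _).mul (Ei.pow ⟨1, 2, rfl⟩ _)).mul (Ei.pow ⟨m, -3, rfl⟩ _))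
    · rw [al_sub, al'_eq, mul_pow]
      have hd : (1 + 2 * om) ^ j = (-1) ^ (j / 2) * 3 ^ (j / 2) * (1 + 2 * om) ^ (j % 2) := by
        conv_lhs => rw [← Nat.div_add_mod j 2]
        rw [pow_add, pow_mul, delta_sq, ← mul_pow]; norm_num
      rw [hd]
      have hc : (2 * r - j).choose r * (r.factorial * (r - j).factorial) = (2 * r - j).factorial := by
        have := Nat.choose_mul_factorial_mul_factorial (n := 2 * r - j) (k := r) (by omega)
        rw [show 2 * r - j - r = r - j by omega] at this
        rw [← this]; ring
      have hch := ch_prod r j hj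
      have hreal : Ring.choose ((r : ℝ) + 1 / 3) j * ((2 * r - j).choose r : ℝ) * 3 ^ j * 3 ^ (j / 2) = GG r * U := by
        have hU' : (((3 : ℕ) ^ (j / 2) * (∏ i ∈ range j, (3 * r + 1 - 3 * i)) * (2 * r - j).factorial : ℕ) : ℝ) = 
          ((GG r * (j.factorial * r.factorial * (r - j).factorial) * U : ℕ) : ℝ) := by rw [hU]
        rw [Nat.cast_mul, Nat.cast_mul, ← hch, ← hc] at hU'
        push_cast at hU'
        have p1 : (0 : ℝ) < j.factorial := by positivity
        have p2 : (0 : ℝ) < r.factorial := by positivity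
        have p3 : (0 : ℝ) < (r - j).factorial := by positivity
        apply mul_right_cancel₀ (mul_pos (mul_pos p1 p2) p3).ne'
        linear_combination hU'
      have hcomp : ((Ring.choose ((r : ℝ) + 1 / 3) j * ((2 * r - j).choose r : ℝ) : ℝ) : ℂ) * 3 ^ j * 3 ^ (j / 2) = GG r * U := by
        have := congrArg (fun x : ℝ => (x : ℂ)) hreal
        push_cast at this ⊢
        exact this
      push_cast at hcomp ⊢
      linear_combination ((-1) ^ (j / 2) * (1 + 2 * om) ^ (j % 2) * (m + -3 * om) ^ (r - j)) * hcomp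
  choose e he he2 using h
  refine ⟨∑ j ∈ range (r + 1), e j, Ei.sum fun i _ => he i, ?_⟩
  rw [AA_jform, mul_sum]
  exact sum_congr rfl he2

/-- The linear forms. -/
noncomputable def LL (m : ℤ) (r : ℕ) (x y : ℝ) : ℝ :=
  ((om * om * x - y) * AA (al m) (al' m) r).im * (2 / (√3 * GG r))

theorem LL_lin (m : ℤ) (r : ℕ) (x y θ : ℝ) : LL m r x y = y * LL m r θ 1 + (x - θ * y) * LL m r 1 0 := by
  unfold LL
  have : (om * om * x - y) * AA (al m) (al' m) r = (y : ℂ) * ((om * om * θ - (1 : ℝ)) * AA (al m) (al' m) r)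
      + ((x - θ * y : ℝ) : ℂ) * ((om * om * (1 : ℝ) - (0 : ℝ)) * AA (al m) (al' m) r) := by
    push_cast; ring
  rw [this, Complex.add_im, Complex.im_ofReal_mul, Complex.im_ofReal_mul]
  ring

theorem LL_int (m : ℤ) (r : ℕ) (x y : ℤ) : ∃ N : ℤ, LL m r x y = N := by
  obtain ⟨e, he, hA⟩ := AA_int m r
  have hE : Ei ((om * om * x - y) * e) := by
    refine Ei.mul ⟨-x - y, -x, ?_⟩ he
    push_cast; linear_combination (x : ℂ) * om_sq
  obtain ⟨a, b, hab⟩ := hE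
  refine ⟨b, ?_⟩
  unfold LL
  have h1 : (om * om * ((x : ℝ) : ℂ) - ((y : ℝ) : ℂ)) * AA (al m) (al' m) r = ((GG r : ℝ) : ℂ) * (a + b * om) := by
    rw [hA, ← hab]; push_cast; ring
  rw [h1, Complex.im_ofReal_mul]
  have hG : (0 : ℝ) < GG r := by exact_mod_cast GG_pos r
  have : (a + b * om).im = b * (√3 / 2) := by simp [om]
  rw [this]
  field_simp

theorem AA_im_down (m : ℤ) (w : ℂ) (r : ℕ) (h1 : (w * AA (al m) (al' m) (r + 1)).im = 0)
    (h2 : (w * AA (al m) (al' m) (r + 2)).im = 0) : (w * AA (al m) (al' m) r).im = 0 := by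
  have ht : al' m ≠ 0 := by
    intro h
    have := congrArg Complex.im h
    simp [al'] at this
  have hrec := AA_rec (al m) (al' m) ht r
  have hs : al m + al' m = ((2 * m + 3 : ℝ) : ℂ) := by
    apply Complex.ext <;> simp [al, al']; ring
  have hd : (al m - al' m) ^ 2 = -27 := by
    rw [al_sub, mul_pow, delta_sq]; norm_num
  rw [hs, hd] at hrec
  have h3 : ((27 * ((((r : ℝ) + 1) ^ 2 - 1 / 9) / (r + 1)) : ℝ) : ℂ) * (w * AA (al m) (al' m) r)
      = ((r + 2 : ℝ) : ℂ) * (w * AA (al m) (al' m) (r + 2))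
        - (((2 * r + 3) * (2 * m + 3) : ℝ) : ℂ) * (w * AA (al m) (al' m) (r + 1)) := by
    push_cast at hrec ⊢
    linear_combination -w * hrec
  have h4 := congrArg Complex.im h3
  rw [Complex.sub_im, Complex.im_ofReal_mul, Complex.im_ofReal_mul, Complex.im_ofReal_mul, h1, h2] at h4
  have hq : 0 < 27 * ((((r : ℝ) + 1) ^ 2 - 1 / 9) / (r + 1)) := by
    have : (0 : ℝ) ≤ r := by positivity
    have : 0 < (((r : ℝ) + 1) ^ 2 - 1 / 9) := by nlinarith
    positivity
  simp only [mul_zero, sub_zero] at h4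
  exact (mul_eq_zero.1 h4).resolve_left hq.ne'

theorem LL_nonvanish (m : ℤ) (r : ℕ) (x y : ℝ) (hxy : y ≠ 0)
    (h1 : LL m r x y = 0) (h2 : LL m (r + 1) x y = 0) : False := by
  have h3 : ∀ r, (2 / (√3 * GG r)) ≠ 0 := by
    intro r
    have hG : (0 : ℝ) < GG r := by exact_mod_cast GG_pos r
    positivity
  have k1 := (mul_eq_zero.1 h1).resolve_right (h3 r)
  have k2 := (mul_eq_zero.1 h2).resolve_right (h3 (r + 1))
  generalize hw : (om * om * x - y : ℂ) = w at k1 k2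
  have : (w * AA (al m) (al' m) 0).im = 0 ∧ (w * AA (al m) (al' m) 1).im = 0 := by
    clear h1 h2
    induction r with
    | zero => exact ⟨k1, k2⟩
    | succ r ih => exact ih (AA_im_down m w r k1 k2) k1
  obtain ⟨e0, e1⟩ := this
  rw [AA_zero, mul_one] at e0
  have hs3 : (0 : ℝ) < √3 := by positivity
  have hx : x = 0 := by
    rw [← hw, om_sq] at e0
    simp [om] at e0
    exact e0
  rw [AA_one, ← hw, hx] at e1
  simp [al, al'] at e1
  rcases e1 with h | h
  · exact hxy h
  · norm_num at h
    nlinarith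

theorem norm_al (m : ℤ) : ‖al m‖ = √((m : ℝ) ^ 2 + 3 * m + 9) := by
  rw [Complex.norm_eq_sqrt_sq_add_sq]
  congr 1
  simp [al]
  nlinarith [sq3]

theorem norm_al' (m : ℤ) : ‖al' m‖ = √((m : ℝ) ^ 2 + 3 * m + 9) := by
  rw [Complex.norm_eq_sqrt_sq_add_sq]
  congr 1
  simp [al']
  nlinarith [sq3]

theorem LL_size (m : ℤ) (r : ℕ) :
    |LL m r 1 0| ≤ ((2 * r).choose r : ℝ) * √((m : ℝ) ^ 2 + 3 * m + 9) ^ r * (2 / (√3 * GG r)) := by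
  unfold LL
  rw [abs_mul, abs_of_nonneg (by positivity : (0 : ℝ) ≤ 2 / (√3 * GG r))]
  gcongr
  refine (Complex.abs_im_le_norm _).trans ?_
  rw [norm_mul]
  have hn : ‖om * om * ((1 : ℝ) : ℂ) - ((0 : ℝ) : ℂ)‖ = 1 := by
    have : ‖om‖ = 1 := by
      rw [Complex.norm_eq_sqrt_sq_add_sq, Real.sqrt_eq_one]
      simp [om]
      nlinarith [sq3]
    simp [this]
  rw [hn, one_mul]
  unfold AA
  refine (norm_sum_le _ _).trans ?_
  rw [← co_sum, sum_mul]
  apply sum_le_sum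
  intro k hk
  rw [mem_range] at hk
  rw [norm_mul, norm_mul, norm_pow, norm_pow, norm_al, norm_al', mul_assoc, ← pow_add,
    show k + (r - k) = r by omega, Complex.norm_real, Real.norm_of_nonneg (co_nonneg r k)]

theorem sin_cos_ineq (x : ℝ) (h0 : 0 < x) (h1 : x ≤ 1) : x ^ 2 * Real.cos x ≤ Real.sin x ^ 2 := by
  have hs := Real.sin_gt_sub_cube h0
  have hc := (abs_le.1 (Real.cos_bound (abs_le.2 ⟨by linarith, h1⟩))).2
  rw [abs_of_pos h0] at hc
  have h2 : 0 ≤ x - x ^ 3 / 6 := by nlinarith [pow_le_one₀ (n := 2) h0.le h1]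
  have h3 : (x - x ^ 3 / 6) ^ 2 ≤ Real.sin x ^ 2 := by gcongr
  have h4 : x ^ 2 * Real.cos x ≤ x ^ 2 * (1 - x ^ 2 / 2 + x ^ 4 * (5 / 96)) := by
    gcongr; linarith
  have h6 : 0 ≤ x ^ 4 * (1 - x ^ 2) := by
    have := pow_le_one₀ (n := 2) h0.le h1
    have : 0 ≤ 1 - x ^ 2 := by linarith
    positivity
  have h7 : 0 ≤ x ^ 4 := by positivity
  nlinarith

theorem arctan_le_self' {x : ℝ} (hx : 0 < x) : Real.arctan x ≤ x := by
  have h := Real.lt_tan (Real.arctan_pos.2 hx) (Real.arctan_lt_pi_div_two x)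
  rw [Real.tan_arctan] at h
  exact h.le

theorem exp_polar (x : ℝ) : Complex.exp ((x : ℂ) * Complex.I) = ⟨Real.cos x, Real.sin x⟩ := by
  apply Complex.ext
  · rw [Complex.exp_ofReal_mul_I_re]
  · rw [Complex.exp_ofReal_mul_I_im]

theorem exp_polar_neg (x : ℝ) : Complex.exp (-(x : ℂ) * Complex.I) = ⟨Real.cos x, -Real.sin x⟩ := by
  rw [← Complex.ofReal_neg, exp_polar, Real.cos_neg, Real.sin_neg]

set_option maxHeartbeats 1000000 in
theorem LL_small (m : ℤ) (hm : 30 ≤ m) (θ : ℝ)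
    (hroot : θ ^ 3 - (m : ℝ) * θ ^ 2 - ((m : ℝ) + 3) * θ - 1 = 0)
    (hθl : -(1 / 2) < θ) (hθr : θ < 0) (r : ℕ) :
    |LL m r θ 1| ≤ 27 ^ r * (r.factorial : ℝ) ^ 2 / (2 * r + 1).factorial
      / (((m : ℝ) + 3 / 2) ^ (r + 1) * GG r) := by
  have hmR : (30 : ℝ) ≤ m := by exact_mod_cast hm
  have hb := (theta_bounds (m : ℝ) θ (by linarith) hroot hθl hθr).1
  have hθ : -(1 / 32) ≤ θ := by
    by_contra h
    push Not at h
    nlinarith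
  have hs3 : (0 : ℝ) < √3 := by positivity
  have hs3' : √3 < 2 := by
    rw [Real.sqrt_lt' (by norm_num)]; norm_num
  obtain ⟨n, hn⟩ : ∃ n, n = 1 + θ / 2 := ⟨_, rfl⟩
  obtain ⟨w, hw⟩ : ∃ w, w = -(√3 / 2) * θ := ⟨_, rfl⟩
  have hn0 : 0 < n := by rw [hn]; linarith
  have hw0 : 0 < w := by rw [hw]; nlinarith
  obtain ⟨P, hP⟩ : ∃ P, P = √(n ^ 2 + w ^ 2) := ⟨_, rfl⟩
  have hPsq : P ^ 2 = n ^ 2 + w ^ 2 := by rw [hP]; exact Real.sq_sqrt (by positivity)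
  have hP0 : 0 < P := by rw [hP]; positivity
  have hP1 : P ≤ 1 := by
    have : P ^ 2 ≤ 1 := by
      rw [hPsq, hn, hw]
      nlinarith [sq3]
    nlinarith
  obtain ⟨φ, hφ⟩ : ∃ φ, φ = Real.arctan (w / n) := ⟨_, rfl⟩
  have hwn : 0 < w / n := by positivity
  have hφ0 : 0 < φ := by rw [hφ]; exact Real.arctan_pos.2 hwn
  have hφ1 : φ ≤ 1 / 3 := by
    rw [hφ]
    refine (arctan_le_self' hwn).trans ?_
    rw [div_le_iff₀ hn0, hn, hw]
    nlinarith
  have hcos : P * Real.cos φ = n := by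
    rw [hφ, Real.cos_arctan]
    have : √(1 + (w / n) ^ 2) = P / n := by
      rw [hP, show 1 + (w / n) ^ 2 = (n ^ 2 + w ^ 2) / n ^ 2 by field_simp, Real.sqrt_div (by positivity),
        Real.sqrt_sq hn0.le]
    rw [this]; field_simp
  have hsin : P * Real.sin φ = w := by
    have : Real.sin φ = w / n * Real.cos φ := by
      have h := Real.tan_arctan (w / n)
      rw [← hφ, Real.tan_eq_sin_div_cos] at h
      have hc0 : Real.cos φ ≠ 0 := by rintro h0; rw [h0, mul_zero] at hcos; linarith
      rw [← h]; field_simp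
    rw [this, show P * (w / n * Real.cos φ) = w / n * (P * Real.cos φ) by ring, hcos]
    field_simp
  obtain ⟨ψ, hψ⟩ : ∃ ψ, ψ = 3 * φ := ⟨_, rfl⟩
  have hψ0 : 0 < ψ := by rw [hψ]; linarith
  have hψ1 : ψ ≤ 1 := by rw [hψ]; linarith
  have hpi : ψ < Real.pi / 2 := by linarith [Real.pi_gt_three]
  have hcψ : 0 < Real.cos ψ := Real.cos_pos_of_mem_Ioo ⟨by linarith, hpi⟩
  have hsψ : 0 < Real.sin ψ := Real.sin_pos_of_pos_of_lt_pi hψ0 (by linarith)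
  have h3c : P ^ 3 * Real.cos ψ = n ^ 3 - 3 * n * w ^ 2 := by
    rw [hψ, Real.cos_three_mul]
    have : P ^ 3 * (4 * Real.cos φ ^ 3 - 3 * Real.cos φ) = 4 * (P * Real.cos φ) ^ 3 - 3 * P ^ 2 * (P * Real.cos φ) := by ring
    rw [this, hcos, hPsq]; ring
  have h3s : P ^ 3 * Real.sin ψ = 3 * n ^ 2 * w - w ^ 3 := by
    rw [hψ, Real.sin_three_mul]
    have : P ^ 3 * (3 * Real.sin φ - 4 * Real.sin φ ^ 3) = 3 * P ^ 2 * (P * Real.sin φ) - 4 * (P * Real.sin φ) ^ 3 := by ring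
    rw [this, hsin, hPsq]; ring
  obtain ⟨a, ha⟩ : ∃ a, a = (m : ℝ) + 3 / 2 := ⟨_, rfl⟩
  obtain ⟨b, hbb⟩ : ∃ b, b = 3 * √3 / 2 := ⟨_, rfl⟩
  have ha0 : 0 < a := by rw [ha]; linarith
  have hb0 : 0 < b := by rw [hbb]; positivity
  have hbsq : b ^ 2 = 27 / 4 := by rw [hbb]; nlinarith [sq3]
  have hrel : b * Real.cos ψ = a * Real.sin ψ := by
    have hP3 : 0 < P ^ 3 := by positivity
    apply mul_left_cancel₀ hP3.ne'
    have : P ^ 3 * (b * Real.cos ψ) - P ^ 3 * (a * Real.sin ψ) = b * (P ^ 3 * Real.cos ψ) - a * (P ^ 3 * Real.sin ψ) := by ring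
    rw [h3c, h3s] at this
    have h2 : b * (n ^ 3 - 3 * n * w ^ 2) - a * (3 * n ^ 2 * w - w ^ 3) = 0 := by
      rw [ha, hbb, hn, hw]
      have hq : √3 ^ 2 = 3 := by rw [pow_two]; exact sq3
      have hq3 : √3 ^ 3 = 3 * √3 := by rw [pow_succ, hq]
      ring_nf
      simp only [hq3]
      ring_nf
      linear_combination (-(3 * √3 / 2)) * hroot
    linarith
  obtain ⟨S, hS⟩ : ∃ S, S = a * Real.cos ψ + b * Real.sin ψ := ⟨_, rfl⟩
  have hS0 : 0 < S := by rw [hS]; positivity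
  have hcs := Real.sin_sq_add_cos_sq ψ
  have hSc : S * Real.cos ψ = a := by
    rw [hS]; linear_combination Real.sin ψ * hrel + a * hcs
  have hSs : S * Real.sin ψ = b := by
    rw [hS]; linear_combination - Real.cos ψ * hrel + b * hcs
  have k1 : ψ * a ≤ b := by
    have ht := Real.lt_tan hψ0 hpi
    rw [Real.tan_eq_sin_div_cos, lt_div_iff₀ hcψ] at ht
    rw [← hSc, ← hSs]
    have := mul_le_mul_of_nonneg_left ht.le hS0.le
    linarith
  have k2 : S * ψ ^ 2 * a ≤ 27 / 4 := by
    have := sin_cos_ineq ψ hψ0 hψ1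
    rw [← hSc, ← hbsq, ← hSs]
    have := mul_le_mul_of_nonneg_left this (sq_nonneg S)
    linarith
  -- the imaginary part
  have e1 : om * om * θ - (1 : ℝ) = -(P : ℂ) * Complex.exp (-(φ : ℂ) * Complex.I) := by
    rw [om_sq, exp_polar_neg]
    apply Complex.ext
    · simp [om]; rw [hcos, hn]; ring
    · simp [om]; rw [hsin, hw]; ring
  have e2 : al m = S * Complex.exp ((ψ : ℂ) * Complex.I) := by
    rw [exp_polar]
    apply Complex.ext
    · simp [al]; rw [hSc, ha]
    · simp [al]; rw [hSs, hbb]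
  have e3 : al' m = S * Complex.exp (-(ψ : ℂ) * Complex.I) := by
    rw [exp_polar_neg]
    apply Complex.ext
    · simp [al']; rw [hSc, ha]
    · simp [al']; rw [hSs, hbb]
  have e4 : ((om * om * θ - (1 : ℝ)) * AA (al m) (al' m) r).im = P * S ^ r * RR r ψ := by
    unfold AA RR
    rw [mul_sum, Complex.im_sum, mul_sum]
    refine sum_congr rfl fun k hk => ?_
    rw [mem_range] at hk
    have hk' : k ≤ r := by omega
    have : (om * om * θ - (1 : ℝ)) * ((co r k : ℂ) * al m ^ k * al' m ^ (r - k))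
        = ((-(P * S ^ r * co r k) : ℝ) : ℂ) * Complex.exp (((-((r + 1 / 3 - 2 * k) * ψ) : ℝ) : ℂ) * Complex.I) := by
      rw [e1, e2, e3, mul_pow, mul_pow, ← Complex.exp_nat_mul, ← Complex.exp_nat_mul]
      have h1 : (S : ℂ) ^ r = S ^ k * S ^ (r - k) := by rw [← pow_add]; congr 1; omega
      have h2 : Complex.exp (((-((r + 1 / 3 - 2 * k) * ψ) : ℝ) : ℂ) * Complex.I)
        = Complex.exp (-(φ : ℂ) * Complex.I) * Complex.exp ((k : ℂ) * ((ψ : ℂ) * Complex.I))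
          * Complex.exp (((r - k : ℕ) : ℂ) * (-(ψ : ℂ) * Complex.I)) := by
        rw [← Complex.exp_add, ← Complex.exp_add]
        congr 1
        rw [hψ]
        push_cast [Nat.cast_sub hk']
        ring
      rw [h2]
      push_cast
      rw [h1]
      ring
    rw [this, Complex.im_ofReal_mul, Complex.exp_ofReal_mul_I_im, Real.sin_neg]
    ring
  have hG : (0 : ℝ) < GG r := by exact_mod_cast GG_pos r
  unfold LL
  rw [e4, abs_mul, abs_mul, abs_of_nonneg (by positivity : (0 : ℝ) ≤ 2 / (√3 * GG r)),
    abs_of_nonneg (by positivity : (0 : ℝ) ≤ P * S ^ r)]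
  have hR := RR_bound r ψ hψ0.le
  have hC0 : 0 ≤ CC r := by unfold CC; positivity
  have k3 : S * ψ ^ 2 ≤ 27 / 4 / a := by rw [le_div_iff₀ ha0]; exact k2
  have k4 : ψ ≤ b / a := by rw [le_div_iff₀ ha0]; exact k1
  calc P * S ^ r * |RR r ψ| * (2 / (√3 * GG r))
      ≤ 1 * S ^ r * (CC r * ψ ^ (2 * r + 1)) * (2 / (√3 * GG r)) := by gcongr
    _ = (S * ψ ^ 2) ^ r * ψ * CC r * (2 / (√3 * GG r)) := by rw [mul_pow, ← pow_mul]; ring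
    _ ≤ (27 / 4 / a) ^ r * (b / a) * CC r * (2 / (√3 * GG r)) := by gcongr
    _ = _ := by
      rw [← ha, hbb, CC, div_pow, div_pow]
      field_simp
      rw [pow_succ]

theorem exp83_lt : Real.exp 0.83 < 2.29332 := by
  have h := Real.exp_bound' (x := 0.83) (by norm_num) (by norm_num) (n := 10) (by norm_num)
  refine h.trans_lt ?_
  norm_num [Finset.sum_range_succ, Nat.factorial]

theorem exp83_gt : 2.2933 < Real.exp 0.83 := by
  have h := Real.sum_le_exp_of_nonneg (x := 0.83) (by norm_num) 10
  refine lt_of_lt_of_le ?_ h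
  norm_num [Finset.sum_range_succ, Nat.factorial]

theorem exp13_gt : 3.6692 < Real.exp 1.3 := by
  have h := Real.sum_le_exp_of_nonneg (x := 1.3) (by norm_num) 12
  refine lt_of_lt_of_le ?_ h
  norm_num [Finset.sum_range_succ, Nat.factorial]

theorem exp13_lt : Real.exp 1.3 < 4 := by
  have h := Real.exp_bound' (x := 0.65) (by norm_num) (by norm_num) (n := 5) (by norm_num)
  have h2 : Real.exp 0.65 < 2 := by
    refine h.trans_lt ?_
    norm_num [Finset.sum_range_succ, Nat.factorial]
  have : Real.exp 1.3 = Real.exp 0.65 * Real.exp 0.65 := by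
    rw [← Real.exp_add]; norm_num
  rw [this]
  nlinarith [Real.exp_pos 0.65]

theorem part_ii (m : ℤ) (hm : 30 ≤ m) (Λ : ℤ) (hΛ : 0 < Λ) (θ : ℝ)
    (hroot : θ ^ 3 - (m : ℝ) * θ ^ 2 - ((m : ℝ) + 3) * θ - 1 = 0)
    (hθl : -(1 / 2) < θ) (hθr : θ < 0)
    (x y : ℤ)
    (hi : (y = 1 ∨
        (|(x : ℝ) / (y : ℝ) - θ| < (Λ : ℝ) / ((y : ℝ) ^ 3 * ((m : ℝ) + 1)) ∧ m + 2 ≤ y)))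
    (Ha : ∀ r : ℕ, 1 ≤ r → 27 ^ r * (r.factorial : ℝ) ^ 2 / (2 * r + 1).factorial
      ≤ GG r * (1.295 * Real.exp 1.3 ^ (r + 1)))
    (Hb : ∀ r : ℕ, 1 ≤ r → ((2 * r).choose r : ℝ) * (2 / √3) ≤ GG r * (3.802 * Real.exp 0.83 ^ r)) :
      (y : ℝ) ^ ((2 : ℝ) -
          (Real.log (Real.sqrt ((m : ℝ) ^ 2 + 3 * (m : ℝ) + 9)) + 0.83) /
            (Real.log ((m : ℝ) + 3 / 2) - 1.3)) <
        17.78 * (2.59 : ℝ) ^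
            ((Real.log (Real.sqrt ((m : ℝ) ^ 2 + 3 * (m : ℝ) + 9)) + 0.83) /
              (Real.log ((m : ℝ) + 3 / 2) - 1.3)) * (Λ : ℝ) := by
  have hmR : (30 : ℝ) ≤ m := by exact_mod_cast hm
  have hΛR : (1 : ℝ) ≤ Λ := by exact_mod_cast hΛ
  set A := √((m : ℝ) ^ 2 + 3 * (m : ℝ) + 9) with hA
  have hAsq : A ^ 2 = (m : ℝ) ^ 2 + 3 * (m : ℝ) + 9 := Real.sq_sqrt (by positivity)
  have hA0 : 0 ≤ A := Real.sqrt_nonneg _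
  have hA1 : 1 < A := by nlinarith
  have hA2 : A ≤ 1.01958 * (m + 1) := by
    apply le_of_sq_le_sq _ (by positivity)
    rw [hAsq]; nlinarith
  obtain ⟨E, hE⟩ : ∃ E, E = ((m : ℝ) + 3 / 2) / Real.exp 1.3 := ⟨_, rfl⟩
  obtain ⟨Q, hQ⟩ : ∃ Q, Q = A * Real.exp 0.83 := ⟨_, rfl⟩
  have he13 : 0 < Real.exp 1.3 := Real.exp_pos _
  have hE1 : 1 < E := by
    rw [hE, lt_div_iff₀ he13]; linarith [exp13_lt]
  have hE2 : E ≤ m + 3 / 2 := by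
    rw [hE, div_le_iff₀ he13]; nlinarith [exp13_gt]
  have hQ1 : 1 < Q := by rw [hQ]; nlinarith [exp83_gt]
  have hQ2 : Q ≤ 2.29332 * (1.01958 * (m + 1)) := by
    rw [hQ, mul_comm]
    exact mul_le_mul exp83_lt.le hA2 hA0 (by norm_num)
  have hlE : Real.log ((m : ℝ) + 3 / 2) - 1.3 = Real.log E := by
    rw [hE, Real.log_div (by positivity) he13.ne', Real.log_exp]
  have hlQ : Real.log A + 0.83 = Real.log Q := by
    rw [hQ, Real.log_mul (by positivity) (Real.exp_pos _).ne', Real.log_exp]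
  rw [hlE, hlQ]
  obtain ⟨κ, hκ⟩ : ∃ κ, κ = Real.log Q / Real.log E := ⟨_, rfl⟩
  rw [← hκ]
  have hlE0 : 0 < Real.log E := Real.log_pos hE1
  have hlQ0 : 0 < Real.log Q := Real.log_pos hQ1
  have hκ0 : 0 < κ := by rw [hκ]; positivity
  have hEQ : E ^ κ = Q := by
    rw [Real.rpow_def_of_pos (by linarith), hκ, mul_div_cancel₀ _ hlE0.ne', Real.exp_log (by linarith)]
  have h259 : (1 : ℝ) ≤ 2.59 ^ κ := Real.one_le_rpow (by norm_num) hκ0.le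
  rcases hi with hy1 | ⟨hxy, hmy⟩
  · rw [hy1]
    simp only [Int.cast_one, Real.one_rpow]
    nlinarith
  have hyR : (m : ℝ) + 2 ≤ y := by exact_mod_cast hmy
  have hy0 : (0 : ℝ) < y := by linarith
  -- choice of r
  have hex : ∃ r : ℕ, 2.59 * (y : ℝ) ≤ E ^ (r + 1) := by
    obtain ⟨n, hn⟩ := pow_unbounded_of_one_lt (2.59 * (y : ℝ)) hE1
    exact ⟨n, hn.le.trans (pow_le_pow_right₀ hE1.le (Nat.le_succ n))⟩
  classical
  obtain ⟨r, hr1, hr2⟩ : ∃ r : ℕ, 2.59 * (y : ℝ) ≤ E ^ (r + 1) ∧ (∀ s < r, ¬ 2.59 * (y : ℝ) ≤ E ^ (s + 1)) :=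
    ⟨Nat.find hex, Nat.find_spec hex, fun s hs => Nat.find_min hex hs⟩
  have hr : 1 ≤ r := by
    by_contra h
    have : r = 0 := by omega
    rw [this] at hr1
    simp at hr1
    linarith
  have hr3 : E ^ r ≤ 2.59 * (y : ℝ) := by
    have := hr2 (r - 1) (by omega)
    rw [show r - 1 + 1 = r by omega] at this
    linarith
  have hdiff : |(x : ℝ) - θ * y| < Λ / ((y : ℝ) ^ 2 * (m + 1)) := by
    have h1 : (x : ℝ) - θ * y = (x / y - θ) * y := by field_simp
    rw [h1, abs_mul, abs_of_pos hy0]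
    calc _ < (Λ : ℝ) / ((y : ℝ) ^ 3 * ((m : ℝ) + 1)) * y := by gcongr
      _ = _ := by field_simp
  have key : ∀ s : ℕ, r ≤ s → s ≤ r + 1 → LL m s x y ≠ 0 → (y : ℝ) ^ 2 * (m + 1) < 7.604 * Q ^ (r + 1) * Λ := by
    intro s hs1 hs2 hne
    have hG : (0 : ℝ) < GG s := by exact_mod_cast GG_pos s
    have l1 : |LL m s θ 1| * y ≤ 1 / 2 := by
      have h1 := LL_small m hm θ hroot hθl hθr s
      have h2 := Ha s (by omega)
      have h3 : |LL m s θ 1| ≤ 1.295 / E ^ (s + 1) := by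
        refine h1.trans ?_
        rw [hE, div_pow, div_le_iff₀ (by positivity)]
        refine h2.trans (le_of_eq ?_)
        field_simp
      have h4 : E ^ (r + 1) ≤ E ^ (s + 1) := pow_le_pow_right₀ hE1.le (by omega)
      have hEp : 0 < E ^ (s + 1) := by positivity
      calc |LL m s θ 1| * y ≤ 1.295 / E ^ (s + 1) * y := by gcongr
        _ = 1.295 * y / E ^ (s + 1) := by ring
        _ ≤ 1 / 2 := by rw [div_le_iff₀ hEp]; linarith
    have l2 : |LL m s 1 0| ≤ 3.802 * Q ^ (r + 1) := by
      refine (LL_size m s).trans ?_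
      rw [← hA]
      have h2 := Hb s (by omega)
      have h3 : Q ^ s ≤ Q ^ (r + 1) := pow_le_pow_right₀ hQ1.le (by omega)
      calc _ = ((2 * s).choose s : ℝ) * (2 / √3) * (A ^ s / GG s) := by field_simp
        _ ≤ GG s * (3.802 * Real.exp 0.83 ^ s) * (A ^ s / GG s) := by gcongr
        _ = 3.802 * Q ^ s := by rw [hQ, mul_pow]; field_simp
        _ ≤ _ := by gcongr
    have l3 : 1 ≤ |LL m s x y| := by
      obtain ⟨N, hN⟩ := LL_int m s x y
      rw [hN] at hne ⊢
      have : N ≠ 0 := by rintro rfl; simp at hne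
      exact_mod_cast Int.one_le_abs this
    rw [LL_lin m s x y θ] at l3
    have l4 : |y * LL m s θ 1 + (x - θ * y) * LL m s 1 0| ≤ |LL m s θ 1| * y + |x - θ * y| * |LL m s 1 0| := by
      refine (abs_add_le _ _).trans ?_
      rw [abs_mul, abs_mul, abs_of_pos hy0]
      linarith
    have l5 : |x - θ * y| * |LL m s 1 0| ≤ |x - θ * y| * (3.802 * Q ^ (r + 1)) := by gcongr
    have l6 : |x - θ * y| * (3.802 * Q ^ (r + 1)) < Λ / ((y : ℝ) ^ 2 * (m + 1)) * (3.802 * Q ^ (r + 1)) := by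
      gcongr
    have l7 : 1 / 2 < Λ * (3.802 * Q ^ (r + 1)) / ((y : ℝ) ^ 2 * (m + 1)) := by
      rw [mul_div_right_comm]; linarith
    rw [lt_div_iff₀ (by positivity)] at l7
    linarith
  have key2 : (y : ℝ) ^ 2 * (m + 1) < 7.604 * Q ^ (r + 1) * Λ := by
    by_cases h0 : LL m r x y = 0
    · by_cases h1 : LL m (r + 1) x y = 0
      · exact (LL_nonvanish m r x y hy0.ne' h0 h1).elim
      · exact key (r + 1) (by omega) le_rfl h1
    · exact key r le_rfl (by omega) h0
  have hQr : Q ^ r ≤ 2.59 ^ κ * (y : ℝ) ^ κ := by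
    rw [← Real.mul_rpow (by norm_num) hy0.le, ← hEQ, ← Real.rpow_natCast, ← Real.rpow_mul (by linarith), mul_comm κ,
      Real.rpow_mul (by linarith), Real.rpow_natCast]
    exact Real.rpow_le_rpow (by positivity) hr3 hκ0.le
  rw [Real.rpow_sub hy0, Real.rpow_two, div_lt_iff₀ (by positivity)]
  have hm1 : (0 : ℝ) < m + 1 := by linarith
  have hz : (0 : ℝ) < 2.59 ^ κ * (y : ℝ) ^ κ := by positivity
  apply lt_of_mul_lt_mul_right _ hm1.le
  calc (y : ℝ) ^ 2 * (m + 1) < 7.604 * Q ^ (r + 1) * Λ := key2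
    _ = 7.604 * (Q * Q ^ r) * Λ := by rw [pow_succ']
    _ ≤ 7.604 * (2.29332 * (1.01958 * (m + 1)) * (2.59 ^ κ * (y : ℝ) ^ κ)) * Λ := by gcongr
    _ = (7.604 * 2.29332 * 1.01958) * ((m + 1) * (2.59 ^ κ * (y : ℝ) ^ κ) * Λ) := by ring
    _ ≤ 17.78 * ((m + 1) * (2.59 ^ κ * (y : ℝ) ^ κ) * Λ) := by
      gcongr; norm_num
    _ = _ := by ring

/-- If `log G_r` is large enough then both required estimates hold. -/
theorem HaHb_of_log (r : ℕ) (h : 0.6096 * (r : ℝ) ≤ Real.log (GG r)) :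
    (27 ^ r * (r.factorial : ℝ) ^ 2 / (2 * r + 1).factorial ≤ GG r * (1.295 * Real.exp 1.3 ^ (r + 1))) ∧
    (((2 * r).choose r : ℝ) * (2 / √3) ≤ GG r * (3.802 * Real.exp 0.83 ^ r)) := by
  have hG : (0 : ℝ) < GG r := by exact_mod_cast GG_pos r
  have hG2 : Real.exp 0.6096 ^ r ≤ GG r := by
    rw [← Real.exp_nat_mul, ← Real.exp_log hG]
    apply Real.exp_le_exp.2; linarith
  have e1 : (6.75 : ℝ) ≤ Real.exp 0.6096 * Real.exp 1.3 := by
    rw [← Real.exp_add]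
    have h := Real.sum_le_exp_of_nonneg (x := 0.6096 + 1.3) (by norm_num) 16
    refine le_trans ?_ h
    norm_num [Finset.sum_range_succ, Nat.factorial]
  have e2 : (4 : ℝ) ≤ Real.exp 0.6096 * Real.exp 0.83 := by
    rw [← Real.exp_add]
    have h := Real.sum_le_exp_of_nonneg (x := 0.6096 + 0.83) (by norm_num) 12
    refine le_trans ?_ h
    norm_num [Finset.sum_range_succ, Nat.factorial]
  constructor
  · have k1 : (27 : ℝ) ^ r * (r.factorial : ℝ) ^ 2 / (2 * r + 1).factorial ≤ 6.75 ^ r := by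
      have : ∀ r : ℕ, (4 : ℝ) ^ r * (r.factorial : ℝ) ^ 2 ≤ (2 * r + 1).factorial := by
        intro r
        induction r with
        | zero => simp
        | succ r ih =>
          rw [show 2 * (r + 1) + 1 = 2 * r + 1 + 1 + 1 by ring, Nat.factorial_succ (2 * r + 1 + 1),
            Nat.factorial_succ (2 * r + 1), Nat.factorial_succ r]
          push_cast
          have h1 : (4 : ℝ) ^ (r + 1) * ((r + 1) * r.factorial) ^ 2 = (4 * (r + 1) ^ 2) * (4 ^ r * (r.factorial : ℝ) ^ 2) := by ring
          rw [h1]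
          have h2 : (0 : ℝ) ≤ (2 * r + 1).factorial := by positivity
          have h3 : (4 * ((r : ℝ) + 1) ^ 2) ≤ ((2 * r + 1 + 1 + 1) * (2 * r + 1 + 1)) := by nlinarith [(Nat.cast_nonneg r : (0 : ℝ) ≤ r)]
          calc _ ≤ ((2 * (r : ℝ) + 1 + 1 + 1) * (2 * r + 1 + 1)) * (2 * r + 1).factorial := by gcongr
            _ = _ := by ring
      rw [div_le_iff₀ (by positivity)]
      calc (27 : ℝ) ^ r * (r.factorial : ℝ) ^ 2 = 6.75 ^ r * (4 ^ r * (r.factorial : ℝ) ^ 2) := by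
            rw [← mul_assoc, ← mul_pow]; norm_num
        _ ≤ _ := by gcongr; exact this r
    refine k1.trans ?_
    have k2 : (6.75 : ℝ) ^ r ≤ (Real.exp 0.6096 * Real.exp 1.3) ^ r := by gcongr
    rw [mul_pow] at k2
    have k3 : 1 ≤ 1.295 * Real.exp 1.3 := by linarith [exp13_gt]
    have k4 : 0 < Real.exp 1.3 ^ r := by positivity
    calc (6.75 : ℝ) ^ r ≤ Real.exp 0.6096 ^ r * Real.exp 1.3 ^ r := k2
      _ ≤ GG r * Real.exp 1.3 ^ r := by gcongr
      _ ≤ GG r * Real.exp 1.3 ^ r * (1.295 * Real.exp 1.3) := le_mul_of_one_le_right (by positivity) k3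
      _ = _ := by ring
  · have k1 : ((2 * r).choose r : ℝ) ≤ 4 ^ r := by
      have := Nat.choose_le_two_pow (2 * r) r
      rw [pow_mul] at this
      exact_mod_cast this
    have k2 : (4 : ℝ) ^ r ≤ (Real.exp 0.6096 * Real.exp 0.83) ^ r := by gcongr
    rw [mul_pow] at k2
    have k3 : 2 / √3 ≤ (2 : ℝ) := by
      rw [div_le_iff₀ (by positivity)]
      nlinarith [Real.one_le_sqrt.2 (by norm_num : (1 : ℝ) ≤ 3)]
    calc ((2 * r).choose r : ℝ) * (2 / √3) ≤ 4 ^ r * 3.802 := by gcongr; linarith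
      _ ≤ Real.exp 0.6096 ^ r * Real.exp 0.83 ^ r * 3.802 := by gcongr
      _ ≤ GG r * Real.exp 0.83 ^ r * 3.802 := by gcongr
      _ = _ := by ring

theorem GG_ge_set (r : ℕ) (s : Finset ℕ)
    (hs : ∀ n ∈ s, IsPrimePow n ∧ ¬ 3 ∣ n ∧ 2 * n ≤ 3 * (r % n) + 1) : ∏ n ∈ s, n.minFac ≤ GG r := by
  unfold GG
  apply Finset.prod_le_prod_of_subset_of_one_le'
  · intro n hn
    rw [mem_filter, mem_range]
    refine ⟨?_, hs n hn⟩
    have h1 := (hs n hn).2.2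
    have h2 := Nat.mod_le r n
    omega
  · intro n _ _
    exact Nat.minFac_pos n

theorem prime_of_gcd (p k : ℕ) (h1 : 1 < p) (h2 : p < (k + 1) ^ 2) (h3 : Nat.gcd p k.factorial = 1) : p.Prime := by
  by_contra hp
  have h4 := Nat.minFac_sq_le_self (by omega : 0 < p) hp
  have h5 : p.minFac ≤ k := by
    by_contra h
    have : k + 1 ≤ p.minFac := by omega
    have := Nat.pow_le_pow_left this 2
    omega
  have h6 : p.minFac ∣ k.factorial := Nat.dvd_factorial (Nat.minFac_pos p) h5
  have h7 : p.minFac ∣ 1 := h3 ▸ Nat.dvd_gcd (Nat.minFac_dvd p) h6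
  have := Nat.minFac_prime (by omega : p ≠ 1)
  exact this.one_lt.ne' (Nat.dvd_one.1 h7)

/-- product of the elements of a list selected by a test -/
def selProd (c : ℕ → Bool) (f : ℕ → ℕ) : List ℕ → ℕ
  | [] => 1
  | p :: t => bif c p then f p * selProd c f t else selProd c f t

/-- the same for a list of lists -/
def selProd2 (c : ℕ → Bool) (f : ℕ → ℕ) : List (List ℕ) → ℕ
  | [] => 1
  | l :: t => selProd c f l * selProd2 c f t

theorem selProd_eq (c : ℕ → Bool) (f : ℕ → ℕ) (l : List ℕ) : selProd c f l = ((l.filter c).map f).prod := by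
  induction l with
  | nil => rfl
  | cons p t ih =>
    rw [selProd, ih]
    cases h : c p <;> simp [h]

theorem selProd2_eq (c : ℕ → Bool) (f : ℕ → ℕ) (l : List (List ℕ)) :
    selProd2 c f l = ((l.flatten.filter c).map f).prod := by
  induction l with
  | nil => rfl
  | cons p t ih =>
    rw [selProd2, ih, selProd_eq]
    simp

theorem GG_ge_list (r : ℕ) (c : ℕ → Bool) (l : List ℕ) (f : ℕ → ℕ) (hl : l.Nodup)
    (hf : ∀ n ∈ l, f n = n.minFac)
    (hs : ∀ n ∈ l, c n = true → IsPrimePow n ∧ ¬ 3 ∣ n ∧ 2 * n ≤ 3 * (r % n) + 1) :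
    ((l.filter c).map f).prod ≤ GG r := by
  have h1 := GG_ge_set r (l.filter c).toFinset (by
    intro n hn
    rw [List.mem_toFinset, List.mem_filter] at hn
    exact hs n hn.1 hn.2)
  rw [List.prod_toFinset _ (hl.filter _)] at h1
  refine le_trans (le_of_eq ?_) h1
  congr 1
  apply List.map_congr_left
  intro n hn
  exact hf n (List.mem_filter.1 hn).1

/-- `16!` and `196!` -/
def fac16 : ℕ := 20922789888000

/-- `196!` -/
def fac196 : ℕ := 508012211086704676250273578534744855832729752494702698292997143104359057480013603705540137242115195719262628671043031667501252088161309228461647972823682280495348903461291560889483687823263915860291345617137392657194686983749887501702176113098676677779711031060019608283576803094698692188285748113739606947612227692134400000000000000000000000000000000000000000000000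

set_option exponentiation.threshold 100000 in
theorem fac16_eq : Nat.factorial 16 = fac16 := by decide +kernel

theorem fac196_eq : Nat.factorial 196 = fac196 := by decide +kernel

/-- primality test, valid below 38809 -/
def isP (p : ℕ) : Bool :=
  (Nat.beq p 2 || Nat.beq p 3 || Nat.beq p 5 || Nat.beq p 7 || Nat.beq p 11 || Nat.beq p 13) ||
  (Nat.blt 1 p && Nat.blt p 289 && Nat.beq (Nat.gcd p fac16) 1) ||
  (Nat.blt 1 p && Nat.blt p 38809 && Nat.beq (Nat.gcd p fac196) 1)

theorem isP_prime (p : ℕ) (h : isP p = true) : p.Prime := by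
  unfold isP at h
  simp only [Bool.or_eq_true, Bool.and_eq_true, Nat.beq_eq, Nat.blt_eq] at h
  rcases h with (h | ⟨⟨h1, h2⟩, h3⟩) | ⟨⟨h1, h2⟩, h3⟩
  · rcases h with ((((h | h) | h) | h) | h) | h <;> rw [h] <;> norm_num
  · exact prime_of_gcd p 16 h1 h2 (by rw [fac16_eq]; exact h3)
  · exact prime_of_gcd p 196 h1 h2 (by rw [fac196_eq]; exact h3)

/-- checks that a list increases and satisfies a test -/
def incr (c : ℕ → Bool) : ℕ → List ℕ → Bool
  | _, [] => true
  | a, p :: t => Nat.blt a p && c p && incr c p t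

theorem incr_spec (c : ℕ → Bool) (a : ℕ) (l : List ℕ) (h : incr c a l = true) :
    l.Nodup ∧ ∀ p ∈ l, a < p ∧ c p = true := by
  induction l generalizing a with
  | nil => simp
  | cons p t ih =>
    simp only [incr, Bool.and_eq_true, Nat.blt_eq] at h
    obtain ⟨⟨h1, h2⟩, h3⟩ := h
    obtain ⟨k1, k2⟩ := ih p h3
    refine ⟨List.nodup_cons.2 ⟨fun hp => lt_irrefl _ (k2 p hp).1, k1⟩, ?_⟩
    intro q hq
    rcases List.mem_cons.1 hq with rfl | hq
    · exact ⟨h1, h2⟩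
    · exact ⟨h1.trans (k2 q hq).1, (k2 q hq).2⟩

/-- prime powers below 200, powers of 3 excluded -/
def smallTab : List ℕ := [
  2, 4, 5, 7, 8, 11, 13, 16, 17, 19, 23, 25, 29, 31, 32, 37, 41, 43, 47, 49, 53, 59, 61, 64, 67,
  71, 73, 79, 83, 89, 97, 101, 103, 107, 109, 113, 121, 125, 127, 128, 131, 137, 139, 149, 151,
  157, 163, 167, 169, 173, 179, 181, 191, 193, 197, 199]

/-- smallest prime factor on `smallTab` -/
def mf (n : ℕ) : ℕ :=
  bif Nat.beq (Nat.gcd n 2) 2 then 2 else bif Nat.beq (Nat.gcd n 5) 5 then 5 else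
  bif Nat.beq n 49 then 7 else bif Nat.beq n 121 then 11 else bif Nat.beq n 169 then 13 else n

/-- test for `smallTab` -/
def smallT (n : ℕ) : Bool :=
  isP (mf n) && Nat.blt 0 (n % 3) && (Nat.beq n (mf n) || Nat.beq n (mf n ^ 2) || Nat.beq n (mf n ^ 3) ||
    Nat.beq n (mf n ^ 4) || Nat.beq n (mf n ^ 5) || Nat.beq n (mf n ^ 6) || Nat.beq n (mf n ^ 7))

theorem smallT_spec (n : ℕ) (h : smallT n = true) : IsPrimePow n ∧ ¬ 3 ∣ n ∧ mf n = n.minFac := by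
  simp only [smallT, Bool.or_eq_true, Bool.and_eq_true, Nat.beq_eq, Nat.blt_eq] at h
  obtain ⟨⟨h1, h2⟩, h3⟩ := h
  have hp := isP_prime _ h1
  generalize mf n = p at *
  have : ∃ k, k ≠ 0 ∧ n = p ^ k := by
    rcases h3 with (((((h3 | h3) | h3) | h3) | h3) | h3) | h3
    · exact ⟨1, by norm_num, by rw [h3, pow_one]⟩
    all_goals exact ⟨_, by decide, h3⟩
  obtain ⟨k, hk, hn⟩ := this
  refine ⟨?_, by omega, ?_⟩
  · rw [hn]; exact hp.isPrimePow.pow hk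
  · rw [hn]; exact (hp.pow_minFac hk).symm

theorem smallTab_ok : incr smallT 0 smallTab = true := by decide +kernel

/-- selection test for a single `r` -/
def selR (r n : ℕ) : Bool := Nat.ble (2 * n) (3 * (r % n) + 1)

/-- numerical test for a single `r` -/
def numR (r : ℕ) : Bool :=
  Nat.ble (27 ^ r * r.factorial ^ 2 * 1000 * 10000 ^ (r + 1))
    (selProd (selR r) mf smallTab * 1295 * 36692 ^ (r + 1) * (2 * r + 1).factorial) &&
  Nat.ble ((2 * r).factorial * 11548 * 10000 ^ r)
    (selProd (selR r) mf smallTab * 38020 * 22933 ^ r * r.factorial ^ 2)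

/-- all `r < n`, `r ≥ 1` -/
def allR : ℕ → Bool
  | 0 => true
  | n + 1 => numR (n + 1) && allR n

theorem allR_spec (n : ℕ) (h : allR n = true) (r : ℕ) (h1 : 1 ≤ r) (h2 : r ≤ n) : numR r = true := by
  induction n with
  | zero => omega
  | succ n ih =>
    simp only [allR, Bool.and_eq_true] at h
    rcases Nat.lt_or_ge n r with h3 | h3
    · rw [show r = n + 1 by omega]; exact h.1
    · exact ih h.2 h3

theorem allR_ok : allR 129 = true := by decide +kernel

theorem GG_ge_small (r : ℕ) : selProd (selR r) mf smallTab ≤ GG r := by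
  obtain ⟨h1, h2⟩ := incr_spec _ _ _ smallTab_ok
  rw [selProd_eq]
  apply GG_ge_list r (selR r) smallTab mf h1
  · intro n hn
    exact (smallT_spec n (h2 n hn).2).2.2
  · intro n hn hc
    obtain ⟨k1, k2, k3⟩ := smallT_spec n (h2 n hn).2
    exact ⟨k1, k2, Nat.le_of_ble_eq_true hc⟩

theorem HaHb_small (r : ℕ) (h1 : 1 ≤ r) (h2 : r ≤ 129) :
    (27 ^ r * (r.factorial : ℝ) ^ 2 / (2 * r + 1).factorial ≤ GG r * (1.295 * Real.exp 1.3 ^ (r + 1))) ∧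
    (((2 * r).choose r : ℝ) * (2 / √3) ≤ GG r * (3.802 * Real.exp 0.83 ^ r)) := by
  have hn := allR_spec 129 allR_ok r h1 h2
  have hg := GG_ge_small r
  simp only [numR, Bool.and_eq_true, Nat.ble_eq] at hn
  obtain ⟨ha, hb⟩ := hn
  generalize selProd (selR r) mf smallTab = g at *
  have hgR : (g : ℝ) ≤ GG r := by exact_mod_cast hg
  have haR : (27 : ℝ) ^ r * (r.factorial : ℝ) ^ 2 * 1000 * 10000 ^ (r + 1) ≤
      g * 1295 * 36692 ^ (r + 1) * (2 * r + 1).factorial := by exact_mod_cast ha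
  have hbR : ((2 * r).factorial : ℝ) * 11548 * 10000 ^ r ≤ g * 38020 * 22933 ^ r * (r.factorial : ℝ) ^ 2 := by
    exact_mod_cast hb
  have hG : (0 : ℝ) < GG r := by exact_mod_cast GG_pos r
  constructor
  · rw [div_le_iff₀ (by positivity)]
    have k : (3.6692 : ℝ) ^ (r + 1) ≤ Real.exp 1.3 ^ (r + 1) := by
      gcongr; exact exp13_gt.le
    have k2 : (36692 : ℝ) ^ (r + 1) = 3.6692 ^ (r + 1) * 10000 ^ (r + 1) := by
      rw [← mul_pow]; norm_num
    have k3 : (0 : ℝ) < 1000 * 10000 ^ (r + 1) := by positivity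
    apply le_of_mul_le_mul_right _ k3
    calc _ ≤ (g : ℝ) * 1295 * 36692 ^ (r + 1) * (2 * r + 1).factorial := by linarith
      _ = (g : ℝ) * (1.295 * 3.6692 ^ (r + 1)) * (2 * r + 1).factorial * (1000 * 10000 ^ (r + 1)) := by
        rw [k2]; ring
      _ ≤ _ := by gcongr
  · have k : (2.2933 : ℝ) ^ r ≤ Real.exp 0.83 ^ r := by
      gcongr; exact exp83_gt.le
    have k2 : (22933 : ℝ) ^ r = 2.2933 ^ r * 10000 ^ r := by
      rw [← mul_pow]; norm_num
    have hc : ((2 * r).choose r : ℝ) * (r.factorial : ℝ) ^ 2 = (2 * r).factorial := by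
      have := Nat.choose_mul_factorial_mul_factorial (n := 2 * r) (k := r) (by omega)
      rw [show 2 * r - r = r by omega] at this
      rw [pow_two, ← mul_assoc]
      exact_mod_cast this
    have k3 : 2 / √3 ≤ (1.1548 : ℝ) := by
      rw [div_le_iff₀ (by positivity)]
      have : (1.732 : ℝ) ≤ √3 := Real.le_sqrt_of_sq_le (by norm_num)
      linarith
    have k4 : (0 : ℝ) < 10000 * 10000 ^ r * (r.factorial : ℝ) ^ 2 := by positivity
    apply le_of_mul_le_mul_right _ k4
    calc _ ≤ ((2 * r).choose r : ℝ) * 1.1548 * (10000 * 10000 ^ r * (r.factorial : ℝ) ^ 2) := by gcongr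
      _ = ((2 * r).factorial : ℝ) * 11548 * 10000 ^ r := by rw [← hc]; ring
      _ ≤ (g : ℝ) * 38020 * 22933 ^ r * (r.factorial : ℝ) ^ 2 := hbR
      _ = (g : ℝ) * (3.802 * 2.2933 ^ r) * (10000 * 10000 ^ r * (r.factorial : ℝ) ^ 2) := by rw [k2]; ring
      _ ≤ _ := by gcongr

set_option maxRecDepth 100000 in
/-- the primes below 38114, in chunks -/
def primeTab : List (List ℕ) := [
  [2, 3, 5, 7, 11, 13, 17, 19, 23, 29, 31, 37, 41, 43, 47, 53, 59, 61, 67, 71, 73, 79, 83, 89, 97,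
   101, 103, 107, 109, 113, 127, 131, 137, 139, 149, 151, 157, 163, 167, 173, 179, 181, 191, 193,
   197, 199, 211, 223, 227, 229, 233, 239, 241, 251, 257, 263, 269, 271, 277, 281, 283, 293, 307,
   311],
  [313, 317, 331, 337, 347, 349, 353, 359, 367, 373, 379, 383, 389, 397, 401, 409, 419, 421, 431,
   433, 439, 443, 449, 457, 461, 463, 467, 479, 487, 491, 499, 503, 509, 521, 523, 541, 547, 557,
   563, 569, 571, 577, 587, 593, 599, 601, 607, 613, 617, 619, 631, 641, 643, 647, 653, 659, 661,
   673, 677, 683, 691, 701, 709, 719],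
  [727, 733, 739, 743, 751, 757, 761, 769, 773, 787, 797, 809, 811, 821, 823, 827, 829, 839, 853,
   857, 859, 863, 877, 881, 883, 887, 907, 911, 919, 929, 937, 941, 947, 953, 967, 971, 977, 983,
   991, 997, 1009, 1013, 1019, 1021, 1031, 1033, 1039, 1049, 1051, 1061, 1063, 1069, 1087, 1091,
   1093, 1097, 1103, 1109, 1117, 1123, 1129, 1151, 1153, 1163],
  [1171, 1181, 1187, 1193, 1201, 1213, 1217, 1223, 1229, 1231, 1237, 1249, 1259, 1277, 1279, 1283,
   1289, 1291, 1297, 1301, 1303, 1307, 1319, 1321, 1327, 1361, 1367, 1373, 1381, 1399, 1409, 1423,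
   1427, 1429, 1433, 1439, 1447, 1451, 1453, 1459, 1471, 1481, 1483, 1487, 1489, 1493, 1499, 1511,
   1523, 1531, 1543, 1549, 1553, 1559, 1567, 1571, 1579, 1583, 1597, 1601, 1607, 1609, 1613, 1619],
  [1621, 1627, 1637, 1657, 1663, 1667, 1669, 1693, 1697, 1699, 1709, 1721, 1723, 1733, 1741, 1747,
   1753, 1759, 1777, 1783, 1787, 1789, 1801, 1811, 1823, 1831, 1847, 1861, 1867, 1871, 1873, 1877,
   1879, 1889, 1901, 1907, 1913, 1931, 1933, 1949, 1951, 1973, 1979, 1987, 1993, 1997, 1999, 2003,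
   2011, 2017, 2027, 2029, 2039, 2053, 2063, 2069, 2081, 2083, 2087, 2089, 2099, 2111, 2113, 2129],
  [2131, 2137, 2141, 2143, 2153, 2161, 2179, 2203, 2207, 2213, 2221, 2237, 2239, 2243, 2251, 2267,
   2269, 2273, 2281, 2287, 2293, 2297, 2309, 2311, 2333, 2339, 2341, 2347, 2351, 2357, 2371, 2377,
   2381, 2383, 2389, 2393, 2399, 2411, 2417, 2423, 2437, 2441, 2447, 2459, 2467, 2473, 2477, 2503,
   2521, 2531, 2539, 2543, 2549, 2551, 2557, 2579, 2591, 2593, 2609, 2617, 2621, 2633, 2647, 2657],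
  [2659, 2663, 2671, 2677, 2683, 2687, 2689, 2693, 2699, 2707, 2711, 2713, 2719, 2729, 2731, 2741,
   2749, 2753, 2767, 2777, 2789, 2791, 2797, 2801, 2803, 2819, 2833, 2837, 2843, 2851, 2857, 2861,
   2879, 2887, 2897, 2903, 2909, 2917, 2927, 2939, 2953, 2957, 2963, 2969, 2971, 2999, 3001, 3011,
   3019, 3023, 3037, 3041, 3049, 3061, 3067, 3079, 3083, 3089, 3109, 3119, 3121, 3137, 3163, 3167],
  [3169, 3181, 3187, 3191, 3203, 3209, 3217, 3221, 3229, 3251, 3253, 3257, 3259, 3271, 3299, 3301,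
   3307, 3313, 3319, 3323, 3329, 3331, 3343, 3347, 3359, 3361, 3371, 3373, 3389, 3391, 3407, 3413,
   3433, 3449, 3457, 3461, 3463, 3467, 3469, 3491, 3499, 3511, 3517, 3527, 3529, 3533, 3539, 3541,
   3547, 3557, 3559, 3571, 3581, 3583, 3593, 3607, 3613, 3617, 3623, 3631, 3637, 3643, 3659, 3671],
  [3673, 3677, 3691, 3697, 3701, 3709, 3719, 3727, 3733, 3739, 3761, 3767, 3769, 3779, 3793, 3797,
   3803, 3821, 3823, 3833, 3847, 3851, 3853, 3863, 3877, 3881, 3889, 3907, 3911, 3917, 3919, 3923,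
   3929, 3931, 3943, 3947, 3967, 3989, 4001, 4003, 4007, 4013, 4019, 4021, 4027, 4049, 4051, 4057,
   4073, 4079, 4091, 4093, 4099, 4111, 4127, 4129, 4133, 4139, 4153, 4157, 4159, 4177, 4201, 4211],
  [4217, 4219, 4229, 4231, 4241, 4243, 4253, 4259, 4261, 4271, 4273, 4283, 4289, 4297, 4327, 4337,
   4339, 4349, 4357, 4363, 4373, 4391, 4397, 4409, 4421, 4423, 4441, 4447, 4451, 4457, 4463, 4481,
   4483, 4493, 4507, 4513, 4517, 4519, 4523, 4547, 4549, 4561, 4567, 4583, 4591, 4597, 4603, 4621,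
   4637, 4639, 4643, 4649, 4651, 4657, 4663, 4673, 4679, 4691, 4703, 4721, 4723, 4729, 4733, 4751],
  [4759, 4783, 4787, 4789, 4793, 4799, 4801, 4813, 4817, 4831, 4861, 4871, 4877, 4889, 4903, 4909,
   4919, 4931, 4933, 4937, 4943, 4951, 4957, 4967, 4969, 4973, 4987, 4993, 4999, 5003, 5009, 5011,
   5021, 5023, 5039, 5051, 5059, 5077, 5081, 5087, 5099, 5101, 5107, 5113, 5119, 5147, 5153, 5167,
   5171, 5179, 5189, 5197, 5209, 5227, 5231, 5233, 5237, 5261, 5273, 5279, 5281, 5297, 5303, 5309],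
  [5323, 5333, 5347, 5351, 5381, 5387, 5393, 5399, 5407, 5413, 5417, 5419, 5431, 5437, 5441, 5443,
   5449, 5471, 5477, 5479, 5483, 5501, 5503, 5507, 5519, 5521, 5527, 5531, 5557, 5563, 5569, 5573,
   5581, 5591, 5623, 5639, 5641, 5647, 5651, 5653, 5657, 5659, 5669, 5683, 5689, 5693, 5701, 5711,
   5717, 5737, 5741, 5743, 5749, 5779, 5783, 5791, 5801, 5807, 5813, 5821, 5827, 5839, 5843, 5849],
  [5851, 5857, 5861, 5867, 5869, 5879, 5881, 5897, 5903, 5923, 5927, 5939, 5953, 5981, 5987, 6007,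
   6011, 6029, 6037, 6043, 6047, 6053, 6067, 6073, 6079, 6089, 6091, 6101, 6113, 6121, 6131, 6133,
   6143, 6151, 6163, 6173, 6197, 6199, 6203, 6211, 6217, 6221, 6229, 6247, 6257, 6263, 6269, 6271,
   6277, 6287, 6299, 6301, 6311, 6317, 6323, 6329, 6337, 6343, 6353, 6359, 6361, 6367, 6373, 6379],
  [6389, 6397, 6421, 6427, 6449, 6451, 6469, 6473, 6481, 6491, 6521, 6529, 6547, 6551, 6553, 6563,
   6569, 6571, 6577, 6581, 6599, 6607, 6619, 6637, 6653, 6659, 6661, 6673, 6679, 6689, 6691, 6701,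
   6703, 6709, 6719, 6733, 6737, 6761, 6763, 6779, 6781, 6791, 6793, 6803, 6823, 6827, 6829, 6833,
   6841, 6857, 6863, 6869, 6871, 6883, 6899, 6907, 6911, 6917, 6947, 6949, 6959, 6961, 6967, 6971],
  [6977, 6983, 6991, 6997, 7001, 7013, 7019, 7027, 7039, 7043, 7057, 7069, 7079, 7103, 7109, 7121,
   7127, 7129, 7151, 7159, 7177, 7187, 7193, 7207, 7211, 7213, 7219, 7229, 7237, 7243, 7247, 7253,
   7283, 7297, 7307, 7309, 7321, 7331, 7333, 7349, 7351, 7369, 7393, 7411, 7417, 7433, 7451, 7457,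
   7459, 7477, 7481, 7487, 7489, 7499, 7507, 7517, 7523, 7529, 7537, 7541, 7547, 7549, 7559, 7561],
  [7573, 7577, 7583, 7589, 7591, 7603, 7607, 7621, 7639, 7643, 7649, 7669, 7673, 7681, 7687, 7691,
   7699, 7703, 7717, 7723, 7727, 7741, 7753, 7757, 7759, 7789, 7793, 7817, 7823, 7829, 7841, 7853,
   7867, 7873, 7877, 7879, 7883, 7901, 7907, 7919, 7927, 7933, 7937, 7949, 7951, 7963, 7993, 8009,
   8011, 8017, 8039, 8053, 8059, 8069, 8081, 8087, 8089, 8093, 8101, 8111, 8117, 8123, 8147, 8161],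
  [8167, 8171, 8179, 8191, 8209, 8219, 8221, 8231, 8233, 8237, 8243, 8263, 8269, 8273, 8287, 8291,
   8293, 8297, 8311, 8317, 8329, 8353, 8363, 8369, 8377, 8387, 8389, 8419, 8423, 8429, 8431, 8443,
   8447, 8461, 8467, 8501, 8513, 8521, 8527, 8537, 8539, 8543, 8563, 8573, 8581, 8597, 8599, 8609,
   8623, 8627, 8629, 8641, 8647, 8663, 8669, 8677, 8681, 8689, 8693, 8699, 8707, 8713, 8719, 8731],
  [8737, 8741, 8747, 8753, 8761, 8779, 8783, 8803, 8807, 8819, 8821, 8831, 8837, 8839, 8849, 8861,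
   8863, 8867, 8887, 8893, 8923, 8929, 8933, 8941, 8951, 8963, 8969, 8971, 8999, 9001, 9007, 9011,
   9013, 9029, 9041, 9043, 9049, 9059, 9067, 9091, 9103, 9109, 9127, 9133, 9137, 9151, 9157, 9161,
   9173, 9181, 9187, 9199, 9203, 9209, 9221, 9227, 9239, 9241, 9257, 9277, 9281, 9283, 9293, 9311],
  [9319, 9323, 9337, 9341, 9343, 9349, 9371, 9377, 9391, 9397, 9403, 9413, 9419, 9421, 9431, 9433,
   9437, 9439, 9461, 9463, 9467, 9473, 9479, 9491, 9497, 9511, 9521, 9533, 9539, 9547, 9551, 9587,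
   9601, 9613, 9619, 9623, 9629, 9631, 9643, 9649, 9661, 9677, 9679, 9689, 9697, 9719, 9721, 9733,
   9739, 9743, 9749, 9767, 9769, 9781, 9787, 9791, 9803, 9811, 9817, 9829, 9833, 9839, 9851, 9857],
  [9859, 9871, 9883, 9887, 9901, 9907, 9923, 9929, 9931, 9941, 9949, 9967, 9973, 10007, 10009,
   10037, 10039, 10061, 10067, 10069, 10079, 10091, 10093, 10099, 10103, 10111, 10133, 10139,
   10141, 10151, 10159, 10163, 10169, 10177, 10181, 10193, 10211, 10223, 10243, 10247, 10253,
   10259, 10267, 10271, 10273, 10289, 10301, 10303, 10313, 10321, 10331, 10333, 10337, 10343,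
   10357, 10369, 10391, 10399, 10427, 10429, 10433, 10453, 10457, 10459],
  [10463, 10477, 10487, 10499, 10501, 10513, 10529, 10531, 10559, 10567, 10589, 10597, 10601,
   10607, 10613, 10627, 10631, 10639, 10651, 10657, 10663, 10667, 10687, 10691, 10709, 10711,
   10723, 10729, 10733, 10739, 10753, 10771, 10781, 10789, 10799, 10831, 10837, 10847, 10853,
   10859, 10861, 10867, 10883, 10889, 10891, 10903, 10909, 10937, 10939, 10949, 10957, 10973,
   10979, 10987, 10993, 11003, 11027, 11047, 11057, 11059, 11069, 11071, 11083, 11087],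
  [11093, 11113, 11117, 11119, 11131, 11149, 11159, 11161, 11171, 11173, 11177, 11197, 11213,
   11239, 11243, 11251, 11257, 11261, 11273, 11279, 11287, 11299, 11311, 11317, 11321, 11329,
   11351, 11353, 11369, 11383, 11393, 11399, 11411, 11423, 11437, 11443, 11447, 11467, 11471,
   11483, 11489, 11491, 11497, 11503, 11519, 11527, 11549, 11551, 11579, 11587, 11593, 11597,
   11617, 11621, 11633, 11657, 11677, 11681, 11689, 11699, 11701, 11717, 11719, 11731],
  [11743, 11777, 11779, 11783, 11789, 11801, 11807, 11813, 11821, 11827, 11831, 11833, 11839,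
   11863, 11867, 11887, 11897, 11903, 11909, 11923, 11927, 11933, 11939, 11941, 11953, 11959,
   11969, 11971, 11981, 11987, 12007, 12011, 12037, 12041, 12043, 12049, 12071, 12073, 12097,
   12101, 12107, 12109, 12113, 12119, 12143, 12149, 12157, 12161, 12163, 12197, 12203, 12211,
   12227, 12239, 12241, 12251, 12253, 12263, 12269, 12277, 12281, 12289, 12301, 12323],
  [12329, 12343, 12347, 12373, 12377, 12379, 12391, 12401, 12409, 12413, 12421, 12433, 12437,
   12451, 12457, 12473, 12479, 12487, 12491, 12497, 12503, 12511, 12517, 12527, 12539, 12541,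
   12547, 12553, 12569, 12577, 12583, 12589, 12601, 12611, 12613, 12619, 12637, 12641, 12647,
   12653, 12659, 12671, 12689, 12697, 12703, 12713, 12721, 12739, 12743, 12757, 12763, 12781,
   12791, 12799, 12809, 12821, 12823, 12829, 12841, 12853, 12889, 12893, 12899, 12907],
  [12911, 12917, 12919, 12923, 12941, 12953, 12959, 12967, 12973, 12979, 12983, 13001, 13003,
   13007, 13009, 13033, 13037, 13043, 13049, 13063, 13093, 13099, 13103, 13109, 13121, 13127,
   13147, 13151, 13159, 13163, 13171, 13177, 13183, 13187, 13217, 13219, 13229, 13241, 13249,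
   13259, 13267, 13291, 13297, 13309, 13313, 13327, 13331, 13337, 13339, 13367, 13381, 13397,
   13399, 13411, 13417, 13421, 13441, 13451, 13457, 13463, 13469, 13477, 13487, 13499],
  [13513, 13523, 13537, 13553, 13567, 13577, 13591, 13597, 13613, 13619, 13627, 13633, 13649,
   13669, 13679, 13681, 13687, 13691, 13693, 13697, 13709, 13711, 13721, 13723, 13729, 13751,
   13757, 13759, 13763, 13781, 13789, 13799, 13807, 13829, 13831, 13841, 13859, 13873, 13877,
   13879, 13883, 13901, 13903, 13907, 13913, 13921, 13931, 13933, 13963, 13967, 13997, 13999,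
   14009, 14011, 14029, 14033, 14051, 14057, 14071, 14081, 14083, 14087, 14107, 14143],
  [14149, 14153, 14159, 14173, 14177, 14197, 14207, 14221, 14243, 14249, 14251, 14281, 14293,
   14303, 14321, 14323, 14327, 14341, 14347, 14369, 14387, 14389, 14401, 14407, 14411, 14419,
   14423, 14431, 14437, 14447, 14449, 14461, 14479, 14489, 14503, 14519, 14533, 14537, 14543,
   14549, 14551, 14557, 14561, 14563, 14591, 14593, 14621, 14627, 14629, 14633, 14639, 14653,
   14657, 14669, 14683, 14699, 14713, 14717, 14723, 14731, 14737, 14741, 14747, 14753],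
  [14759, 14767, 14771, 14779, 14783, 14797, 14813, 14821, 14827, 14831, 14843, 14851, 14867,
   14869, 14879, 14887, 14891, 14897, 14923, 14929, 14939, 14947, 14951, 14957, 14969, 14983,
   15013, 15017, 15031, 15053, 15061, 15073, 15077, 15083, 15091, 15101, 15107, 15121, 15131,
   15137, 15139, 15149, 15161, 15173, 15187, 15193, 15199, 15217, 15227, 15233, 15241, 15259,
   15263, 15269, 15271, 15277, 15287, 15289, 15299, 15307, 15313, 15319, 15329, 15331],
  [15349, 15359, 15361, 15373, 15377, 15383, 15391, 15401, 15413, 15427, 15439, 15443, 15451,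
   15461, 15467, 15473, 15493, 15497, 15511, 15527, 15541, 15551, 15559, 15569, 15581, 15583,
   15601, 15607, 15619, 15629, 15641, 15643, 15647, 15649, 15661, 15667, 15671, 15679, 15683,
   15727, 15731, 15733, 15737, 15739, 15749, 15761, 15767, 15773, 15787, 15791, 15797, 15803,
   15809, 15817, 15823, 15859, 15877, 15881, 15887, 15889, 15901, 15907, 15913, 15919],
  [15923, 15937, 15959, 15971, 15973, 15991, 16001, 16007, 16033, 16057, 16061, 16063, 16067,
   16069, 16073, 16087, 16091, 16097, 16103, 16111, 16127, 16139, 16141, 16183, 16187, 16189,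
   16193, 16217, 16223, 16229, 16231, 16249, 16253, 16267, 16273, 16301, 16319, 16333, 16339,
   16349, 16361, 16363, 16369, 16381, 16411, 16417, 16421, 16427, 16433, 16447, 16451, 16453,
   16477, 16481, 16487, 16493, 16519, 16529, 16547, 16553, 16561, 16567, 16573, 16603],
  [16607, 16619, 16631, 16633, 16649, 16651, 16657, 16661, 16673, 16691, 16693, 16699, 16703,
   16729, 16741, 16747, 16759, 16763, 16787, 16811, 16823, 16829, 16831, 16843, 16871, 16879,
   16883, 16889, 16901, 16903, 16921, 16927, 16931, 16937, 16943, 16963, 16979, 16981, 16987,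
   16993, 17011, 17021, 17027, 17029, 17033, 17041, 17047, 17053, 17077, 17093, 17099, 17107,
   17117, 17123, 17137, 17159, 17167, 17183, 17189, 17191, 17203, 17207, 17209, 17231],
  [17239, 17257, 17291, 17293, 17299, 17317, 17321, 17327, 17333, 17341, 17351, 17359, 17377,
   17383, 17387, 17389, 17393, 17401, 17417, 17419, 17431, 17443, 17449, 17467, 17471, 17477,
   17483, 17489, 17491, 17497, 17509, 17519, 17539, 17551, 17569, 17573, 17579, 17581, 17597,
   17599, 17609, 17623, 17627, 17657, 17659, 17669, 17681, 17683, 17707, 17713, 17729, 17737,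
   17747, 17749, 17761, 17783, 17789, 17791, 17807, 17827, 17837, 17839, 17851, 17863],
  [17881, 17891, 17903, 17909, 17911, 17921, 17923, 17929, 17939, 17957, 17959, 17971, 17977,
   17981, 17987, 17989, 18013, 18041, 18043, 18047, 18049, 18059, 18061, 18077, 18089, 18097,
   18119, 18121, 18127, 18131, 18133, 18143, 18149, 18169, 18181, 18191, 18199, 18211, 18217,
   18223, 18229, 18233, 18251, 18253, 18257, 18269, 18287, 18289, 18301, 18307, 18311, 18313,
   18329, 18341, 18353, 18367, 18371, 18379, 18397, 18401, 18413, 18427, 18433, 18439],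
  [18443, 18451, 18457, 18461, 18481, 18493, 18503, 18517, 18521, 18523, 18539, 18541, 18553,
   18583, 18587, 18593, 18617, 18637, 18661, 18671, 18679, 18691, 18701, 18713, 18719, 18731,
   18743, 18749, 18757, 18773, 18787, 18793, 18797, 18803, 18839, 18859, 18869, 18899, 18911,
   18913, 18917, 18919, 18947, 18959, 18973, 18979, 19001, 19009, 19013, 19031, 19037, 19051,
   19069, 19073, 19079, 19081, 19087, 19121, 19139, 19141, 19157, 19163, 19181, 19183],
  [19207, 19211, 19213, 19219, 19231, 19237, 19249, 19259, 19267, 19273, 19289, 19301, 19309,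
   19319, 19333, 19373, 19379, 19381, 19387, 19391, 19403, 19417, 19421, 19423, 19427, 19429,
   19433, 19441, 19447, 19457, 19463, 19469, 19471, 19477, 19483, 19489, 19501, 19507, 19531,
   19541, 19543, 19553, 19559, 19571, 19577, 19583, 19597, 19603, 19609, 19661, 19681, 19687,
   19697, 19699, 19709, 19717, 19727, 19739, 19751, 19753, 19759, 19763, 19777, 19793],
  [19801, 19813, 19819, 19841, 19843, 19853, 19861, 19867, 19889, 19891, 19913, 19919, 19927,
   19937, 19949, 19961, 19963, 19973, 19979, 19991, 19993, 19997, 20011, 20021, 20023, 20029,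
   20047, 20051, 20063, 20071, 20089, 20101, 20107, 20113, 20117, 20123, 20129, 20143, 20147,
   20149, 20161, 20173, 20177, 20183, 20201, 20219, 20231, 20233, 20249, 20261, 20269, 20287,
   20297, 20323, 20327, 20333, 20341, 20347, 20353, 20357, 20359, 20369, 20389, 20393],
  [20399, 20407, 20411, 20431, 20441, 20443, 20477, 20479, 20483, 20507, 20509, 20521, 20533,
   20543, 20549, 20551, 20563, 20593, 20599, 20611, 20627, 20639, 20641, 20663, 20681, 20693,
   20707, 20717, 20719, 20731, 20743, 20747, 20749, 20753, 20759, 20771, 20773, 20789, 20807,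
   20809, 20849, 20857, 20873, 20879, 20887, 20897, 20899, 20903, 20921, 20929, 20939, 20947,
   20959, 20963, 20981, 20983, 21001, 21011, 21013, 21017, 21019, 21023, 21031, 21059],
  [21061, 21067, 21089, 21101, 21107, 21121, 21139, 21143, 21149, 21157, 21163, 21169, 21179,
   21187, 21191, 21193, 21211, 21221, 21227, 21247, 21269, 21277, 21283, 21313, 21317, 21319,
   21323, 21341, 21347, 21377, 21379, 21383, 21391, 21397, 21401, 21407, 21419, 21433, 21467,
   21481, 21487, 21491, 21493, 21499, 21503, 21517, 21521, 21523, 21529, 21557, 21559, 21563,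
   21569, 21577, 21587, 21589, 21599, 21601, 21611, 21613, 21617, 21647, 21649, 21661],
  [21673, 21683, 21701, 21713, 21727, 21737, 21739, 21751, 21757, 21767, 21773, 21787, 21799,
   21803, 21817, 21821, 21839, 21841, 21851, 21859, 21863, 21871, 21881, 21893, 21911, 21929,
   21937, 21943, 21961, 21977, 21991, 21997, 22003, 22013, 22027, 22031, 22037, 22039, 22051,
   22063, 22067, 22073, 22079, 22091, 22093, 22109, 22111, 22123, 22129, 22133, 22147, 22153,
   22157, 22159, 22171, 22189, 22193, 22229, 22247, 22259, 22271, 22273, 22277, 22279],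
  [22283, 22291, 22303, 22307, 22343, 22349, 22367, 22369, 22381, 22391, 22397, 22409, 22433,
   22441, 22447, 22453, 22469, 22481, 22483, 22501, 22511, 22531, 22541, 22543, 22549, 22567,
   22571, 22573, 22613, 22619, 22621, 22637, 22639, 22643, 22651, 22669, 22679, 22691, 22697,
   22699, 22709, 22717, 22721, 22727, 22739, 22741, 22751, 22769, 22777, 22783, 22787, 22807,
   22811, 22817, 22853, 22859, 22861, 22871, 22877, 22901, 22907, 22921, 22937, 22943],
  [22961, 22963, 22973, 22993, 23003, 23011, 23017, 23021, 23027, 23029, 23039, 23041, 23053,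
   23057, 23059, 23063, 23071, 23081, 23087, 23099, 23117, 23131, 23143, 23159, 23167, 23173,
   23189, 23197, 23201, 23203, 23209, 23227, 23251, 23269, 23279, 23291, 23293, 23297, 23311,
   23321, 23327, 23333, 23339, 23357, 23369, 23371, 23399, 23417, 23431, 23447, 23459, 23473,
   23497, 23509, 23531, 23537, 23539, 23549, 23557, 23561, 23563, 23567, 23581, 23593],
  [23599, 23603, 23609, 23623, 23627, 23629, 23633, 23663, 23669, 23671, 23677, 23687, 23689,
   23719, 23741, 23743, 23747, 23753, 23761, 23767, 23773, 23789, 23801, 23813, 23819, 23827,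
   23831, 23833, 23857, 23869, 23873, 23879, 23887, 23893, 23899, 23909, 23911, 23917, 23929,
   23957, 23971, 23977, 23981, 23993, 24001, 24007, 24019, 24023, 24029, 24043, 24049, 24061,
   24071, 24077, 24083, 24091, 24097, 24103, 24107, 24109, 24113, 24121, 24133, 24137],
  [24151, 24169, 24179, 24181, 24197, 24203, 24223, 24229, 24239, 24247, 24251, 24281, 24317,
   24329, 24337, 24359, 24371, 24373, 24379, 24391, 24407, 24413, 24419, 24421, 24439, 24443,
   24469, 24473, 24481, 24499, 24509, 24517, 24527, 24533, 24547, 24551, 24571, 24593, 24611,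
   24623, 24631, 24659, 24671, 24677, 24683, 24691, 24697, 24709, 24733, 24749, 24763, 24767,
   24781, 24793, 24799, 24809, 24821, 24841, 24847, 24851, 24859, 24877, 24889, 24907],
  [24917, 24919, 24923, 24943, 24953, 24967, 24971, 24977, 24979, 24989, 25013, 25031, 25033,
   25037, 25057, 25073, 25087, 25097, 25111, 25117, 25121, 25127, 25147, 25153, 25163, 25169,
   25171, 25183, 25189, 25219, 25229, 25237, 25243, 25247, 25253, 25261, 25301, 25303, 25307,
   25309, 25321, 25339, 25343, 25349, 25357, 25367, 25373, 25391, 25409, 25411, 25423, 25439,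
   25447, 25453, 25457, 25463, 25469, 25471, 25523, 25537, 25541, 25561, 25577, 25579],
  [25583, 25589, 25601, 25603, 25609, 25621, 25633, 25639, 25643, 25657, 25667, 25673, 25679,
   25693, 25703, 25717, 25733, 25741, 25747, 25759, 25763, 25771, 25793, 25799, 25801, 25819,
   25841, 25847, 25849, 25867, 25873, 25889, 25903, 25913, 25919, 25931, 25933, 25939, 25943,
   25951, 25969, 25981, 25997, 25999, 26003, 26017, 26021, 26029, 26041, 26053, 26083, 26099,
   26107, 26111, 26113, 26119, 26141, 26153, 26161, 26171, 26177, 26183, 26189, 26203],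
  [26209, 26227, 26237, 26249, 26251, 26261, 26263, 26267, 26293, 26297, 26309, 26317, 26321,
   26339, 26347, 26357, 26371, 26387, 26393, 26399, 26407, 26417, 26423, 26431, 26437, 26449,
   26459, 26479, 26489, 26497, 26501, 26513, 26539, 26557, 26561, 26573, 26591, 26597, 26627,
   26633, 26641, 26647, 26669, 26681, 26683, 26687, 26693, 26699, 26701, 26711, 26713, 26717,
   26723, 26729, 26731, 26737, 26759, 26777, 26783, 26801, 26813, 26821, 26833, 26839],
  [26849, 26861, 26863, 26879, 26881, 26891, 26893, 26903, 26921, 26927, 26947, 26951, 26953,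
   26959, 26981, 26987, 26993, 27011, 27017, 27031, 27043, 27059, 27061, 27067, 27073, 27077,
   27091, 27103, 27107, 27109, 27127, 27143, 27179, 27191, 27197, 27211, 27239, 27241, 27253,
   27259, 27271, 27277, 27281, 27283, 27299, 27329, 27337, 27361, 27367, 27397, 27407, 27409,
   27427, 27431, 27437, 27449, 27457, 27479, 27481, 27487, 27509, 27527, 27529, 27539],
  [27541, 27551, 27581, 27583, 27611, 27617, 27631, 27647, 27653, 27673, 27689, 27691, 27697,
   27701, 27733, 27737, 27739, 27743, 27749, 27751, 27763, 27767, 27773, 27779, 27791, 27793,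
   27799, 27803, 27809, 27817, 27823, 27827, 27847, 27851, 27883, 27893, 27901, 27917, 27919,
   27941, 27943, 27947, 27953, 27961, 27967, 27983, 27997, 28001, 28019, 28027, 28031, 28051,
   28057, 28069, 28081, 28087, 28097, 28099, 28109, 28111, 28123, 28151, 28163, 28181],
  [28183, 28201, 28211, 28219, 28229, 28277, 28279, 28283, 28289, 28297, 28307, 28309, 28319,
   28349, 28351, 28387, 28393, 28403, 28409, 28411, 28429, 28433, 28439, 28447, 28463, 28477,
   28493, 28499, 28513, 28517, 28537, 28541, 28547, 28549, 28559, 28571, 28573, 28579, 28591,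
   28597, 28603, 28607, 28619, 28621, 28627, 28631, 28643, 28649, 28657, 28661, 28663, 28669,
   28687, 28697, 28703, 28711, 28723, 28729, 28751, 28753, 28759, 28771, 28789, 28793],
  [28807, 28813, 28817, 28837, 28843, 28859, 28867, 28871, 28879, 28901, 28909, 28921, 28927,
   28933, 28949, 28961, 28979, 29009, 29017, 29021, 29023, 29027, 29033, 29059, 29063, 29077,
   29101, 29123, 29129, 29131, 29137, 29147, 29153, 29167, 29173, 29179, 29191, 29201, 29207,
   29209, 29221, 29231, 29243, 29251, 29269, 29287, 29297, 29303, 29311, 29327, 29333, 29339,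
   29347, 29363, 29383, 29387, 29389, 29399, 29401, 29411, 29423, 29429, 29437, 29443],
  [29453, 29473, 29483, 29501, 29527, 29531, 29537, 29567, 29569, 29573, 29581, 29587, 29599,
   29611, 29629, 29633, 29641, 29663, 29669, 29671, 29683, 29717, 29723, 29741, 29753, 29759,
   29761, 29789, 29803, 29819, 29833, 29837, 29851, 29863, 29867, 29873, 29879, 29881, 29917,
   29921, 29927, 29947, 29959, 29983, 29989, 30011, 30013, 30029, 30047, 30059, 30071, 30089,
   30091, 30097, 30103, 30109, 30113, 30119, 30133, 30137, 30139, 30161, 30169, 30181],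
  [30187, 30197, 30203, 30211, 30223, 30241, 30253, 30259, 30269, 30271, 30293, 30307, 30313,
   30319, 30323, 30341, 30347, 30367, 30389, 30391, 30403, 30427, 30431, 30449, 30467, 30469,
   30491, 30493, 30497, 30509, 30517, 30529, 30539, 30553, 30557, 30559, 30577, 30593, 30631,
   30637, 30643, 30649, 30661, 30671, 30677, 30689, 30697, 30703, 30707, 30713, 30727, 30757,
   30763, 30773, 30781, 30803, 30809, 30817, 30829, 30839, 30841, 30851, 30853, 30859],
  [30869, 30871, 30881, 30893, 30911, 30931, 30937, 30941, 30949, 30971, 30977, 30983, 31013,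
   31019, 31033, 31039, 31051, 31063, 31069, 31079, 31081, 31091, 31121, 31123, 31139, 31147,
   31151, 31153, 31159, 31177, 31181, 31183, 31189, 31193, 31219, 31223, 31231, 31237, 31247,
   31249, 31253, 31259, 31267, 31271, 31277, 31307, 31319, 31321, 31327, 31333, 31337, 31357,
   31379, 31387, 31391, 31393, 31397, 31469, 31477, 31481, 31489, 31511, 31513, 31517],
  [31531, 31541, 31543, 31547, 31567, 31573, 31583, 31601, 31607, 31627, 31643, 31649, 31657,
   31663, 31667, 31687, 31699, 31721, 31723, 31727, 31729, 31741, 31751, 31769, 31771, 31793,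
   31799, 31817, 31847, 31849, 31859, 31873, 31883, 31891, 31907, 31957, 31963, 31973, 31981,
   31991, 32003, 32009, 32027, 32029, 32051, 32057, 32059, 32063, 32069, 32077, 32083, 32089,
   32099, 32117, 32119, 32141, 32143, 32159, 32173, 32183, 32189, 32191, 32203, 32213],
  [32233, 32237, 32251, 32257, 32261, 32297, 32299, 32303, 32309, 32321, 32323, 32327, 32341,
   32353, 32359, 32363, 32369, 32371, 32377, 32381, 32401, 32411, 32413, 32423, 32429, 32441,
   32443, 32467, 32479, 32491, 32497, 32503, 32507, 32531, 32533, 32537, 32561, 32563, 32569,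
   32573, 32579, 32587, 32603, 32609, 32611, 32621, 32633, 32647, 32653, 32687, 32693, 32707,
   32713, 32717, 32719, 32749, 32771, 32779, 32783, 32789, 32797, 32801, 32803, 32831],
  [32833, 32839, 32843, 32869, 32887, 32909, 32911, 32917, 32933, 32939, 32941, 32957, 32969,
   32971, 32983, 32987, 32993, 32999, 33013, 33023, 33029, 33037, 33049, 33053, 33071, 33073,
   33083, 33091, 33107, 33113, 33119, 33149, 33151, 33161, 33179, 33181, 33191, 33199, 33203,
   33211, 33223, 33247, 33287, 33289, 33301, 33311, 33317, 33329, 33331, 33343, 33347, 33349,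
   33353, 33359, 33377, 33391, 33403, 33409, 33413, 33427, 33457, 33461, 33469, 33479],
  [33487, 33493, 33503, 33521, 33529, 33533, 33547, 33563, 33569, 33577, 33581, 33587, 33589,
   33599, 33601, 33613, 33617, 33619, 33623, 33629, 33637, 33641, 33647, 33679, 33703, 33713,
   33721, 33739, 33749, 33751, 33757, 33767, 33769, 33773, 33791, 33797, 33809, 33811, 33827,
   33829, 33851, 33857, 33863, 33871, 33889, 33893, 33911, 33923, 33931, 33937, 33941, 33961,
   33967, 33997, 34019, 34031, 34033, 34039, 34057, 34061, 34123, 34127, 34129, 34141],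
  [34147, 34157, 34159, 34171, 34183, 34211, 34213, 34217, 34231, 34253, 34259, 34261, 34267,
   34273, 34283, 34297, 34301, 34303, 34313, 34319, 34327, 34337, 34351, 34361, 34367, 34369,
   34381, 34403, 34421, 34429, 34439, 34457, 34469, 34471, 34483, 34487, 34499, 34501, 34511,
   34513, 34519, 34537, 34543, 34549, 34583, 34589, 34591, 34603, 34607, 34613, 34631, 34649,
   34651, 34667, 34673, 34679, 34687, 34693, 34703, 34721, 34729, 34739, 34747, 34757],
  [34759, 34763, 34781, 34807, 34819, 34841, 34843, 34847, 34849, 34871, 34877, 34883, 34897,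
   34913, 34919, 34939, 34949, 34961, 34963, 34981, 35023, 35027, 35051, 35053, 35059, 35069,
   35081, 35083, 35089, 35099, 35107, 35111, 35117, 35129, 35141, 35149, 35153, 35159, 35171,
   35201, 35221, 35227, 35251, 35257, 35267, 35279, 35281, 35291, 35311, 35317, 35323, 35327,
   35339, 35353, 35363, 35381, 35393, 35401, 35407, 35419, 35423, 35437, 35447, 35449],
  [35461, 35491, 35507, 35509, 35521, 35527, 35531, 35533, 35537, 35543, 35569, 35573, 35591,
   35593, 35597, 35603, 35617, 35671, 35677, 35729, 35731, 35747, 35753, 35759, 35771, 35797,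
   35801, 35803, 35809, 35831, 35837, 35839, 35851, 35863, 35869, 35879, 35897, 35899, 35911,
   35923, 35933, 35951, 35963, 35969, 35977, 35983, 35993, 35999, 36007, 36011, 36013, 36017,
   36037, 36061, 36067, 36073, 36083, 36097, 36107, 36109, 36131, 36137, 36151, 36161],
  [36187, 36191, 36209, 36217, 36229, 36241, 36251, 36263, 36269, 36277, 36293, 36299, 36307,
   36313, 36319, 36341, 36343, 36353, 36373, 36383, 36389, 36433, 36451, 36457, 36467, 36469,
   36473, 36479, 36493, 36497, 36523, 36527, 36529, 36541, 36551, 36559, 36563, 36571, 36583,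
   36587, 36599, 36607, 36629, 36637, 36643, 36653, 36671, 36677, 36683, 36691, 36697, 36709,
   36713, 36721, 36739, 36749, 36761, 36767, 36779, 36781, 36787, 36791, 36793, 36809],
  [36821, 36833, 36847, 36857, 36871, 36877, 36887, 36899, 36901, 36913, 36919, 36923, 36929,
   36931, 36943, 36947, 36973, 36979, 36997, 37003, 37013, 37019, 37021, 37039, 37049, 37057,
   37061, 37087, 37097, 37117, 37123, 37139, 37159, 37171, 37181, 37189, 37199, 37201, 37217,
   37223, 37243, 37253, 37273, 37277, 37307, 37309, 37313, 37321, 37337, 37339, 37357, 37361,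
   37363, 37369, 37379, 37397, 37409, 37423, 37441, 37447, 37463, 37483, 37489, 37493],
  [37501, 37507, 37511, 37517, 37529, 37537, 37547, 37549, 37561, 37567, 37571, 37573, 37579,
   37589, 37591, 37607, 37619, 37633, 37643, 37649, 37657, 37663, 37691, 37693, 37699, 37717,
   37747, 37781, 37783, 37799, 37811, 37813, 37831, 37847, 37853, 37861, 37871, 37879, 37889,
   37897, 37907, 37951, 37957, 37963, 37967, 37987, 37991, 37993, 37997, 38011, 38039, 38047,
   38053, 38069, 38083, 38113]]

/-- right ends of the blocks -/
def blockTab : List ℕ := [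
  133, 137, 140, 144, 145, 146, 147, 148, 150, 153, 156, 158, 162, 165, 169, 172, 177, 182, 187,
  193, 200, 205, 208, 212, 217, 220, 225, 228, 230, 232, 236, 238, 242, 244, 247, 252, 258, 262,
  266, 270, 275, 280, 286, 292, 301, 311, 318, 327, 334, 346, 354, 361, 367, 371, 378, 386, 393,
  400, 411, 422, 435, 445, 452, 465, 475, 487, 501, 513, 530, 547, 558, 570, 581, 592, 606, 618,
  633, 646, 661, 676, 690, 707, 723, 745, 768, 789, 812, 827, 842, 861, 886, 913, 928, 947, 962,
  977, 994, 1017, 1042, 1069, 1098, 1131, 1166, 1199, 1230, 1258, 1286, 1317, 1345, 1379, 1413,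
  1444, 1478, 1509, 1537, 1568, 1605, 1642, 1683, 1720, 1757, 1798, 1855, 1908, 1965, 2010, 2056,
  2102, 2148, 2194, 2245, 2301, 2352, 2403, 2458, 2525, 2586, 2647, 2714, 2793, 2866, 2951, 3029,
  3107, 3185, 3256, 3329, 3410, 3499, 3588, 3677, 3759, 3841, 3932, 4041, 4152, 4263, 4384, 4495,
  4606, 4728, 4861, 4994, 5115, 5248, 5379, 5497, 5628, 5769, 5910, 6065, 6216, 6382, 6563, 6756,
  6933, 7121, 7309, 7508, 7707, 7898, 8089, 8270, 8471, 8682, 8914, 9135, 9356, 9587, 9818, 10059,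
  10335, 10611, 10898, 11196, 11494, 11803, 12094, 12395, 12696, 13007, 13328, 13659, 14000, 14351,
  14702, 15063, 15434, 15853, 16283, 16724, 17176, 17639, 18124, 18620, 19127, 19645, 20136, 20637,
  21148, 21669, 22264, 22870, 23498, 24137, 24738, 25410]

/-- increasing test for chunked lists -/
def incr2 (c : ℕ → Bool) : ℕ → List (List ℕ) → Bool
  | _, [] => true
  | a, l :: t => incr c a l && incr2 c (l.getLastD a) t

theorem getLastD_le (c : ℕ → Bool) (a : ℕ) (l : List ℕ) (h : incr c a l = true) :
    a ≤ l.getLastD a ∧ ∀ p ∈ l, p ≤ l.getLastD a := by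
  induction l generalizing a with
  | nil => simp
  | cons p t ih =>
    simp only [incr, Bool.and_eq_true, Nat.blt_eq] at h
    obtain ⟨⟨h1, h2⟩, h3⟩ := h
    obtain ⟨k1, k2⟩ := ih p h3
    have : (p :: t).getLastD a = t.getLastD p := by
      cases t <;> simp [List.getLastD]
    rw [this]
    refine ⟨by omega, ?_⟩
    intro q hq
    rcases List.mem_cons.1 hq with rfl | hq
    · exact k1
    · exact k2 q hq

theorem incr2_spec (c : ℕ → Bool) (a : ℕ) (l : List (List ℕ)) (h : incr2 c a l = true) :
    l.flatten.Nodup ∧ ∀ p ∈ l.flatten, a < p ∧ c p = true := by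
  induction l generalizing a with
  | nil => simp
  | cons l t ih =>
    simp only [incr2, Bool.and_eq_true] at h
    obtain ⟨h1, h2⟩ := h
    obtain ⟨k1, k2⟩ := ih _ h2
    obtain ⟨j1, j2⟩ := incr_spec _ _ _ h1
    obtain ⟨i1, i2⟩ := getLastD_le _ _ _ h1
    rw [List.flatten_cons]
    refine ⟨List.nodup_append.2 ⟨j1, k1, ?_⟩, ?_⟩
    · intro p hp q hq hpq
      have := (k2 q hq).1
      have := i2 p hp
      omega
    · intro p hp
      rcases List.mem_append.1 hp with hp | hp
      · exact j2 p hp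
      · exact ⟨lt_of_le_of_lt i1 (k2 p hp).1, (k2 p hp).2⟩

theorem primeTab_ok : incr2 isP 0 primeTab = true := by decide +kernel

/-- selection test for a block `[a,b]` -/
def selB (a b p : ℕ) : Bool := Nat.blt 0 (p % 3) && Nat.ble ((3 * (b / p) + 2) * p) (3 * a + 1)

/-- check of consecutive blocks -/
def blocks : ℕ → List ℕ → Bool
  | _, [] => true
  | a, b :: t => Nat.ble (2 ^ ((8795 * b + 9999) / 10000)) (selProd2 (selB a b) (fun p => p) (primeTab.take (a / 300 + 3)))
      && blocks (b + 1) t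

theorem GG_ge_block (a b r : ℕ) (h1 : a ≤ r) (h2 : r ≤ b) :
    selProd2 (selB a b) (fun p => p) (primeTab.take (a / 300 + 3)) ≤ GG r := by
  obtain ⟨k1', k2'⟩ := incr2_spec _ _ _ primeTab_ok
  have hsub : (primeTab.take (a / 300 + 3)).flatten.Sublist primeTab.flatten := (List.take_sublist _ _).flatten
  have k1 := hsub.nodup k1'
  have k2 : ∀ p ∈ (primeTab.take (a / 300 + 3)).flatten, 0 < p ∧ isP p = true := fun p hp => k2' p (hsub.subset hp)
  clear k1' k2' hsub
  rw [selProd2_eq]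
  apply GG_ge_list r (selB a b) (primeTab.take (a / 300 + 3)).flatten _ k1
  · intro n hn
    exact (isP_prime n (k2 n hn).2).minFac_eq.symm
  · intro n hn hc
    have hp := isP_prime n (k2 n hn).2
    simp only [selB, Bool.and_eq_true, Nat.blt_eq, Nat.ble_eq] at hc
    obtain ⟨c1, c2⟩ := hc
    refine ⟨hp.isPrimePow, by omega, ?_⟩
    have hb : r / n ≤ b / n := Nat.div_le_div_right h2
    have c3 : 3 * (b / n * n) + 2 * n ≤ 3 * a + 1 := by
      refine le_trans (le_of_eq ?_) c2
      ring
    have hrb : r / n = b / n := by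
      apply le_antisymm hb
      rw [Nat.le_div_iff_mul_le hp.pos]
      generalize b / n * n = w at *
      omega
    have hdm := Nat.div_add_mod r n
    rw [hrb, mul_comm] at hdm
    generalize b / n * n = w at *
    omega

theorem blocks_spec (a : ℕ) (l : List ℕ) (h : blocks a l = true) (r : ℕ) (h1 : a ≤ r) (h2 : r ≤ l.getLastD 0) :
    0.6096 * (r : ℝ) ≤ Real.log (GG r) := by
  induction l generalizing a with
  | nil =>
    simp at h2
    simp [h2]
    positivity
  | cons b t ih =>
    simp only [blocks, Bool.and_eq_true, Nat.ble_eq] at h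
    obtain ⟨ha, hb⟩ := h
    rcases Nat.lt_or_ge b r with h3 | h3
    · apply ih (b + 1) hb h3
      cases t with
      | nil => simp at h2; omega
      | cons c t => simpa [List.getLastD] using h2
    · have h4 := ha.trans (GG_ge_block a b r h1 h3)
      have h5 : ((2 : ℝ) ^ ((8795 * b + 9999) / 10000)) ≤ GG r := by exact_mod_cast h4
      have h6 := Real.log_le_log (by positivity) h5
      rw [Real.log_pow] at h6
      have h7 : 8795 * b ≤ 10000 * ((8795 * b + 9999) / 10000) := by omega
      have h8 : (8795 : ℝ) * b ≤ 10000 * (((8795 * b + 9999) / 10000 : ℕ) : ℝ) := by exact_mod_cast h7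
      have h9 : (r : ℝ) ≤ b := by exact_mod_cast h3
      have := Real.log_two_gt_d9
      nlinarith

theorem blocks_ok : blocks 130 blockTab = true := by decide +kernel

theorem log_GG_mid (r : ℕ) (h1 : 130 ≤ r) (h2 : r ≤ 25000) : 0.6096 * (r : ℝ) ≤ Real.log (GG r) := by
  apply blocks_spec 130 blockTab blocks_ok r h1
  refine h2.trans ?_
  decide +kernel

theorem sum_vM_floor (N M : ℕ) (h : M ≤ N) :
    ∑ n ∈ Icc 1 N, ArithmeticFunction.vonMangoldt n * ((M / n : ℕ) : ℝ) = Real.log (M.factorial) := by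
  induction M with
  | zero => simp
  | succ M ih =>
    have h1 : ∀ n ∈ Icc 1 N, ArithmeticFunction.vonMangoldt n * (((M + 1) / n : ℕ) : ℝ) =
        ArithmeticFunction.vonMangoldt n * ((M / n : ℕ) : ℝ) +
          if n ∣ M + 1 then ArithmeticFunction.vonMangoldt n else 0 := by
      intro n _
      rw [Nat.succ_div]
      split_ifs <;> push_cast <;> ring
    rw [Finset.sum_congr rfl h1, Finset.sum_add_distrib, ih (by omega), ← Finset.sum_filter]
    have h2 : (Icc 1 N).filter (fun n => n ∣ M + 1) = (M + 1).divisors := by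
      ext n
      simp only [mem_filter, mem_Icc, Nat.mem_divisors]
      constructor
      · rintro ⟨_, h⟩; exact ⟨h, by omega⟩
      · rintro ⟨h3, _⟩
        exact ⟨⟨Nat.pos_of_dvd_of_pos h3 (by omega), (Nat.le_of_dvd (by omega) h3).trans h⟩, h3⟩
    rw [h2, ArithmeticFunction.vonMangoldt_sum, Nat.factorial_succ]
    push_cast
    rw [Real.log_mul (by positivity) (by positivity)]
    ring

theorem sum_vM_ge (N T : ℕ) (hT : 1 ≤ T) :
    ∑ n ∈ Icc 1 N, ArithmeticFunction.vonMangoldt n * (if T ≤ N / n then (1 : ℝ) else 0) =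
      Chebyshev.psi ((N / T : ℕ) : ℝ) := by
  unfold Chebyshev.psi
  rw [Nat.floor_natCast]
  simp only [mul_ite, mul_one, mul_zero]
  rw [← Finset.sum_filter]
  apply Finset.sum_congr _ (fun _ _ => rfl)
  ext n
  simp only [mem_filter, mem_Icc, mem_Ioc]
  constructor
  · rintro ⟨⟨h1, h2⟩, h3⟩
    refine ⟨h1, ?_⟩
    rw [Nat.le_div_iff_mul_le (by omega)] at *
    linarith
  · rintro ⟨h1, h2⟩
    have h3 := Nat.div_le_self N T
    refine ⟨⟨h1, by omega⟩, ?_⟩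
    rw [Nat.le_div_iff_mul_le (by omega)] at *
    linarith

theorem log_fact_upper (M : ℕ) (hM : 1 ≤ M) :
    Real.log M.factorial ≤ M * Real.log M - M + 1 / 2 * Real.log M + 1 := by
  have h1 := Stirling.log_stirlingSeq'_antitone (Nat.zero_le (M - 1))
  simp only [Function.comp, Nat.succ_eq_add_one] at h1
  rw [show M - 1 + 1 = M by omega, Stirling.log_stirlingSeq_formula, Stirling.log_stirlingSeq_formula] at h1
  have hM' : (0 : ℝ) < M := by exact_mod_cast hM
  rw [Real.log_mul (by norm_num) hM'.ne', Real.log_div hM'.ne' (Real.exp_pos 1).ne'] at h1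
  simp at h1
  linarith

theorem stirling_x (N d : ℕ) (hd : 1 ≤ d) (hN : d ≤ N) (x : ℝ) (hx : x = (N : ℝ) / d) :
    x * Real.log x - x - 1 / 2 * Real.log x ≤ Real.log ((N / d).factorial) ∧
    Real.log ((N / d).factorial) ≤ x * Real.log x - x + 1 / 2 * Real.log x + 1 := by
  have hM : 1 ≤ N / d := by rw [Nat.le_div_iff_mul_le (by omega)]; omega
  have hd' : (0 : ℝ) < d := by exact_mod_cast hd
  have h1 : ((N / d : ℕ) : ℝ) ≤ x := by rw [hx]; exact Nat.cast_div_le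
  have h2 : x ≤ ((N / d : ℕ) : ℝ) + 1 := by
    rw [hx, div_le_iff₀ hd']
    have := Nat.div_add_mod N d
    have := Nat.mod_lt N (show d > 0 by omega)
    have h3 : N ≤ (N / d + 1) * d := by nlinarith
    exact_mod_cast h3
  generalize N / d = M at *
  have hM' : (1 : ℝ) ≤ M := by exact_mod_cast hM
  have hMp : (0 : ℝ) < M := by linarith
  have hxp : 0 < x := by linarith
  have hlM : 0 ≤ Real.log M := Real.log_nonneg hM'
  have hlx : Real.log M ≤ Real.log x := Real.log_le_log hMp h1
  have k1 : M * Real.log x - M * Real.log M ≤ x - M := by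
    have := Real.log_le_sub_one_of_pos (show 0 < x / M by positivity)
    rw [Real.log_div hxp.ne' hMp.ne'] at this
    have h4 := mul_le_mul_of_nonneg_left this hMp.le
    have h5 : (M : ℝ) * (x / M - 1) = x - M := by field_simp
    linarith
  have k2 : Real.log x ≤ Real.log M + Real.log 2 := by
    rw [← Real.log_mul hMp.ne' (by norm_num)]
    exact Real.log_le_log hxp (by linarith)
  have k3 : x * Real.log M - x * Real.log x ≤ M - x := by
    have := Real.log_le_sub_one_of_pos (show 0 < M / x by positivity)
    rw [Real.log_div hMp.ne' hxp.ne'] at this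
    have h4 := mul_le_mul_of_nonneg_left this hxp.le
    have h5 : (x : ℝ) * (M / x - 1) = M - x := by field_simp
    linarith
  constructor
  · have h3 := Stirling.le_log_factorial_stirling (n := M) (by omega)
    have h4 : Real.log 2 ≤ Real.log (2 * Real.pi) := Real.log_le_log (by norm_num) (by linarith [Real.pi_gt_three])
    have h6 : (x - M) * Real.log x ≤ 1 * Real.log x := by
      apply mul_le_mul_of_nonneg_right <;> linarith
    linarith
  · have h3 := log_fact_upper M hM
    have h6 : 0 ≤ (x - M) * Real.log M := mul_nonneg (by linarith) hlM
    linarith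

/-- the form in which the factorial estimates are used -/
theorem stirling_d (N d : ℕ) (hd : 1 ≤ d) (hN : d ≤ N) :
    (N : ℝ) * Real.log N - N * Real.log d - N - d / 2 * Real.log N ≤ d * Real.log ((N / d).factorial) ∧
    d * Real.log ((N / d).factorial) ≤ (N : ℝ) * Real.log N - N * Real.log d - N + d / 2 * Real.log N + d := by
  obtain ⟨h1, h2⟩ := stirling_x N d hd hN _ rfl
  have hd' : (1 : ℝ) ≤ d := by exact_mod_cast hd
  have hN' : (d : ℝ) ≤ N := by exact_mod_cast hN
  have hl : 0 ≤ Real.log d := Real.log_nonneg hd'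
  rw [Real.log_div (by linarith) (by linarith)] at h1 h2
  have h3 := mul_le_mul_of_nonneg_left h1 (by linarith : (0 : ℝ) ≤ d)
  have h4 := mul_le_mul_of_nonneg_left h2 (by linarith : (0 : ℝ) ≤ d)
  have e1 : (d : ℝ) * (N / d * (Real.log N - Real.log d) - N / d - 1 / 2 * (Real.log N - Real.log d)) =
    N * Real.log N - N * Real.log d - N - d / 2 * Real.log N + d / 2 * Real.log d := by field_simp; ring
  have e2 : (d : ℝ) * (N / d * (Real.log N - Real.log d) - N / d + 1 / 2 * (Real.log N - Real.log d) + 1) =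
    N * Real.log N - N * Real.log d - N + d / 2 * Real.log N + d - d / 2 * Real.log d := by field_simp; ring
  rw [e1] at h3
  rw [e2] at h4
  have : 0 ≤ (d : ℝ) / 2 * Real.log d := by positivity
  constructor <;> linarith

theorem log_bound (d k a : ℕ) (h1 : 2 ^ a ≤ d ^ k) (h2 : d ^ k ≤ 2 ^ (a + 1)) (hd : 0 < d) :
    a * Real.log 2 ≤ k * Real.log d ∧ k * Real.log d ≤ (a + 1) * Real.log 2 := by
  have k1 : (2 : ℝ) ^ a ≤ (d : ℝ) ^ k := by exact_mod_cast h1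
  have k2 : (d : ℝ) ^ k ≤ (2 : ℝ) ^ (a + 1) := by exact_mod_cast h2
  have hd' : (0 : ℝ) < d := by exact_mod_cast hd
  have l1 := Real.log_le_log (by positivity) k1
  have l2 := Real.log_le_log (by positivity) k2
  simp only [Real.log_pow] at l1 l2
  push_cast at l2
  exact ⟨l1, l2⟩

theorem log_bound2 (d k : ℕ) (hd : 0 < d) :
    (Nat.log2 (d ^ k)) * Real.log 2 ≤ k * Real.log d ∧ k * Real.log d ≤ (Nat.log2 (d ^ k) + 1) * Real.log 2 := by
  have hp : d ^ k ≠ 0 := by positivity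
  exact log_bound d k _ (Nat.log2_self_le hp) (Nat.lt_log2_self).le hd

theorem E30 (t : ℕ) (ht : 1 ≤ t) : t / 2 + t / 3 + t / 5 + (if 1 ≤ t then 1 else 0) ≤ t + t / 30 + (if 6 ≤ t then 1 else 0) := by
  split_ifs <;> omega

theorem psi_step (N : ℕ) :
    Chebyshev.psi (N : ℝ) - Chebyshev.psi ((N / 6 : ℕ) : ℝ) ≤
      Real.log N.factorial - Real.log (N / 2).factorial - Real.log (N / 3).factorial
        - Real.log (N / 5).factorial + Real.log (N / 30).factorial := by
  have s1 := sum_vM_ge N 1 le_rfl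
  have s6 := sum_vM_ge N 6 (by norm_num)
  rw [Nat.div_one] at s1
  rw [← s1, ← s6, ← sum_vM_floor N N le_rfl, ← sum_vM_floor N (N / 2) (Nat.div_le_self _ _),
    ← sum_vM_floor N (N / 3) (Nat.div_le_self _ _), ← sum_vM_floor N (N / 5) (Nat.div_le_self _ _),
    ← sum_vM_floor N (N / 30) (Nat.div_le_self _ _)]
  simp only [← Finset.sum_sub_distrib, ← Finset.sum_add_distrib, ← mul_sub, ← mul_add]
  apply Finset.sum_le_sum
  intro n hn
  rw [mem_Icc] at hn
  apply mul_le_mul_of_nonneg_left _ ArithmeticFunction.vonMangoldt_nonneg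
  have ht : 1 ≤ N / n := by rw [Nat.le_div_iff_mul_le (by omega)]; omega
  have h := E30 (N / n) ht
  have e : ∀ d, N / d / n = N / n / d := fun d => by rw [Nat.div_div_eq_div_mul, Nat.div_div_eq_div_mul, mul_comm]
  simp only [e]
  have h' : (((N / n / 2 : ℕ) : ℝ) + ((N / n / 3 : ℕ) : ℝ) + ((N / n / 5 : ℕ) : ℝ) + (if 1 ≤ N / n then 1 else 0)) ≤
    ((N / n : ℕ) : ℝ) + ((N / n / 30 : ℕ) : ℝ) + (if 6 ≤ N / n then 1 else 0) := by exact_mod_cast h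
  linarith

/-- running lcm; the accumulator is forced by the match -/
def lcmGo : ℕ → ℕ → ℕ → ℕ
  | 0, _, L => L
  | _ + 1, _, 0 => 0
  | k + 1, e, L + 1 =>
    bif Nat.ble (L + 1) (3 ^ (e - (k + 1))) then
      lcmGo k e ((L + 1) * (e - k) / Nat.gcd (L + 1) (e - k)) else 0

theorem lcmUpto_succ (n : ℕ) : Nat.lcmUpto (n + 1) = Nat.lcm (Nat.lcmUpto n) (n + 1) := by
  unfold Nat.lcmUpto
  rw [← Finset.insert_Icc_right_eq_Icc_add_one (by omega), Finset.lcm_insert, Nat.lcm_comm]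
  rfl

theorem lcmGo_spec (k e L : ℕ) (hk : k ≤ e) (hL : L = Nat.lcmUpto (e - k)) (h : 0 < lcmGo k e L) :
    lcmGo k e L = Nat.lcmUpto e ∧ ∀ n, e - k ≤ n → n < e → Nat.lcmUpto n ≤ 3 ^ n := by
  induction k generalizing L with
  | zero => exact ⟨by simpa [lcmGo] using hL, fun n h1 h2 => by omega⟩
  | succ k ih =>
    cases L with
    | zero => simp [lcmGo] at h
    | succ L =>
      rw [lcmGo] at h ⊢
      cases hb : Nat.ble (L + 1) (3 ^ (e - (k + 1))) with
      | false => rw [hb] at h; simp at h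
      | true =>
        rw [hb] at h
        simp only [cond_true] at h ⊢
        have hs : (L + 1) * (e - k) / Nat.gcd (L + 1) (e - k) = Nat.lcmUpto (e - k) := by
          rw [show e - k = e - (k + 1) + 1 by omega, lcmUpto_succ, ← hL]
          rfl
        obtain ⟨i1, i2⟩ := ih _ (by omega) hs h
        refine ⟨i1, ?_⟩
        intro n h1 h2
        rcases Nat.eq_or_lt_of_le h1 with h3 | h3
        · rw [← h3, ← hL]; exact Nat.le_of_ble_eq_true hb
        · exact i2 n (by omega) h2

/-- chunks of hundred steps -/
def lcmOut : ℕ → ℕ → ℕ → ℕ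
  | 0, _, L => L
  | _ + 1, _, 0 => 0
  | k + 1, E, L + 1 => lcmOut k E (lcmGo 100 (100 * (E - k)) (L + 1))

theorem lcmOut_spec (k E L : ℕ) (hk : k ≤ E) (hL : L = Nat.lcmUpto (100 * (E - k))) (h : 0 < lcmOut k E L) :
    ∀ n, 100 * (E - k) ≤ n → n < 100 * E → Nat.lcmUpto n ≤ 3 ^ n := by
  induction k generalizing L with
  | zero => intro n h1 h2; simp at h1; omega
  | succ k ih =>
    cases L with
    | zero => simp [lcmOut] at h
    | succ L =>
      rw [lcmOut] at h
      have hpos : 0 < lcmGo 100 (100 * (E - k)) (L + 1) := by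
        rcases Nat.eq_zero_or_pos (lcmGo 100 (100 * (E - k)) (L + 1)) with h0 | h0
        · rw [h0] at h
          exfalso
          have := Nat.lcmUpto_pos (100 * (E - k))
          cases k with
          | zero => simp [lcmOut] at h
          | succ k => simp [lcmOut] at h
        · exact h0
      obtain ⟨i1, i2⟩ := lcmGo_spec 100 (100 * (E - k)) (L + 1) (by omega)
        (by rw [hL]; congr 1; omega) hpos
      intro n h1 h2
      rcases Nat.lt_or_ge n (100 * (E - k)) with h3 | h3
      · exact i2 n (by omega) h3
      · exact ih _ (by omega) i1 h n h3 h2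

theorem lcmOut_ok : Nat.blt 0 (lcmOut 21 21 1) = true := by decide +kernel

theorem psi_le_small (n : ℕ) (hn : n < 2100) : Chebyshev.psi (n : ℝ) ≤ 1.12 * n := by
  have h := lcmOut_spec 21 21 1 le_rfl (by simp [Nat.lcmUpto]) (by
    have := lcmOut_ok
    simpa only [Nat.blt_eq] using this) n (by omega) (by omega)
  rw [Chebyshev.psi_eq_log_lcmUpto]
  have h1 : ((Nat.lcmUpto n : ℕ) : ℝ) ≤ 3 ^ n := by exact_mod_cast h
  have h2 := Real.log_le_log (by exact_mod_cast Nat.lcmUpto_pos n) h1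
  rw [Real.log_pow] at h2
  have h3 : Real.log 3 ≤ 1.12 := by
    have := (log_bound 3 10 15 (by norm_num) (by norm_num) (by norm_num)).2
    have := Real.log_two_lt_d9
    push_cast at *
    linarith
  have h4 : (0 : ℝ) ≤ n := by positivity
  nlinarith

theorem log_le_lin (N : ℝ) (hN : 0 < N) (k : ℕ) : Real.log N ≤ k * Real.log 2 + N / 2 ^ k - 1 := by
  have := Real.log_le_sub_one_of_pos (show 0 < N / 2 ^ k by positivity)
  rw [Real.log_div hN.ne' (by positivity), Real.log_pow] at this
  linarith

theorem psi_le_all (n : ℕ) : Chebyshev.psi (n : ℝ) ≤ 1.12 * n := by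
  induction n using Nat.strong_induction_on with
  | _ N ih =>
    rcases Nat.lt_or_ge N 2100 with h | h
    · exact psi_le_small N h
    · have h1 := psi_step N
      have h2 := ih (N / 6) (by omega)
      have h3 : ((N / 6 : ℕ) : ℝ) ≤ (N : ℝ) / 6 := by exact_mod_cast Nat.cast_div_le
      have s1 := (stirling_d N 1 (by omega) (by omega)).2
      have s2 := (stirling_d N 2 (by omega) (by omega)).1
      have s3 := (stirling_d N 3 (by omega) (by omega)).1
      have s5 := (stirling_d N 5 (by omega) (by omega)).1
      have s30 := (stirling_d N 30 (by omega) (by omega)).2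
      have hNR : (2100 : ℝ) ≤ N := by exact_mod_cast h
      have hl := log_le_lin N (by linarith) 11
      have l3 := (log_bound 3 94 148 (by norm_num) (by norm_num) (by norm_num)).2
      have l5 := (log_bound 5 59 136 (by norm_num) (by norm_num) (by norm_num)).2
      have l2 := Real.log_two_lt_d9
      have e30 : Real.log 30 = Real.log 2 + Real.log 3 + Real.log 5 := by
        rw [← Real.log_mul, ← Real.log_mul] <;> norm_num
      push_cast at *
      rw [Nat.div_one] at s1
      simp only [Real.log_one] at s1
      rw [e30] at s30
      have c : Real.log 2 * (1 / 2 - 1 / 30) + Real.log 3 * (1 / 3 - 1 / 30) + Real.log 5 * (1 / 5 - 1 / 30) ≤ 0.9217 := by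
        linarith
      have c2 := mul_le_mul_of_nonneg_left c (by linarith : (0 : ℝ) ≤ N)
      have hfin : 2.5 * Real.log N + 2 ≤ (1.12 * 5 / 6 - 0.9217) * N := by linarith
      linarith

/-- weighted sum over a list of (argument, weight) -/
noncomputable def lsR (f : ℕ → ℝ) : List (ℕ × ℕ) → ℝ
  | [] => 0
  | p :: t => (p.2 : ℝ) * f p.1 + lsR f t

/-- the same with natural values -/
def lsN (f : ℕ → ℕ) : List (ℕ × ℕ) → ℕ
  | [] => 0
  | p :: t => p.2 * f p.1 + lsN f t

theorem lsR_cast (f : ℕ → ℕ) (l : List (ℕ × ℕ)) : lsR (fun d => (f d : ℝ)) l = (lsN f l : ℝ) := by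
  induction l with
  | nil => simp [lsR, lsN]
  | cons p t ih => simp only [lsR, lsN, ih]; push_cast; ring

theorem lsR_lin (u v : ℝ) (f g : ℕ → ℝ) (l : List (ℕ × ℕ)) :
    lsR (fun d => u * f d + v * g d) l = u * lsR f l + v * lsR g l := by
  induction l with
  | nil => simp [lsR]
  | cons p t ih => simp only [lsR, ih]; ring

theorem lsR_mono (f g : ℕ → ℝ) (l : List (ℕ × ℕ)) (h : ∀ p ∈ l, f p.1 ≤ g p.1) : lsR f l ≤ lsR g l := by
  induction l with
  | nil => simp [lsR]
  | cons p t ih =>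
    simp only [lsR]
    have h1 := ih (fun q hq => h q (List.mem_cons_of_mem _ hq))
    have h2 := mul_le_mul_of_nonneg_left (h p List.mem_cons_self) (Nat.cast_nonneg (α := ℝ) p.2)
    linarith

theorem lsN_mono (f g : ℕ → ℕ) (l : List (ℕ × ℕ)) (h : ∀ p ∈ l, f p.1 ≤ g p.1) : lsN f l ≤ lsN g l := by
  induction l with
  | nil => simp [lsN]
  | cons p t ih =>
    simp only [lsN]
    have h1 := ih (fun q hq => h q (List.mem_cons_of_mem _ hq))
    have h2 := Nat.mul_le_mul_left p.2 (h p List.mem_cons_self)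
    omega

theorem lsR_sum (s : Finset ℕ) (w : ℕ → ℝ) (g : ℕ → ℕ → ℝ) (l : List (ℕ × ℕ)) :
    lsR (fun d => ∑ n ∈ s, w n * g n d) l = ∑ n ∈ s, w n * lsR (g n) l := by
  induction l with
  | nil => simp [lsR]
  | cons p t ih =>
    simp only [lsR, ih, mul_add, Finset.sum_add_distrib, Finset.mul_sum]
    congr 1
    apply Finset.sum_congr rfl
    intro n _
    ring

/-- positive coefficients -/
def posTab : List (ℕ × ℕ) := [
  (2, 50000), (5, 20000), (8, 12500), (11, 9091), (12, 8333), (17, 5882), (20, 7150), (21, 1210),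
  (23, 3469), (29, 2752), (30, 7164), (32, 715), (41, 1819), (44, 907), (45, 1261), (47, 1396),
  (48, 1186), (50, 1266), (52, 663), (54, 41), (56, 465), (59, 972), (62, 146), (66, 1763),
  (67, 350), (68, 909), (70, 976)]

/-- negative coefficients (absolute values) -/
def negTab : List (ℕ × ℕ) := [
  (3, 33333), (4, 25000), (6, 16667), (10, 20000), (15, 6667), (16, 6250), (22, 7655), (24, 3325),
  (25, 4000), (31, 292), (33, 2163), (34, 4035), (39, 651), (40, 2940), (46, 2349), (49, 713),
  (51, 6), (53, 422), (55, 202), (57, 604), (58, 1376), (60, 1922), (63, 403), (64, 357), (69, 1054)]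

/-- thresholds -/
def thrTab : List (ℕ × ℕ) := [
  (3, 1), (11, 1), (58, 65540), (88, 71490), (346, 5206), (475, 30301), (525, 35834), (650, 15735),
  (850, 747), (1300, 25644), (1400, 11463), (1500, 10620), (8000, 1521150)]

/-- indicator of `t ≡ 2 mod 3` -/
def hh (t : ℕ) : ℕ := bif Nat.beq (t % 3) 2 then 1 else 0

/-- the pointwise inequality -/
def chk (t : ℕ) : Bool :=
  Nat.ble (lsN (fun d => t % d) negTab)
    (lsN (fun d => t % d) posTab + 100000 * hh t + lsN (fun T => bif Nat.ble T t then 1 else 0) thrTab)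

/-- inner loop -/
def chkR (a : ℕ) : ℕ → Bool
  | 0 => true
  | k + 1 => chk (a + k) && chkR a k

/-- outer loop -/
def chkO : ℕ → Bool
  | 0 => true
  | k + 1 => chkR (100 * k) 100 && chkO k

theorem chkR_spec (a k : ℕ) (h : chkR a k = true) (t : ℕ) (h1 : a ≤ t) (h2 : t < a + k) : chk t = true := by
  induction k with
  | zero => omega
  | succ k ih =>
    simp only [chkR, Bool.and_eq_true] at h
    rcases Nat.eq_or_lt_of_le (show t ≤ a + k by omega) with h3 | h3
    · rw [h3]; exact h.1
    · exact ih h.2 h3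

theorem chkO_spec (k : ℕ) (h : chkO k = true) (t : ℕ) (h2 : t < 100 * k) : chk t = true := by
  induction k with
  | zero => omega
  | succ k ih =>
    simp only [chkO, Bool.and_eq_true] at h
    rcases Nat.lt_or_ge t (100 * k) with h3 | h3
    · exact ih h.2 h3
    · exact chkR_spec _ _ h.1 t h3 (by omega)

theorem chkO_ok : chkO 80 = true := by decide +kernel

theorem tab_sum : lsN (fun _ => 1) posTab = lsN (fun _ => 1) negTab := by decide +kernel

theorem tab_neg : lsN (fun d => d - 1) negTab ≤ lsN (fun _ => 1) thrTab := by decide +kernel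

theorem pos_range : ∀ p ∈ posTab, 1 ≤ p.1 ∧ p.1 ≤ 70 := by decide +kernel

theorem neg_range : ∀ p ∈ negTab, 1 ≤ p.1 ∧ p.1 ≤ 70 := by decide +kernel

theorem thr_range : ∀ p ∈ thrTab, 1 ≤ p.1 ∧ p.1 ≤ 8000 := by decide +kernel

theorem pos_total : lsN (fun d => d) posTab = 1921938 := by decide +kernel

theorem neg_total : lsN (fun d => d) negTab = 1936118 := by decide +kernel

/-- product of powers -/
def lpN : List (ℕ × ℕ) → ℕ
  | [] => 1
  | p :: t => Nat.mul (Nat.pow p.1 p.2) (lpN t)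

theorem lpN_log (l : List (ℕ × ℕ)) (h : ∀ p ∈ l, 1 ≤ p.1) :
    0 < lpN l ∧ Real.log (lpN l : ℝ) = lsR (fun d => Real.log d) l := by
  induction l with
  | nil => simp [lpN, lsR]
  | cons p t ih =>
    obtain ⟨h1, h2⟩ := ih (fun q hq => h q (List.mem_cons_of_mem _ hq))
    have h3 : 0 < p.1 := h p List.mem_cons_self
    have e : lpN (p :: t) = p.1 ^ p.2 * lpN t := rfl
    rw [e]
    refine ⟨by positivity, ?_⟩
    push_cast
    rw [Real.log_mul (by positivity) (by positivity), Real.log_pow, h2, lsR]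

theorem log_total : Nat.ble (Nat.mul (lpN posTab) (Nat.pow 2 33800)) (lpN negTab) = true := by
  decide +kernel

theorem log_diff_aux (u v k : ℕ) (hu : 0 < u) (h : Nat.ble (Nat.mul u (Nat.pow 2 k)) v = true) :
    k * Real.log 2 ≤ Real.log v - Real.log u := by
  have h1 : u * 2 ^ k ≤ v := Nat.le_of_ble_eq_true h
  have hR : (u : ℝ) * 2 ^ k ≤ v := by exact_mod_cast h1
  have hu : (0 : ℝ) < u := by exact_mod_cast hu
  have h2 := Real.log_le_log (by positivity) hR
  rw [Real.log_mul hu.ne' (by positivity), Real.log_pow] at h2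
  linarith

theorem log_diff : 23428 ≤ lsR (fun d => Real.log d) negTab - lsR (fun d => Real.log d) posTab := by
  have p := lpN_log posTab (fun p hp => (pos_range p hp).1)
  have n := lpN_log negTab (fun p hp => (neg_range p hp).1)
  have h := log_diff_aux _ _ _ p.1 log_total
  rw [p.2, n.2] at h
  have := Real.log_two_gt_d9
  push_cast at h
  linarith

theorem chk_all (t : ℕ) : chk t = true := by
  rcases Nat.lt_or_ge t 8000 with h | h
  · exact chkO_spec 80 chkO_ok t h
  · unfold chk
    rw [Nat.ble_eq]
    have h1 : lsN (fun d => t % d) negTab ≤ lsN (fun d => d - 1) negTab := by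
      apply lsN_mono
      intro p hp
      have := Nat.mod_lt t (neg_range p hp).1
      omega
    have h2 : lsN (fun _ => 1) thrTab ≤ lsN (fun T => bif Nat.ble T t then 1 else 0) thrTab := by
      apply lsN_mono
      intro p hp
      have h3 : p.1 ≤ t := (thr_range p hp).2.trans h
      have h4 : Nat.ble p.1 t = true := Nat.ble_eq_true_of_le h3
      simp only [h4, cond_true]
      exact le_rfl
    have := tab_neg
    omega

/-- the pointwise inequality in real form -/
theorem pointwise (t : ℕ) :
    lsR (fun d => (d : ℝ) * ((t / d : ℕ) : ℝ)) posTab - lsR (fun d => (d : ℝ) * ((t / d : ℕ) : ℝ)) negTab ≤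
      100000 * (if t % 3 = 2 then 1 else 0) + lsR (fun T => if T ≤ t then (1 : ℝ) else 0) thrTab := by
  have h := chk_all t
  unfold chk at h
  rw [Nat.ble_eq] at h
  have hR : (lsN (fun d => t % d) negTab : ℝ) ≤ (lsN (fun d => t % d) posTab : ℝ) + 100000 * (hh t : ℝ) +
    (lsN (fun T => bif Nat.ble T t then 1 else 0) thrTab : ℝ) := by exact_mod_cast h
  rw [← lsR_cast, ← lsR_cast, ← lsR_cast] at hR
  have e : (fun d : ℕ => ((t % d : ℕ) : ℝ)) = fun d : ℕ => (t : ℝ) * ((fun _ => ((1 : ℕ) : ℝ)) d) + (-1) * ((fun d : ℕ => (d : ℝ) * ((t / d : ℕ) : ℝ)) d) := by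
    funext d
    have h1 := Nat.div_add_mod t d
    have h2 : (d : ℝ) * ((t / d : ℕ) : ℝ) + ((t % d : ℕ) : ℝ) = t := by exact_mod_cast h1
    simp only [Nat.cast_one]
    linarith
  have e2 : (fun T : ℕ => ((bif Nat.ble T t then 1 else 0 : ℕ) : ℝ)) = fun T => if T ≤ t then (1 : ℝ) else 0 := by
    funext T
    by_cases hT : T ≤ t
    · rw [Nat.ble_eq_true_of_le hT, if_pos hT]; simp
    · have : Nat.ble T t = false := by
        rw [← Bool.not_eq_true, Nat.ble_eq]; exact hT
      rw [this, if_neg hT]; simp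
  have e3 : (hh t : ℝ) = if t % 3 = 2 then 1 else 0 := by
    unfold hh
    by_cases hT : t % 3 = 2
    · rw [if_pos hT, hT]; simp
    · have : Nat.beq (t % 3) 2 = false := by
        rw [← Bool.not_eq_true, Nat.beq_eq]; exact hT
      rw [this, if_neg hT]; simp
  rw [e, e2, e3, lsR_lin, lsR_lin, lsR_cast, lsR_cast, tab_sum] at hR
  linarith

theorem HH_lower (N : ℕ) :
    lsR (fun d => (d : ℝ) * Real.log (N / d).factorial) posTab
      - lsR (fun d => (d : ℝ) * Real.log (N / d).factorial) negTab ≤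
    100000 * ∑ n ∈ Icc 1 N, ArithmeticFunction.vonMangoldt n * (if N / n % 3 = 2 then (1 : ℝ) else 0)
      + lsR (fun T => 1.12 * N * (1 / (T : ℝ))) thrTab := by
  have e1 : ∀ l, lsR (fun d => (d : ℝ) * Real.log (N / d).factorial) l =
      ∑ n ∈ Icc 1 N, ArithmeticFunction.vonMangoldt n * lsR (fun d => (d : ℝ) * ((N / n / d : ℕ) : ℝ)) l := by
    intro l
    rw [← lsR_sum]
    congr 1
    funext d
    rw [← sum_vM_floor N (N / d) (Nat.div_le_self _ _), Finset.mul_sum]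
    apply Finset.sum_congr rfl
    intro n _
    rw [Nat.div_div_eq_div_mul, Nat.div_div_eq_div_mul, mul_comm d n]
    ring
  have e2 : ∑ n ∈ Icc 1 N, ArithmeticFunction.vonMangoldt n * lsR (fun T => if T ≤ N / n then (1 : ℝ) else 0) thrTab ≤
      lsR (fun T => 1.12 * N * (1 / (T : ℝ))) thrTab := by
    rw [← lsR_sum]
    apply lsR_mono
    intro p hp
    rw [sum_vM_ge N p.1 (thr_range p hp).1]
    refine (psi_le_all _).trans ?_
    have : ((N / p.1 : ℕ) : ℝ) ≤ (N : ℝ) / p.1 := Nat.cast_div_le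
    have h2 : 1.12 * (N : ℝ) * (1 / (p.1 : ℝ)) = 1.12 * (N / p.1) := by ring
    rw [h2]
    linarith
  refine le_trans ?_ (add_le_add_right e2 _)
  rw [e1, e1, ← Finset.sum_sub_distrib, Finset.mul_sum, ← Finset.sum_add_distrib]
  apply Finset.sum_le_sum
  intro n _
  rw [← mul_sub, ← mul_left_comm, ← mul_add]
  exact mul_le_mul_of_nonneg_left (pointwise _) ArithmeticFunction.vonMangoldt_nonneg

theorem HH_num (N : ℕ) (hN : 75001 ≤ N) :
    0.2079 * (N : ℝ) - 19.3 * Real.log N - 20 ≤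
    ∑ n ∈ Icc 1 N, ArithmeticFunction.vonMangoldt n * (if N / n % 3 = 2 then (1 : ℝ) else 0) := by
  have h := HH_lower N
  generalize ∑ n ∈ Icc 1 N, ArithmeticFunction.vonMangoldt n * (if N / n % 3 = 2 then (1 : ℝ) else 0) = H at *
  have hNR : (75001 : ℝ) ≤ N := by exact_mod_cast hN
  have p1 : lsR (fun d => ((N : ℝ) * Real.log N - N) * ((1 : ℕ) : ℝ)
      + 1 * ((-(N : ℝ)) * Real.log d + (-(1 / 2 * Real.log N)) * ((d : ℕ) : ℝ))) posTab ≤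
      lsR (fun d => (d : ℝ) * Real.log (N / d).factorial) posTab := by
    apply lsR_mono
    intro p hp
    have := (stirling_d N p.1 (pos_range p hp).1 ((pos_range p hp).2.trans (by omega))).1
    refine le_trans (le_of_eq ?_) this
    push_cast
    ring
  have n1 : lsR (fun d => (d : ℝ) * Real.log (N / d).factorial) negTab ≤
      lsR (fun d => ((N : ℝ) * Real.log N - N) * ((1 : ℕ) : ℝ)
      + 1 * ((-(N : ℝ)) * Real.log d + (1 / 2 * Real.log N + 1) * ((d : ℕ) : ℝ))) negTab := by
    apply lsR_mono
    intro p hp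
    have := (stirling_d N p.1 (neg_range p hp).1 ((neg_range p hp).2.trans (by omega))).2
    refine le_trans this (le_of_eq ?_)
    push_cast
    ring
  have t1 : lsR (fun T => 1.12 * (N : ℝ) * (1 / (T : ℝ))) thrTab = 1.12 * N * lsR (fun T => 1 / (T : ℝ)) thrTab := by
    have e1 := lsR_lin (1.12 * N) 0 (fun T => 1 / (T : ℝ)) (fun _ => 0) thrTab
    simpa only [zero_mul, add_zero] using e1
  have t2 : lsR (fun T => 1 / (T : ℝ)) thrTab ≤ 2341 := by
    unfold thrTab
    simp only [lsR]
    norm_num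
  rw [lsR_lin, lsR_lin, lsR_cast, lsR_cast, pos_total] at p1
  rw [lsR_lin, lsR_lin, lsR_cast, lsR_cast, neg_total, ← tab_sum] at n1
  rw [t1] at h
  have l2 := Real.log_two_gt_d9
  have t3 := mul_le_mul_of_nonneg_left t2 (by linarith : (0 : ℝ) ≤ 1.12 * N)
  have hXY := log_diff
  generalize lsR (fun d => Real.log d) posTab = X at *
  generalize lsR (fun d => Real.log d) negTab = Y at *
  have hXY2 := mul_le_mul_of_nonneg_left hXY (by linarith : (0 : ℝ) ≤ N)
  have hln : 0 ≤ Real.log N := Real.log_nonneg (by linarith)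
  push_cast at *
  linarith

theorem cond_of_mod (r n : ℕ) (h : (3 * r + 1) / n % 3 = 2) : 2 * n ≤ 3 * (r % n) + 1 := by
  rcases Nat.eq_zero_or_pos n with h0 | h0
  · subst h0; simp
  have h1 := Nat.div_add_mod r n
  have h2 := Nat.mod_lt r h0
  have h3 : (3 * r + 1) / n = 3 * (r / n) + (3 * (r % n) + 1) / n := by
    rw [show 3 * r + 1 = (3 * (r % n) + 1) + n * (3 * (r / n)) by linarith, Nat.add_mul_div_left _ _ h0]
    ring
  rw [h3] at h
  clear h3
  by_contra hc
  have h4 : (3 * (r % n) + 1) / n < 2 := by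
    rw [Nat.div_lt_iff_lt_mul h0]; omega
  generalize (3 * (r % n) + 1) / n = w at *
  generalize r / n = q at *
  clear h1 h2 hc
  omega

theorem log_GG_ge (r : ℕ) :
    ∑ n ∈ Icc 1 (3 * r + 1), ArithmeticFunction.vonMangoldt n * (if (3 * r + 1) / n % 3 = 2 then (1 : ℝ) else 0)
      ≤ Real.log (GG r) + Real.log ((3 * r + 1 : ℕ) : ℝ) := by
  set N := 3 * r + 1 with hN
  set S := (range (2 * r + 2)).filter (fun n => IsPrimePow n ∧ ¬ 3 ∣ n ∧ 2 * n ≤ 3 * (r % n) + 1) with hS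
  set S3 := (Icc 1 (Nat.log 3 N)).image (fun k => 3 ^ k) with hS3
  have hG : Real.log (GG r) = ∑ n ∈ S, ArithmeticFunction.vonMangoldt n := by
    unfold GG
    push_cast
    rw [Real.log_prod]
    · apply Finset.sum_congr rfl
      intro n hn
      rw [ArithmeticFunction.vonMangoldt_apply, if_pos (Finset.mem_filter.1 hn).2.1]
    · intro n _
      exact_mod_cast (Nat.minFac_pos n).ne'
  have h3 : ∑ n ∈ S3, ArithmeticFunction.vonMangoldt n ≤ Real.log ((N : ℕ) : ℝ) := by
    rw [hS3, Finset.sum_image (fun a _ b _ h => Nat.pow_right_injective (le_refl 2 |>.trans (by norm_num)) h)]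
    have : ∀ k ∈ Icc 1 (Nat.log 3 N), ArithmeticFunction.vonMangoldt (3 ^ k) = Real.log 3 := by
      intro k hk
      rw [ArithmeticFunction.vonMangoldt_apply_pow (by rw [mem_Icc] at hk; omega),
        ArithmeticFunction.vonMangoldt_apply_prime Nat.prime_three]
      norm_num
    rw [Finset.sum_congr rfl this, Finset.sum_const, Nat.card_Icc, Nat.add_sub_cancel, nsmul_eq_mul, ← Real.log_pow]
    apply Real.log_le_log (by positivity)
    exact_mod_cast Nat.pow_log_le_self 3 (by omega)
  refine le_trans ?_ (add_le_add hG.ge h3)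
  have hd : ∀ n, 0 ≤ ArithmeticFunction.vonMangoldt n := fun n => ArithmeticFunction.vonMangoldt_nonneg
  have hu := Finset.sum_union_inter (s₁ := S) (s₂ := S3) (f := fun n => ArithmeticFunction.vonMangoldt n)
  have hi : 0 ≤ ∑ n ∈ S ∩ S3, ArithmeticFunction.vonMangoldt n := Finset.sum_nonneg (fun n _ => hd n)
  have hm : ∑ n ∈ Icc 1 N, ArithmeticFunction.vonMangoldt n * (if N / n % 3 = 2 then (1 : ℝ) else 0) ≤
      ∑ n ∈ S ∪ S3, ArithmeticFunction.vonMangoldt n := by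
    have e1 : ∑ n ∈ Icc 1 N, ArithmeticFunction.vonMangoldt n * (if N / n % 3 = 2 then (1 : ℝ) else 0) =
        ∑ n ∈ (Icc 1 N).filter (fun n => N / n % 3 = 2 ∧ IsPrimePow n), ArithmeticFunction.vonMangoldt n := by
      rw [Finset.sum_filter]
      apply Finset.sum_congr rfl
      intro n _
      by_cases c1 : N / n % 3 = 2
      · by_cases c2 : IsPrimePow n
        · rw [if_pos c1, if_pos ⟨c1, c2⟩, mul_one]
        · rw [if_neg (fun h : N / n % 3 = 2 ∧ IsPrimePow n => c2 h.2), ArithmeticFunction.vonMangoldt_apply, if_neg c2, zero_mul]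
      · rw [if_neg c1, if_neg (fun h => c1 h.1), mul_zero]
    rw [e1]
    apply Finset.sum_le_sum_of_subset_of_nonneg
    · intro n hn
      rw [mem_filter, mem_Icc] at hn
      obtain ⟨⟨n1, n2⟩, n3, n4⟩ := hn
      rw [mem_union]
      by_cases c : 3 ∣ n
      · right
        rw [hS3, mem_image]
        obtain ⟨p, k, hp, hk, rfl⟩ := n4
        have hp3 : p = 3 := by
          have := (Nat.prime_three).dvd_of_dvd_pow c
          exact ((Nat.prime_dvd_prime_iff_eq Nat.prime_three hp.nat_prime).1 this).symm
        subst hp3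
        refine ⟨k, ?_, rfl⟩
        rw [mem_Icc]
        exact ⟨hk, Nat.le_log_of_pow_le (by norm_num) n2⟩
      · left
        rw [hS, mem_filter, mem_range]
        have h5 := cond_of_mod r n n3
        have h6 := Nat.mod_le r n
        exact ⟨by omega, n4, c, h5⟩
    · intro n _ _
      exact hd n
  linarith

theorem log_GG_large (r : ℕ) (hr : 25000 ≤ r) : 0.6096 * (r : ℝ) ≤ Real.log (GG r) := by
  have h1 := log_GG_ge r
  have h2 := HH_num (3 * r + 1) (by omega)
  have h3 := log_le_lin ((3 * r + 1 : ℕ) : ℝ) (by positivity) 16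
  have hR : (25000 : ℝ) ≤ r := by exact_mod_cast hr
  have := Real.log_two_lt_d9
  push_cast at *
  generalize Real.log (3 * (r : ℝ) + 1) = lg at *
  linarith

theorem estimates_all (r : ℕ) (hr : 1 ≤ r) :
    (27 ^ r * (r.factorial : ℝ) ^ 2 / (2 * r + 1).factorial ≤ GG r * (1.295 * Real.exp 1.3 ^ (r + 1))) ∧
    (((2 * r).choose r : ℝ) * (2 / √3) ≤ GG r * (3.802 * Real.exp 0.83 ^ r)) := by
  rcases Nat.lt_or_ge 129 r with h | h
  · rcases Nat.lt_or_ge 25000 r with h2 | h2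
    · exact HaHb_of_log r (log_GG_large r h2.le)
    · exact HaHb_of_log r (log_GG_mid r h h2)
  · exact HaHb_small r hr h

end

theorem stmt13 (m : ℤ) (hm : 1 ≤ m) (Λ : ℤ) (hΛ : 0 < Λ) (θ : ℝ)
    (hroot : θ ^ 3 - (m : ℝ) * θ ^ 2 - ((m : ℝ) + 3) * θ - 1 = 0)
    (hθl : -(1 / 2) < θ) (hθr : θ < 0)
    (x y : ℤ) (hgcd : Int.gcd x y = 1)
    (hF : |F m x y| ≤ Λ)
    (hx1 : -(y : ℝ) / 2 < (x : ℝ)) (hx2 : x ≤ y)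
    (hy : 8 * (Λ : ℝ) / (2 * (m : ℝ) + 3) ≤ (y : ℝ)) :
    -- (i)
    ((∃ i : ℕ, (GenContFract.of θ).convs i = (x : ℝ) / (y : ℝ)) ∧
      (y = 1 ∨
        (|(x : ℝ) / (y : ℝ) - θ| < (Λ : ℝ) / ((y : ℝ) ^ 3 * ((m : ℝ) + 1)) ∧ m + 2 ≤ y))) ∧
    -- (ii)
    (30 ≤ m →
      (y : ℝ) ^ ((2 : ℝ) -
          (Real.log (Real.sqrt ((m : ℝ) ^ 2 + 3 * (m : ℝ) + 9)) + 0.83) /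
            (Real.log ((m : ℝ) + 3 / 2) - 1.3)) <
        17.78 * (2.59 : ℝ) ^
            ((Real.log (Real.sqrt ((m : ℝ) ^ 2 + 3 * (m : ℝ) + 9)) + 0.83) /
              (Real.log ((m : ℝ) + 3 / 2) - 1.3)) * (Λ : ℝ)) := by
  have h1 := part_i m hm Λ hΛ θ hroot hθl hθr x y hgcd hF hx1 hx2 hy
  refine ⟨h1, fun h30 => ?_⟩
  have H := estimates_all
  exact part_ii m h30 Λ hΛ θ hroot hθl hθr x y h1.2 (fun r hr => (H r hr).1) (fun r hr => (H r hr).2)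
end

section
/- For every integer m, the cubic polynomial g_m(X) = X³ + 3X² − (m²+3m+6)X + 1 has discriminant (2m+3)²(m²+3m+9)², and its splitting field over ℚ equals L_m, the splitting field over ℚ of f_m(X) = X³ − mX² − (m+3)X − 1. -/
open Polynomial

/-- The simplest cubic polynomial `f_m(X) = X³ − mX² − (m+3)X − 1` over `ℚ`. -/
noncomputable def f (m : ℤ) : ℚ[X] :=
  X ^ 3 - C (m : ℚ) * X ^ 2 - C ((m : ℚ) + 3) * X - 1

/-- The simplest cubic field `L_m`: the splitting field of `f_m` over `ℚ` inside a fixed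
algebraic closure of `ℚ`. -/
noncomputable def L (m : ℤ) : IntermediateField ℚ (AlgebraicClosure ℚ) :=
  IntermediateField.adjoin ℚ ((f m).rootSet (AlgebraicClosure ℚ))

/-- The cubic polynomial `g_m(X) = X³ + 3X² − (m²+3m+6)X + 1` over `ℚ`. -/
noncomputable def g (m : ℤ) : ℚ[X] :=
  X ^ 3 + C 3 * X ^ 2 - C ((m : ℚ) ^ 2 + 3 * (m : ℚ) + 6) * X + 1

theorem f_root_iff (m : ℤ) (t : AlgebraicClosure ℚ) :
    t ∈ (f m).rootSet (AlgebraicClosure ℚ) ↔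
      t ^ 3 - (m : AlgebraicClosure ℚ) * t ^ 2 - ((m : AlgebraicClosure ℚ) + 3) * t - 1 = 0 := by
  have hne : f m ≠ 0 := by
    intro h
    have := congrArg (fun p => Polynomial.coeff p 0) h
    simp [f] at this
  rw [mem_rootSet_of_ne hne]
  simp [f]

theorem g_root_iff (m : ℤ) (t : AlgebraicClosure ℚ) :
    t ∈ (g m).rootSet (AlgebraicClosure ℚ) ↔
      t ^ 3 + 3 * t ^ 2 - ((m : AlgebraicClosure ℚ) ^ 2 + 3 * (m : AlgebraicClosure ℚ) + 6) * t
        + 1 = 0 := by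
  have hne : g m ≠ 0 := by
    intro h
    have := congrArg (fun p => Polynomial.coeff p 0) h
    simp [g] at this
  rw [mem_rootSet_of_ne hne]
  simp [g]

theorem stmt18 (m : ℤ) :
    (∃ r₁ r₂ r₃ : ℂ, (g m).map (algebraMap ℚ ℂ) = (X - C r₁) * (X - C r₂) * (X - C r₃) ∧
      ((r₁ - r₂) * (r₁ - r₃) * (r₂ - r₃)) ^ 2 =
        (2 * (m : ℂ) + 3) ^ 2 * ((m : ℂ) ^ 2 + 3 * (m : ℂ) + 9) ^ 2) ∧
    IntermediateField.adjoin ℚ ((g m).rootSet (AlgebraicClosure ℚ)) = L m := by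
  constructor
  · let P : Cubic ℚ := ⟨1, 3, -((m : ℚ) ^ 2 + 3 * (m : ℚ) + 6), 1⟩
    have hP : g m = P.toPoly := by
      simp only [g, P, Cubic.toPoly, map_neg, map_one]
      ring
    have ha : P.a ≠ 0 := one_ne_zero
    obtain ⟨x, y, z, h3⟩ := (Cubic.splits_iff_roots_eq_three (φ := algebraMap ℚ ℂ) ha).1
      (IsAlgClosed.splits _)
    refine ⟨x, y, z, ?_, ?_⟩
    · have := Cubic.eq_prod_three_roots ha h3
      rw [hP, ← Cubic.map_toPoly, this]
      simp [P]
    · have := Cubic.discr_eq_prod_three_roots ha h3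
      simp [P, Cubic.discr] at this
      rw [← this]
      ring
  · have hd : (2 * (m : AlgebraicClosure ℚ) + 3) ≠ 0 := by
      have : (2 * m + 3 : ℤ) ≠ 0 := by omega
      exact_mod_cast this
    apply le_antisymm
    · rw [IntermediateField.adjoin_le_iff]
      intro r hr
      rw [g_root_iff] at hr
      have hr0 : r ≠ 0 := by
        rintro rfl
        simp at hr
      obtain ⟨s, hs⟩ : ∃ s, s = r⁻¹ := ⟨_, rfl⟩
      have hrs : r = s⁻¹ := by rw [hs, inv_inv]
      have hs1 : s * r = 1 := by rw [hs]; exact inv_mul_cancel₀ hr0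
      have hs3 : s ^ 3 - ((m : AlgebraicClosure ℚ) ^ 2 + 3 * (m : AlgebraicClosure ℚ) + 6) * s ^ 2
          + 3 * s + 1 = 0 := by
        subst hrs
        have hs0 : s ≠ 0 := by rintro rfl; simp at hs1
        field_simp at hr
        linear_combination hr
      obtain ⟨t, ht⟩ : ∃ t, (2 * (m : AlgebraicClosure ℚ) + 3) * t =
          s ^ 2 - ((m : AlgebraicClosure ℚ) ^ 2 + 3 * m + 4) * s - (m + 2) :=
        ⟨_, mul_div_cancel₀ _ hd⟩
      have hst : s = t ^ 2 + t := by
        have h0 : (2 * (m : AlgebraicClosure ℚ) + 3) ^ 2 * (s - (t ^ 2 + t)) = 0 := by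
          linear_combination ((m : AlgebraicClosure ℚ) ^ 2 + 3 * m + 2 - s) * hs3
            - ((2 * m + 3) * t + (s ^ 2 - ((m : AlgebraicClosure ℚ) ^ 2 + 3 * m + 4) * s - (m + 2))
              + (2 * m + 3)) * ht
        exact sub_eq_zero.1 ((mul_eq_zero.1 h0).resolve_left (pow_ne_zero 2 hd))
      have hf : t ∈ (f m).rootSet (AlgebraicClosure ℚ) := by
        rw [f_root_iff]
        subst hst
        refine (mul_eq_zero.1 ?_).resolve_left hd
        linear_combination hs3 + (t ^ 2 + t - 2) * ht
      have htL : t ∈ L m := IntermediateField.subset_adjoin _ _ hf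
      rw [hrs, hst]
      exact inv_mem (add_mem (pow_mem htL 2) htL)
    · rw [L, IntermediateField.adjoin_le_iff]
      intro t ht
      rw [f_root_iff] at ht
      have ht0 : t ≠ 0 := by
        rintro rfl
        simp at ht
      have ht1 : t + 1 ≠ 0 := by
        intro h
        have : t = -1 := by linear_combination h
        subst this
        ring_nf at ht
        simp at ht
      have hg : (t ^ 2 + t)⁻¹ ∈ (g m).rootSet (AlgebraicClosure ℚ) := by
        rw [g_root_iff]
        have hs0 : t ^ 2 + t ≠ 0 := by
          have := mul_ne_zero ht0 ht1
          intro h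
          apply this
          linear_combination h
        obtain ⟨s, hs⟩ : ∃ s, s = t ^ 2 + t := ⟨_, rfl⟩
        have hs3 : s ^ 3 - ((m : AlgebraicClosure ℚ) ^ 2 + 3 * (m : AlgebraicClosure ℚ) + 6) * s ^ 2
          + 3 * s + 1 = 0 := by
          subst hs
          linear_combination (t ^ 3 + (m + 3) * t ^ 2 + m * t - 1) * ht
        rw [← hs] at hs0 ⊢
        field_simp
        linear_combination hs3
      have hK := IntermediateField.subset_adjoin ℚ ((g m).rootSet (AlgebraicClosure ℚ)) hg
      have hs := inv_mem hK
      rw [inv_inv] at hs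
      have hm : (m : AlgebraicClosure ℚ) ∈
        IntermediateField.adjoin ℚ ((g m).rootSet (AlgebraicClosure ℚ)) := intCast_mem _ m
      have h2 : (2 : AlgebraicClosure ℚ) ∈
        IntermediateField.adjoin ℚ ((g m).rootSet (AlgebraicClosure ℚ)) := ofNat_mem _ 2
      have h3 : (3 : AlgebraicClosure ℚ) ∈
        IntermediateField.adjoin ℚ ((g m).rootSet (AlgebraicClosure ℚ)) := ofNat_mem _ 3
      have h4 : (4 : AlgebraicClosure ℚ) ∈
        IntermediateField.adjoin ℚ ((g m).rootSet (AlgebraicClosure ℚ)) := ofNat_mem _ 4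
      have key : t = ((t ^ 2 + t) ^ 2 - ((m : AlgebraicClosure ℚ) ^ 2 + 3 * m + 4) * (t ^ 2 + t)
          - (m + 2)) / (2 * m + 3) := by
        rw [eq_div_iff hd]
        linear_combination (-(t + m + 2)) * ht
      rw [key]
      exact div_mem (sub_mem (sub_mem (pow_mem hs 2)
        (mul_mem (add_mem (add_mem (pow_mem hm 2) (mul_mem h3 hm)) h4) hs)) (add_mem hm h2))
        (add_mem (mul_mem h2 hm) h3)
end
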